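/- arXiv:2512.04633 — 3 statements merged into one kernel-verified Lean document; each statement's English description precedes it below -/
import Mathlib

section
/- Let K ⊆ ℝ² be a Minkowski centered convex body with s(K) > φ. Then τ(K) ≤ c(s(K)). -/
open scoped Pointwise RealInnerProductSpace
open Set

noncomputable section

abbrev E2 := EuclideanSpace ℝ (Fin 2)

/-- A convex body: compact convex set with nonempty interior. -/
def IsConvexBody (K : Set E2) : Prop :=
  Convex ℝ K ∧ IsCompact K ∧ (interior K).Nonempty

/-- circumradius `R(K,C)` -/
def circum (K C : Set E2) : ℝ :=
  sInf {ρ : ℝ | 0 < ρ ∧ ∃ t : E2, K ⊆ ρ • C + {t}}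

/-- inradius `r(K,C)` -/
def inrad (K C : Set E2) : ℝ :=
  sSup {ρ : ℝ | 0 < ρ ∧ ∃ t : E2, ρ • C + {t} ⊆ K}

/-- width `w(K,C)` -/
def widthB (K C : Set E2) : ℝ := 2 * inrad (K - K) (C - C)

/-- diameter `D(K,C)` -/
def diamB (K C : Set E2) : ℝ := 2 * circum (K - K) (C - C)

/-- Minkowski asymmetry `s(K)` -/
def minkAsym (K : Set E2) : ℝ :=
  sInf {ρ : ℝ | 0 < ρ ∧ ∃ c : E2, K - {c} ⊆ ρ • ({c} - K)}

/-- `K` is Minkowski centered -/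
def MinkCentered (K : Set E2) : Prop := K ⊆ minkAsym K • (-K)

/-- `τ(K)`: smallest `ρ > 0` with `K ∩ (-K) ⊆ ρ • ((K-K)/2)` -/
def tauB (K : Set E2) : ℝ :=
  sInf {ρ : ℝ | 0 < ρ ∧ K ∩ (-K) ⊆ ρ • ((2:ℝ)⁻¹ • (K - K))}

/-- golden ratio -/
def phiR : ℝ := (1 + Real.sqrt 5) / 2

def cExpr2 (s : ℝ) : ℝ :=
  (s^2+1)^2 / ((s^2-1) * (s^2+2*s-1+2*Real.sqrt (s*(s^2-1))))

def cExpr3 (s : ℝ) : ℝ := 2*(s^2-2*s-1) / ((s-3)*(s+1))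

/-- `ŝ`: the unique `s ∈ (φ,2)` where the two expressions agree. -/
def sHat : ℝ := sInf {s : ℝ | phiR < s ∧ s < 2 ∧ cExpr2 s = cExpr3 s}

def cFun (s : ℝ) : ℝ :=
  if s ≤ phiR then 1 else if s ≤ sHat then cExpr2 s else cExpr3 s

/-- polar body -/
def polarBody (K : Set E2) : Set E2 := {y | ∀ x ∈ K, (inner ℝ x y : ℝ) ≤ 1}

/-- `γ(K)` -/
def gammaB (K : Set E2) : ℝ :=
  sInf {ρ : ℝ | 0 < ρ ∧
    polarBody ((2:ℝ)⁻¹ • (polarBody K - polarBody K)) ⊆ ρ • convexHull ℝ (K ∪ -K)}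

/-- positive hull of two points -/
def posHull2 (a b : E2) : Set E2 := {x | ∃ α β : ℝ, 0 ≤ α ∧ 0 ≤ β ∧ x = α • a + β • b}

/-- asymmetry point of `K`: a point of `bd(K) ∩ bd(−(1/s(K))·K)` -/
def IsAsymPoint (K : Set E2) (p : E2) : Prop :=
  p ∈ frontier K ∧ p ∈ frontier ((-(minkAsym K)⁻¹) • K)

/-- a well-spread triple of asymmetry points -/
def WellSpread (K : Set E2) (p1 p2 p3 : E2) : Prop :=
  IsAsymPoint K p1 ∧ IsAsymPoint K p2 ∧ IsAsymPoint K p3 ∧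
  ∃ a1 a2 a3 : E2, a1 ≠ 0 ∧ a2 ≠ 0 ∧ a3 ≠ 0 ∧
    (∀ x ∈ K, (inner ℝ a1 x : ℝ) ≤ inner ℝ a1 p1) ∧
    (∀ x ∈ K, (inner ℝ a2 x : ℝ) ≤ inner ℝ a2 p2) ∧
    (∀ x ∈ K, (inner ℝ a3 x : ℝ) ≤ inner ℝ a3 p3) ∧
    (0:E2) ∈ interior (convexHull ℝ {p1, p2, p3}) ∧
    (0:E2) ∈ convexHull ℝ {a1, a2, a3}

/-- two points of `bd(K) ∩ bd(-K)` are consecutive -/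
def Consecutive (K : Set E2) (z1 z2 : E2) : Prop :=
  ¬ ∃ z, z ∈ frontier K ∩ frontier (-K) ∧ z ∈ interior (posHull2 z1 z2)

/-- point of the plane from coordinates -/
def pt (x y : ℝ) : E2 := (WithLp.equiv 2 (Fin 2 → ℝ)).symm ![x, y]

/-- the golden house -/
def goldenHouse : Set E2 :=
  convexHull ℝ {pt 1 0, pt (-1) 0, pt 1 (-1), pt (-1) (-1), pt 0 phiR}



lemma xphi (s : ℝ) (hs : phiR < s) : 1 < s ∧ s + 1 < s^2 := by
  unfold phiR at hs
  have h5 : Real.sqrt 5 ^ 2 = 5 := Real.sq_sqrt (by norm_num)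
  have h0 : 0 ≤ Real.sqrt 5 := Real.sqrt_nonneg 5
  have h1 : 1 < Real.sqrt 5 := by nlinarith
  constructor
  · linarith
  · nlinarith

lemma c2_form (s : ℝ) (h1 : 1 < s) :
    cExpr2 s * (s^2-1) = s^2+2*s-1-2*Real.sqrt (s*(s^2-1)) := by
  unfold cExpr2
  have hp : 0 < s^2-1 := by nlinarith
  have hw : Real.sqrt (s*(s^2-1)) ^ 2 = s*(s^2-1) := Real.sq_sqrt (by positivity)
  have h0 : 0 ≤ Real.sqrt (s*(s^2-1)) := Real.sqrt_nonneg _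
  set w := Real.sqrt (s*(s^2-1)) with hwd
  have : 0 < s^2+2*s-1+2*w := by nlinarith
  rw [div_mul_eq_mul_div, div_eq_iff (by positivity)]
  linear_combination (4 * (s^2-1)) * hw

lemma c3_form (s : ℝ) (h1 : 1 < s) (h2 : s < 3) :
    cExpr3 s * ((3-s)*(s+1)) = 2*(1+2*s-s^2) := by
  unfold cExpr3
  have h3 : s - 3 ≠ 0 := by linarith
  have h4 : s + 1 ≠ 0 := by linarith
  field_simp
  ring

lemma c_eq_cubic (s : ℝ) (h1 : 1 < s) (h2 : s < 3) (h : cExpr2 s = cExpr3 s) :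
    s^2 - 1 = s * (3-s)^2 := by
  have e2 := c2_form s h1
  have e3 := c3_form s h1 h2
  have hp : 0 < s^2-1 := by nlinarith
  have hw : Real.sqrt (s*(s^2-1)) ^ 2 = s*(s^2-1) := Real.sq_sqrt (by positivity)
  set w := Real.sqrt (s*(s^2-1)) with hwd
  rw [h] at e2
  have h5 : (s-1) * (2*(1+2*s-s^2)) = (3-s) * (s^2+2*s-1-2*w) := by
    rw [← e2, ← e3]; ring
  have h6 : (s^2-1) + s*(3-s)^2 = 2*w*(3-s) := by linear_combination -h5
  have h7 : ((s^2-1) - s*(3-s)^2)^2 = 0 := by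
    have : ((s^2-1) + s*(3-s)^2)^2 = 4 * (s*(s^2-1))*(3-s)^2 := by
      rw [h6, ← hw]; ring
    linear_combination this
  have := pow_eq_zero_iff (two_ne_zero) |>.1 h7
  linarith

lemma cubic_c_eq (s : ℝ) (h1 : 1 < s) (h2 : s < 3) (h : s^2 - 1 = s * (3-s)^2) :
    cExpr2 s = cExpr3 s := by
  have e2 := c2_form s h1
  have e3 := c3_form s h1 h2
  have hw : Real.sqrt (s*(s^2-1)) = s*(3-s) := by
    rw [h, show s * (s * (3-s)^2) = (s*(3-s))^2 by ring]
    exact Real.sqrt_sq (mul_nonneg (by linarith) (by linarith))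
  rw [hw] at e2
  have hp : 0 < s^2-1 := by nlinarith
  have h3 : (s^2-1)*(3-s) ≠ 0 := (mul_pos hp (by linarith)).ne'
  have : (cExpr2 s - cExpr3 s) * ((s^2-1)*(3-s)) = 0 := by
    linear_combination (3-s)*e2 - (s-1)*e3 + h
  rcases mul_eq_zero.1 this with h | h
  · linarith
  · exact absurd h h3

lemma sHat_set_nonempty : {s : ℝ | phiR < s ∧ s < 2 ∧ cExpr2 s = cExpr3 s}.Nonempty := by
  have h5 : Real.sqrt 5 ^ 2 = 5 := Real.sq_sqrt (by norm_num)
  have h0 : 0 ≤ Real.sqrt 5 := Real.sqrt_nonneg 5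
  have h1 : 2 < Real.sqrt 5 := by nlinarith
  have h3 : Real.sqrt 5 < 3 := by nlinarith
  have hle : phiR ≤ 2 := by unfold phiR; linarith
  have hphi : phiR^2 = phiR + 1 := by unfold phiR; nlinarith
  have hp2 : 3/2 < phiR := by unfold phiR; linarith
  have hcont : ContinuousOn (fun s : ℝ => s^3-7*s^2+9*s+1) (Icc phiR 2) := by fun_prop
  have hm := intermediate_value_Ioo' hle hcont
  have h0m : (0:ℝ) ∈ Ioo ((fun s : ℝ => s^3-7*s^2+9*s+1) 2) ((fun s : ℝ => s^3-7*s^2+9*s+1) phiR) := by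
    constructor
    · norm_num
    · have : phiR^3 = 2*phiR+1 := by
        calc phiR^3 = phiR * phiR^2 := by ring
          _ = phiR * (phiR+1) := by rw [hphi]
          _ = phiR^2 + phiR := by ring
          _ = _ := by rw [hphi]; ring
      simp only
      rw [this, hphi]; linarith
  obtain ⟨t, ⟨ht1, ht2⟩, ht⟩ := hm h0m
  refine ⟨t, ht1, ht2, cubic_c_eq t (by linarith) (by linarith) ?_⟩
  simp only at ht
  linear_combination -ht

/-- the key properties of `cFun` -/
lemma cFun_prop (s : ℝ) (hs : phiR < s) (hs2 : s ≤ 2) (e : ℝ) (_he : 0 ≤ e) (he2 : e ≤ 2 - s) :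
    (s-e)*(1+e*s) ≤ cFun s * ((s^2-1)*(1+e)) := by
  obtain ⟨h1, h2⟩ := xphi s hs
  unfold cFun
  rw [if_neg (not_le.2 hs)]
  have hp : 0 < s^2-1 := by nlinarith
  split_ifs with h
  · have e2 := c2_form s h1
    have hw : Real.sqrt (s*(s^2-1)) ^ 2 = s*(s^2-1) := Real.sq_sqrt (by positivity)
    set w := Real.sqrt (s*(s^2-1)) with hwd
    rw [show cExpr2 s * ((s^2-1)*(1+e)) = (cExpr2 s * (s^2-1))*(1+e) by ring, e2]
    have : 0 ≤ (w - s*(1+e))^2 := sq_nonneg _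
    have h4 : s * ((s-e)*(1+e*s)) ≤ s * ((s^2+2*s-1-2*w)*(1+e)) := by nlinarith
    exact le_of_mul_le_mul_left h4 (by linarith)
  · obtain ⟨t, ⟨ht1, ht2, ht⟩, hts⟩ := exists_lt_of_csInf_lt sHat_set_nonempty (not_le.1 h)
    obtain ⟨h3, h4⟩ := xphi t ht1
    have h5 := c_eq_cubic t h3 (by linarith) ht
    have h6 : s * (3-s)^2 ≤ s^2 - 1 := by
      have : (s^3-7*s^2+9*s+1) - (t^3-7*t^2+9*t+1) ≤ 0 := by
        have : (s^3-7*s^2+9*s+1) - (t^3-7*t^2+9*t+1) = (s-t)*(s^2+s*t+t^2-7*(s+t)+9) := by ring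
        rw [this]
        have h32 : 3/2 < t := by nlinarith
        apply mul_nonpos_of_nonneg_of_nonpos (by linarith)
        nlinarith
      nlinarith
    have e3 := c3_form s h1 (by linarith)
    have h7 : 0 < (3-s) := by linarith
    have h8 : (3-s) * ((s-e)*(1+e*s)) ≤ (3-s) * (cExpr3 s * ((s^2-1)*(1+e))) := by
      rw [show (3-s) * (cExpr3 s * ((s^2-1)*(1+e))) = (cExpr3 s * ((3-s)*(s+1)))*((s-1)*(1+e)) by ring, e3]
      have h9 : s*(3-s)*(1+e) ≤ s*(3-s)*(3-s) := by
        apply mul_le_mul_of_nonneg_left (by linarith) (mul_nonneg (by linarith) h7.le)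
      have h10 : 0 ≤ (2-s-e)*((s^2-1) - s*(3-s)*(1+e)) :=
        mul_nonneg (by linarith) (by nlinarith)
      nlinarith
    exact le_of_mul_le_mul_left h8 h7

/-- `c * (1+s) ≥ 2` and `c > 0` -/
lemma cFun_pos (s : ℝ) (hs : phiR < s) (hs2 : s ≤ 2) : 2 ≤ cFun s * (1+s) := by
  obtain ⟨h1, h2⟩ := xphi s hs
  have h := cFun_prop s hs hs2 (2-s) (by linarith) le_rfl
  have h3 : 0 < (s-1)*(3-s) := mul_pos (by linarith) (by linarith)
  have h4 : ((s-1)*(3-s)) * 2 ≤ ((s-1)*(3-s)) * (cFun s * (1+s)) := by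
    nlinarith [mul_nonneg (by linarith : (0:ℝ) ≤ s-1) (mul_nonneg (by linarith : (0:ℝ) ≤ s-1) (by linarith : (0:ℝ) ≤ 2-s))]
  exact le_of_mul_le_mul_left h4 h3

/-- final bound -/
lemma final_bound (s x1 x2 y q : ℝ) (hs : phiR < s) (hs2 : s ≤ 2)
    (hx1 : 0 ≤ x1) (hx2 : 0 < x2) (hx2' : x2 ≤ 1) (hy : 0 < y) (hy' : y ≤ 1)
    (h1 : x1 * s ≤ y) (h2 : (s-1)*x2 ≤ y - x1) (hq : q * (s*y-x1) ≤ x2 + y) :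
    2 / cFun s ≤ 1 + (s - (y-x1*s)*(q*(1+x1) - s + x2)/(x1*s+x2))/y := by
  obtain ⟨g1, g2⟩ := xphi s hs
  have hc0 := cFun_pos s hs hs2
  have hc : 0 < cFun s := by
    by_contra h
    have : cFun s * (1+s) ≤ 0 := mul_nonpos_of_nonpos_of_nonneg (not_lt.1 h) (by linarith)
    linarith
  set c := cFun s with hcd
  have hx1y : x1 < y := by nlinarith
  have hd : 0 < s*y - x1 := by nlinarith
  have hd1 : 0 < s - x1 := by nlinarith
  have hg : 0 < x1*s+x2 := by positivity
  -- the quantity m and its bound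
  set m := (y-x1*s)/(s*y-x1) with hm
  set m1 := (1-x1*s)/(s-x1) with hm1
  have hmm : m ≤ m1 := by
    rw [hm, hm1, div_le_div_iff₀ hd hd1]
    nlinarith [mul_nonneg hx1 (mul_nonneg (by linarith : (0:ℝ) ≤ 1-y) (by nlinarith : (0:ℝ) ≤ s^2-1))]
  have hms : m1 ≤ s := by
    rw [hm1, div_le_iff₀ hd1]; nlinarith
  have hmd : (y-x1*s) = m * (s*y-x1) := by rw [hm, div_mul_cancel₀ _ hd.ne']
  have hm1d : (1-x1*s) = m1 * (s-x1) := by rw [hm1, div_mul_cancel₀ _ hd1.ne']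
  have hm0 : 0 ≤ m := div_nonneg (by linarith) hd.le
  have hm10 : 0 ≤ m1 := hm0.trans hmm
  -- reduce to y = 1
  have key : ((s-x2) + x2*s*(1+x1) - (1+x1)*(1+x2)*m1)/(x1*s+x2)
      ≤ (s - (y-x1*s)*(q*(1+x1) - s + x2)/(x1*s+x2))/y := by
    rw [le_div_iff₀ hy, div_mul_eq_mul_div, ← sub_nonneg]
    have e1 : s - (y-x1*s)*(q*(1+x1) - s + x2)/(x1*s+x2) -
      ((s-x2) + x2*s*(1+x1) - (1+x1)*(1+x2)*m1)*y/(x1*s+x2) =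
      (s*(x1*s+x2) - (y-x1*s)*(q*(1+x1) - s + x2) - ((s-x2) + x2*s*(1+x1) - (1+x1)*(1+x2)*m1)*y)/(x1*s+x2) := by
      field_simp
    rw [e1]
    apply div_nonneg _ hg.le
    have e2 : (y-x1*s)*q ≤ m*(x2+y) := by
      calc (y-x1*s)*q = m*(q*(s*y-x1)) := by rw [hmd]; ring
        _ ≤ m*(x2+y) := mul_le_mul_of_nonneg_left hq hm0
    have e3 : (y-x1*s)*q*(1+x1) ≤ m*(x2+y)*(1+x1) := mul_le_mul_of_nonneg_right e2 (by linarith)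
    have e4 : 0 ≤ (1+x1)*x2*((1-y)*(s-m1)) := by
      apply mul_nonneg (by positivity) (mul_nonneg (by linarith) (by linarith))
    have e5 : 0 ≤ (1+x1)*(x2+y)*(m1-m) := by
      apply mul_nonneg (by positivity) (by linarith)
    nlinarith
  refine le_trans ?_ (add_le_add_right key 1)
  rw [div_le_iff₀ hc]
  have mono : ∀ X : ℝ, x2 ≤ X → 
      ((s-X) + X*s*(1+x1) - (1+x1)*(1+X)*m1)/(x1*s+X) ≤
       ((s-x2) + x2*s*(1+x1) - (1+x1)*(1+x2)*m1)/(x1*s+x2) := by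
    intro X hX
    have hgX : 0 < x1*s+X := by linarith
    rw [div_le_div_iff₀ hgX hg, ← sub_nonneg]
    have : ((s-x2) + x2*s*(1+x1) - (1+x1)*(1+x2)*m1)*(x1*s+X)
        - ((s-X) + X*s*(1+x1) - (1+x1)*(1+X)*m1)*(x1*s+x2)
        = (X-x2)*((1+x1)*((1-x1*s)*(s-m1))) := by ring
    rw [this]
    exact mul_nonneg (by linarith) (mul_nonneg (by linarith) (mul_nonneg (by linarith) (by linarith)))
  rcases le_total x1 (2-s) with hA | hA
  · -- x2 = 1
    have hF := cFun_prop s hs hs2 x1 hx1 hA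
    rw [← hcd] at hF
    have hg1 : 0 < x1*s+1 := by positivity
    refine le_trans ?_ (mul_le_mul_of_nonneg_right (add_le_add_right (mono 1 hx2') 1) hc.le)
    have k2 : 1 + ((s-1) + 1*s*(1+x1) - (1+x1)*(1+1)*m1)/(x1*s+1) = 2*(s^2-1)*(1+x1)/((s-x1)*(1+x1*s)) := by
      rw [hm1]; field_simp; ring
    rw [k2, div_mul_eq_mul_div, le_div_iff₀ (by positivity)]
    nlinarith
  · have hF := cFun_prop s hs hs2 (2-s) (by linarith) le_rfl
    rw [← hcd] at hF
    have hF' : 2*(1+2*s-s^2) ≤ c*((s+1)*(3-s)) := by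
      have : (s-1) * (2*(1+2*s-s^2)) ≤ (s-1) * (c*((s+1)*(3-s))) := by nlinarith
      exact le_of_mul_le_mul_left this (by linarith)
    have hs1 : 0 < s - 1 := by linarith
    have hX : x2 ≤ (1-x1)/(s-1) := by rw [le_div_iff₀ hs1]; linarith
    refine le_trans ?_ (mul_le_mul_of_nonneg_right (add_le_add_right (mono _ hX) 1) hc.le)
    have hk : 0 < 1 + x1*(s^2-s-1) := by
      have : 0 ≤ x1*(s^2-s-1) := mul_nonneg hx1 (by linarith)
      linarith
    have hk' : x1*s+(1-x1)/(s-1) = (1 + x1*(s^2-s-1))/(s-1) := by field_simp; ring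
    have k2 : 1 + ((s-(1-x1)/(s-1)) + (1-x1)/(s-1)*s*(1+x1) - (1+x1)*(1+(1-x1)/(s-1))*m1)/(x1*s+(1-x1)/(s-1))
        = (1+s)*(s-1)*(1+x1)/(1 + x1*(s^2-s-1)) := by
      have : (s-(1-x1)/(s-1)) + (1-x1)/(s-1)*s*(1+x1) - (1+x1)*(1+(1-x1)/(s-1))*m1
        = ((s*(s-1)-(1-x1)) + (1-x1)*s*(1+x1) - (1+x1)*(1-x1*s))/(s-1) := by
        rw [hm1]; field_simp; ring
      rw [hk', this, div_div_div_cancel_right₀ hs1.ne']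
      rw [eq_div_iff hk.ne', add_mul, div_mul_cancel₀ _ hk.ne']
      ring
    rw [k2, div_mul_eq_mul_div, le_div_iff₀ hk]
    have h3 : 0 < 3 - s := by linarith
    have k3 : (3-s)*(2*(1 + x1*(s^2-s-1))) ≤ (3-s)*((1+s)*(s-1)*(1+x1)*c) := by
      have e1 : (2*(1+2*s-s^2))*((s-1)*(1+x1)) ≤ (c*((s+1)*(3-s)))*((s-1)*(1+x1)) :=
        mul_le_mul_of_nonneg_right hF' (mul_nonneg hs1.le (by linarith))
      have e2 : 0 ≤ (x1-(2-s))*((2-s)*(1+s)) :=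
        mul_nonneg (by linarith) (mul_nonneg (by linarith) (by linarith))
      nlinarith
    exact le_of_mul_le_mul_left k3 h3

/-- the chord lengths -/
lemma chord_real (s l1 l2 l3 x1 x2 y u21 u23 u31 u32 : ℝ) (hs : phiR < s) (hs2 : s ≤ 2)
    (hl1 : 0 < l1) (hl2 : 0 < l2) (hl3 : 0 < l3)
    (k1 : s*l1 ≤ l2+l3) (k2 : s*l2 ≤ l1+l3) (k3 : s*l3 ≤ l1+l2)
    (hx1 : 0 ≤ x1) (hx2 : 0 ≤ x2) (hx2' : x2 ≤ 1) (hy : 0 < y) (hy' : y ≤ 1)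
    (hx : l1*x1+l2*x2 = l3*y)
    (v21 : -1 ≤ u21) (v23 : -1 ≤ u23) (v31 : -1 ≤ u31) (_v32 : -1 ≤ u32)
    (p2 : l1*u21+l2*s+l3*u23 = 0) (p3 : l1*u31+l2*u32+l3*s = 0)
    (hB : 0 ≤ y*u32+s*x2) :
    0 < x2 ∧ 0 < y*s+x2*u23 ∧
    (y*u32+s*x2 ≤ y*s+x2*u23 → 2/cFun s ≤ 1 + (s - (y*u32+s*x2)*(u23+y)/(y*s+x2*u23))/y) ∧
    (y*s+x2*u23 ≤ y*u32+s*x2 → 2/cFun s ≤ 1 + (s - (y*s+x2*u23)*(u32+x2)/(y*u32+s*x2))/x2) := by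
  obtain ⟨g1, g2⟩ := xphi s hs
  have hc0 := cFun_pos s hs hs2
  have hc : 0 < cFun s := by
    by_contra h
    have : cFun s * (1+s) ≤ 0 := mul_nonpos_of_nonpos_of_nonneg (not_lt.1 h) (by linarith)
    linarith
  have hcs : 2/cFun s ≤ 1+s := by rw [div_le_iff₀ hc]; linarith
  set A := y*s+x2*u23 with hAd
  set B := y*u32+s*x2 with hBd
  have hA' : l3*A = l1*(x1*s-x2*u21) := by
    rw [hAd]; linear_combination (-s)*hx + x2*p2
  have hB' : l2*B = l1*(-y*u31-s*x1) := by
    rw [hBd]; linear_combination s*hx + y*p3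
  have h1 : x1*s ≤ y := by
    have : 0 ≤ l1*(-y*u31-s*x1) := by rw [← hB']; positivity
    have := nonneg_of_mul_nonneg_right this hl1
    have := mul_le_mul_of_nonneg_left v31 hy.le
    linarith
  -- λ bounds
  have mm : ∀ a b d : ℝ, s*a ≤ b+d → s*d ≤ a+b → (s-1)*a ≤ b := by
    intro a b d e1 e2
    have : (s+1)*((s-1)*a) ≤ (s+1)*b := by
      linarith [mul_le_mul_of_nonneg_left e1 (by linarith : (0:ℝ) ≤ s)]
    exact le_of_mul_le_mul_left this (by linarith)
  have m23 : (s-1)*l3 ≤ l2 := mm l3 l2 l1 (by linarith) (by linarith)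
  have m31 : (s-1)*l1 ≤ l3 := mm l1 l3 l2 (by linarith) (by linarith)
  have hss : 0 < s*(s-1) - 1 := by linarith [sq s]
  have hx2p : 0 < x2 := by
    rcases hx2.lt_or_eq with h | h
    · exact h
    · exfalso
      rw [← h] at hx
      have e1 : s*l3*y ≤ l1*y := by
        have := mul_le_mul_of_nonneg_left h1 hl1.le
        have e9 : s*(l1*x1+l2*0) = s*(l3*y) := by rw [hx]
        linarith
      have e2 : s*l3 ≤ l1 := le_of_mul_le_mul_right e1 hy
      have e4 := mul_le_mul_of_nonneg_left m31 (by linarith : (0:ℝ) ≤ s)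
      have e3 := mul_pos hl1 hss
      linarith
  have hyx2 : (s-1)*x2 ≤ y := by
    have : l3*((s-1)*x2) ≤ l3*y := by linarith [mul_le_mul_of_nonneg_right m23 hx2, mul_nonneg hl1.le hx1]
    exact le_of_mul_le_mul_left this hl3
  have hApos : 0 < A := by 
    rw [hAd]
    have e1 := mul_le_mul_of_nonneg_left hyx2 (by linarith : (0:ℝ) ≤ s)
    have e2 := mul_pos hx2p hss
    have e3 := mul_le_mul_of_nonneg_left v23 hx2
    linarith
  have h2 : (s-1)*x2 ≤ y - x1 := by
    have e1 : 0 ≤ (y-x1*s)*(l2-(s-1)*l3) := mul_nonneg (by linarith) (by linarith)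
    have e2 : 0 ≤ x1*(s-1)*(l1+l2-s*l3) := mul_nonneg (mul_nonneg hx1 (by linarith)) (by linarith)
    have : l2*((s-1)*x2) ≤ l2*(y-x1) := by
      have e9 : l2*x2 = l3*y-l1*x1 := by linarith
      have e10 : l2*((s-1)*x2) = (s-1)*(l3*y-l1*x1) := by rw [← e9]; ring
      rw [e10]
      linarith
    exact le_of_mul_le_mul_left this hl2
  have hd : 0 < s*y - x1 := by
    have := mul_pos hy (by linarith : 0 < s - 1)
    have := mul_nonneg hx1 (by linarith : 0 ≤ s - 1)
    linarith
  set q := l1/l2 with hqd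
  have hql : q*l2 = l1 := by rw [hqd]; field_simp
  have hqp : 0 < q := div_pos hl1 hl2
  have hq : q*(s*y-x1) ≤ x2+y := by
    have : l2*(q*(s*y-x1)) ≤ l2*(x2+y) := by
      have e : l2*(q*(s*y-x1)) = l1*(s*y-x1) := by rw [← hql]; ring
      rw [e]
      have := mul_le_mul_of_nonneg_right k1 hy.le
      linarith
    exact le_of_mul_le_mul_left this hl2
  have hfin := final_bound s x1 x2 y q hs hs2 hx1 hx2p hx2' hy hy' h1 h2 hq
  have hBq : B ≤ q*(y-x1*s) := by
    have : l2*B ≤ l2*(q*(y-x1*s)) := by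
      have e : l2*(q*(y-x1*s)) = l1*(y-x1*s) := by rw [← hql]; ring
      rw [e, hB']
      have := mul_le_mul_of_nonneg_left v31 (mul_pos hl1 hy).le
      linarith
    exact le_of_mul_le_mul_left this hl2
  have hg : 0 < x1*s+x2 := by positivity
  have hK0 : ∀ z, z ≤ (y-x1*s)*(q*(1+x1) - s + x2)/(x1*s+x2) → 2/cFun s ≤ 1 + (s-z)/y := by
    intro z hz
    refine hfin.trans ?_
    gcongr
  have hbig : ∀ z t, z ≤ 0 → 0 < t → t ≤ 1 → 2/cFun s ≤ 1 + (s-z)/t := by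
    intro z t hz ht ht'
    have : s ≤ (s-z)/t := by 
      rw [le_div_iff₀ ht]
      have := mul_le_mul_of_nonneg_left ht' (by linarith : (0:ℝ) ≤ s)
      linarith
    linarith
  refine ⟨hx2p, hApos, ?_, ?_⟩
  · intro hBA
    rcases le_total (u23+y) 0 with hu | hu
    · exact hbig _ _ (div_nonpos_of_nonpos_of_nonneg (mul_nonpos_of_nonneg_of_nonpos hB hu) hApos.le) hy hy'
    · apply hK0
      have e1 : (u23+y)*(q*(x1*s+x2)) ≤ (q*(1+x1)-s+x2)*A := by
        have e0 : (l2*l3)*((u23+y)*(q*(x1*s+x2))) ≤ (l2*l3)*((q*(1+x1)-s+x2)*A) := by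
          have e2 : (l2*l3)*((u23+y)*(q*(x1*s+x2))) = (l3*u23+l3*y)*(l1*(x1*s+x2)) := by
            rw [← hql]; ring
          have e3 : (l2*l3)*((q*(1+x1)-s+x2)*A) = (l1*(1+x1)-l2*(s-x2))*(l1*(x1*s-x2*u21)) := by
            rw [← hA', ← hql]; ring
          rw [e2, e3, ← hx, show l3*u23 = -l1*u21-l2*s by linarith]
          have e4 : 0 ≤ (1+u21)*(l1*(x1*(s-x2)*l1+l2*x2*(s-x2))) := by
            apply mul_nonneg (by linarith)
            have : 0 ≤ s - x2 := by linarith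
            positivity
          have e5 : 0 ≤ (1+u21)*(l1*l1*(x1*s+x2) - l1*x2*(l1*(1+x1)-l2*(s-x2))) := by
            have : l1*l1*(x1*s+x2) - l1*x2*(l1*(1+x1)-l2*(s-x2)) = l1*(x1*(s-x2)*l1+l2*x2*(s-x2)) := by ring
            rw [this]; exact e4
          linarith
        exact le_of_mul_le_mul_left e0 (by positivity)
      rw [div_le_div_iff₀ hApos hg]
      calc B*(u23+y)*(x1*s+x2) ≤ (q*(y-x1*s))*(u23+y)*(x1*s+x2) := by gcongr
        _ = (y-x1*s)*((u23+y)*(q*(x1*s+x2))) := by ring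
        _ ≤ (y-x1*s)*((q*(1+x1)-s+x2)*A) := mul_le_mul_of_nonneg_left e1 (by linarith)
        _ = _ := by ring
  · intro hAB
    have hBpos : 0 < B := hApos.trans_le hAB
    rcases le_total (u32+x2) 0 with hu | hu
    · exact hbig _ _ (div_nonpos_of_nonpos_of_nonneg (mul_nonpos_of_nonneg_of_nonpos hApos.le hu) hBpos.le) hx2p hx2'
    · have e1 : A*(u32+x2)/B ≤ u32+x2 := by
        rw [div_le_iff₀ hBpos, mul_comm]; exact mul_le_mul_of_nonneg_left hAB hu
      have e2 : 1 + (s-(u32+x2))/x2 ≤ 1 + (s - A*(u32+x2)/B)/x2 := by gcongr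
      refine le_trans ?_ e2
      have e3 : 1 + (s-(u32+x2))/x2 = 1 + (s - (B-(s-x2)*y)/x2)/y := by
        rw [hBd]; field_simp; ring
      rw [e3]
      apply hK0
      rw [div_le_div_iff₀ hx2p hg]
      have e4 : q*(y-x1*s) ≤ s*(y+x2) := by
        have : y - x1*s ≤ s*(s*y-x1) := by
          have := mul_pos hy (by linarith : 0 < s^2-1)
          linarith
        linarith [mul_le_mul_of_nonneg_left this hqp.le, mul_le_mul_of_nonneg_left hq (by linarith : (0:ℝ) ≤ s)]
      have e5 : 0 ≤ x1*(s-x2)*(s*(y+x2)-q*(y-x1*s)) :=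
        mul_nonneg (mul_nonneg hx1 (by linarith)) (by linarith)
      have e6 : B*(x1*s+x2) ≤ q*(y-x1*s)*(x1*s+x2) := mul_le_mul_of_nonneg_right hBq hg.le
      linarith

structure Conf (K : Set E2) (s l1 l2 l3 : ℝ) (u1 u2 u3 : E2 →L[ℝ] ℝ) (p1 p2 p3 : E2) : Prop where
  hl1 : 0 < l1
  hl2 : 0 < l2
  hl3 : 0 < l3
  hp1 : p1 ∈ K
  hp2 : p2 ∈ K
  hp3 : p3 ∈ K
  sum : ∀ v, l1 * u1 v + l2 * u2 v + l3 * u3 v = 0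
  lo1 : ∀ k ∈ K, -1 ≤ u1 k
  lo2 : ∀ k ∈ K, -1 ≤ u2 k
  lo3 : ∀ k ∈ K, -1 ≤ u3 k
  e1 : u1 p1 = s
  e2 : u2 p2 = s
  e3 : u3 p3 = s
  inj : ∀ z, u1 z = 0 → u2 z = 0 → u3 z = 0 → z = 0

lemma Conf.swap {K : Set E2} {s l1 l2 l3 : ℝ} {u1 u2 u3 : E2 →L[ℝ] ℝ} {p1 p2 p3 : E2}
    (h : Conf K s l1 l2 l3 u1 u2 u3 p1 p2 p3) : Conf K s l2 l1 l3 u2 u1 u3 p2 p1 p3 :=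
  ⟨h.hl2, h.hl1, h.hl3, h.hp2, h.hp1, h.hp3, fun v => by have := h.sum v; linarith,
    h.lo2, h.lo1, h.lo3, h.e2, h.e1, h.e3, fun z a b c => h.inj z b a c⟩

lemma Conf.rot {K : Set E2} {s l1 l2 l3 : ℝ} {u1 u2 u3 : E2 →L[ℝ] ℝ} {p1 p2 p3 : E2}
    (h : Conf K s l1 l2 l3 u1 u2 u3 p1 p2 p3) : Conf K s l2 l3 l1 u2 u3 u1 p2 p3 p1 :=
  ⟨h.hl2, h.hl3, h.hl1, h.hp2, h.hp3, h.hp1, fun v => by have := h.sum v; linarith,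
    h.lo2, h.lo3, h.lo1, h.e2, h.e3, h.e1, fun z a b c => h.inj z c a b⟩

def Good (K : Set E2) (s : ℝ) (x : E2) : Prop :=
  ∃ k1 ∈ K, ∃ k2 ∈ K, ∃ r : ℝ, 2 / cFun s ≤ r ∧ k1 - k2 = r • x

lemma Good.neg {K : Set E2} {s : ℝ} {x : E2} (h : Good K s (-x)) : Good K s x := by
  obtain ⟨k1, h1, k2, h2, r, hr, h⟩ := h
  refine ⟨k2, h2, k1, h1, r, hr, ?_⟩
  rw [← neg_sub, h, smul_neg, neg_neg]

lemma chord_geom {K : Set E2} (hK : Convex ℝ K) {s l1 l2 l3 : ℝ} {u1 u2 u3 : E2 →L[ℝ] ℝ} {p1 p2 p3 : E2}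
    (h : Conf K s l1 l2 l3 u1 u2 u3 p1 p2 p3) (hs : phiR < s) {x : E2} (hx0 : x ≠ 0)
    (hx : x ∈ K) (hx' : -x ∈ K) (x1 : 0 ≤ u1 x) (x2 : 0 ≤ u2 x) (x3 : u3 x ≤ 0)
    (hB : 0 ≤ -u3 x * u2 p3 + s * u2 x) : Good K s x := by
  obtain ⟨g1, g2⟩ := xphi s hs
  obtain ⟨hl1, hl2, hl3, hp1, hp2, hp3, sum, lo1, lo2, lo3, e1, e2, e3, inj⟩ := h
  have k1 : s*l1 ≤ l2+l3 := by
    have := sum p1; rw [e1] at this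
    linarith [mul_le_mul_of_nonneg_left (lo2 p1 hp1) hl2.le, mul_le_mul_of_nonneg_left (lo3 p1 hp1) hl3.le]
  have k2 : s*l2 ≤ l1+l3 := by
    have := sum p2; rw [e2] at this
    linarith [mul_le_mul_of_nonneg_left (lo1 p2 hp2) hl1.le, mul_le_mul_of_nonneg_left (lo3 p2 hp2) hl3.le]
  have k3 : s*l3 ≤ l1+l2 := by
    have := sum p3; rw [e3] at this
    linarith [mul_le_mul_of_nonneg_left (lo1 p3 hp3) hl1.le, mul_le_mul_of_nonneg_left (lo2 p3 hp3) hl2.le]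
  have hs2 : s ≤ 2 := by
    have : (l1+l2+l3)*s ≤ (l1+l2+l3)*2 := by linarith
    exact le_of_mul_le_mul_left this (by positivity)
  have sx := sum x
  have hy : 0 < -u3 x := by
    rcases x3.lt_or_eq with h | h
    · linarith
    · exfalso
      rw [h] at sx
      have a1 := mul_nonneg hl1.le x1
      have a2 := mul_nonneg hl2.le x2
      have b1 : l1 * u1 x = 0 := by linarith
      have b2 : l2 * u2 x = 0 := by linarith
      exact hx0 (inj x ((mul_eq_zero.1 b1).resolve_left hl1.ne') ((mul_eq_zero.1 b2).resolve_left hl2.ne') h)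
  have hx2' : u2 x ≤ 1 := by
    have := lo2 _ hx'; rw [map_neg] at this; linarith
  have sp2 := sum p2
  have sp3 := sum p3
  rw [e2] at sp2
  rw [e3] at sp3
  obtain ⟨c1, c2, c3, c4⟩ := chord_real s l1 l2 l3 (u1 x) (u2 x) (-u3 x) (u1 p2) (u3 p2) (u1 p3) (u2 p3)
    hs hs2 hl1 hl2 hl3 k1 k2 k3 x1 x2 hx2' hy (by linarith [lo3 x hx]) (by linarith)
    (lo1 _ hp2) (lo3 _ hp2) (lo1 _ hp3) (lo2 _ hp3) sp2 sp3 hB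
  have inj' : ∀ z, u2 z = 0 → u3 z = 0 → z = 0 := by
    intro z a b
    refine inj z ?_ a b
    have := sum z
    rw [a, b] at this
    have : l1 * u1 z = 0 := by linarith
    exact (mul_eq_zero.1 this).resolve_left hl1.ne'
  have hy0 : u3 x ≠ 0 := by linarith
  set A := -u3 x * s + u2 x * u3 p2 with hA
  set B := -u3 x * u2 p3 + s * u2 x with hBd
  rcases le_total B A with hBA | hAB
  · have hq1 : B / A ≤ 1 := (div_le_one c2).2 hBA
    have hq0 : 0 ≤ B / A := div_nonneg hB c2.le
    have hqA : B / A * A = B := div_mul_cancel₀ _ c2.ne'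
    have hr := c3 hBA
    rw [mul_div_right_comm] at hr
    set q := B / A
    refine ⟨q • p2 + (1-q) • x, hK hp2 hx hq0 (by linarith) (by ring), p3, hp3, _, hr, ?_⟩
    rw [← sub_eq_zero]
    apply inj'
    · simp only [map_sub, map_add, map_smul, smul_eq_mul, e2]
      field_simp
      rw [hA, hBd] at hqA
      linear_combination (-1) * hqA
    · simp only [map_sub, map_add, map_smul, smul_eq_mul, e3]
      field_simp
      ring
  · have hBp : 0 < B := c2.trans_le hAB
    have hq1 : A / B ≤ 1 := (div_le_one hBp).2 hAB
    have hq0 : 0 ≤ A / B := div_nonneg c2.le hBp.le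
    have hqA : A / B * B = A := div_mul_cancel₀ _ hBp.ne'
    have hr := c4 hAB
    rw [mul_div_right_comm] at hr
    set q := A / B
    refine ⟨p2, hp2, q • p3 + (1-q) • (-x), hK hp3 hx' hq0 (by linarith) (by ring), _, hr, ?_⟩
    rw [← sub_eq_zero]
    apply inj'
    · simp only [map_sub, map_add, map_smul, map_neg, smul_eq_mul, e2]
      field_simp
      ring
    · simp only [map_sub, map_add, map_smul, map_neg, smul_eq_mul, e3]
      field_simp
      rw [hA, hBd] at hqA
      linear_combination (-1) * hqA

lemma chord_sym {K : Set E2} (hK : Convex ℝ K) {s l1 l2 l3 : ℝ} {u1 u2 u3 : E2 →L[ℝ] ℝ} {p1 p2 p3 : E2}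
    (h : Conf K s l1 l2 l3 u1 u2 u3 p1 p2 p3) (hs : phiR < s) {x : E2} (hx0 : x ≠ 0)
    (hx : x ∈ K) (hx' : -x ∈ K) (x1 : 0 ≤ u1 x) (x2 : 0 ≤ u2 x) : Good K s x := by
  have sx := h.sum x
  have x3 : u3 x ≤ 0 := by
    have a1 := mul_nonneg h.hl1.le x1
    have a2 := mul_nonneg h.hl2.le x2
    have : l3 * u3 x ≤ 0 := by linarith
    by_contra hc
    have := mul_pos h.hl3 (not_le.1 hc)
    linarith
  rcases le_total 0 (-u3 x * u2 p3 + s * u2 x) with hB | hB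
  · exact chord_geom hK h hs hx0 hx hx' x1 x2 x3 hB
  · refine chord_geom hK h.swap hs hx0 hx hx' x2 x1 x3 ?_
    have sp := h.sum p3
    rw [h.e3] at sp
    have : l1 * (-u3 x * u1 p3 + s * u1 x) + l2 * (-u3 x * u2 p3 + s * u2 x) = 0 := by
      linear_combination (-u3 x) * sp + s * sx
    have a2 := mul_nonneg h.hl2.le (neg_nonneg.2 hB)
    have : 0 ≤ l1 * (-u3 x * u1 p3 + s * u1 x) := by linarith
    exact nonneg_of_mul_nonneg_right this h.hl1

lemma chord_all {K : Set E2} (hK : Convex ℝ K) {s l1 l2 l3 : ℝ} {u1 u2 u3 : E2 →L[ℝ] ℝ} {p1 p2 p3 : E2}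
    (h : Conf K s l1 l2 l3 u1 u2 u3 p1 p2 p3) (hs : phiR < s) {x : E2} (hx0 : x ≠ 0)
    (hx : x ∈ K) (hx' : -x ∈ K) : Good K s x := by
  have hn0 : -x ≠ 0 := neg_ne_zero.2 hx0
  have hnn : -(-x) ∈ K := by rwa [neg_neg]
  have ng : ∀ u : E2 →L[ℝ] ℝ, u x ≤ 0 → 0 ≤ u (-x) := by
    intro u hu; rw [map_neg]; linarith
  rcases le_total 0 (u1 x) with a1 | a1 <;> rcases le_total 0 (u2 x) with a2 | a2 <;>
    rcases le_total 0 (u3 x) with a3 | a3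
  · exact chord_sym hK h hs hx0 hx hx' a1 a2
  · exact chord_sym hK h hs hx0 hx hx' a1 a2
  · exact chord_sym hK h.rot.rot hs hx0 hx hx' a3 a1
  · exact (chord_sym hK h.rot hs hn0 hx' hnn (ng _ a2) (ng _ a3)).neg
  · exact chord_sym hK h.rot hs hx0 hx hx' a2 a3
  · exact (chord_sym hK h.rot.rot hs hn0 hx' hnn (ng _ a3) (ng _ a1)).neg
  · exact (chord_sym hK h hs hn0 hx' hnn (ng _ a1) (ng _ a2)).neg
  · exact (chord_sym hK h hs hn0 hx' hnn (ng _ a1) (ng _ a2)).neg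

abbrev Du := E2 →L[ℝ] ℝ

lemma step_contact (K : Set E2) (hK : IsConvexBody K) (ρ : ℝ) (hρ : 0 < ρ) (hρs : ρ < minkAsym K) :
    ∃ x1 ∈ K, ∃ x2 ∈ K, ∃ x3 ∈ K, ∃ b : Du × Du, ‖b‖ = 1 ∧
      ∀ k1 ∈ K, ∀ k2 ∈ K, ∀ k3 ∈ K,
        0 ≤ b.1 (x1 + ρ • k1) + b.2 (x2 + ρ • k2) - (b.1 (x3 + ρ • k3) + b.2 (x3 + ρ • k3)) := by
  obtain ⟨hconv, hcomp, hint⟩ := hK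
  obtain ⟨z0, hz0⟩ := hint.mono interior_subset
  have hno : ∀ c : E2, ¬ (K - {c} ⊆ ρ • ({c} - K)) := by
    intro c hc
    have : minkAsym K ≤ ρ := csInf_le ⟨0, fun r hr => hr.1.le⟩ ⟨hρ, c, hc⟩
    linarith
  let F : K → Set E2 := fun x => (fun k => (x : E2) + ρ • k) '' K
  have hFconv : ∀ x, Convex ℝ (F x) := fun x => hconv.affinity _ _
  have hFcomp : ∀ x, IsCompact (F x) := fun x => hcomp.image (by fun_prop)
  have hempty : ¬ (⋂ i, F i).Nonempty := by
    rintro ⟨t, ht⟩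
    rw [mem_iInter] at ht
    apply hno ((1+ρ)⁻¹ • t)
    rintro w ⟨x, hx, c, hc, rfl⟩
    rw [mem_singleton_iff] at hc
    subst hc
    obtain ⟨k, hk, hkt⟩ := ht ⟨x, hx⟩
    refine ⟨(1+ρ)⁻¹ • t - k, ⟨_, rfl, k, hk, rfl⟩, ?_⟩
    simp only at hkt ⊢
    have h1 : (1+ρ) ≠ 0 := by positivity
    have h2 : t = (1+ρ) • ((1+ρ)⁻¹ • t) := by rw [smul_smul, mul_inv_cancel₀ h1, one_smul]
    set c := (1+ρ)⁻¹ • t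
    have h3 : x = (1+ρ) • c - ρ • k := by rw [← h2, ← hkt]; abel
    rw [h3]
    module
  have hfin : ∃ I : Finset K, I.card ≤ 3 ∧ ¬ (⋂ i ∈ I, F i).Nonempty := by
    by_contra hcon
    push Not at hcon
    apply hempty
    apply Convex.helly_theorem_compact' (𝕜 := ℝ) hFconv hFcomp
    intro I hI
    apply hcon I
    simpa using hI
  obtain ⟨I, hI3, hI⟩ := hfin
  have hf : ∃ f : Fin 3 → K, ∀ i ∈ I, ∃ j, f j = i := by
    refine ⟨fun j => if h : (j : ℕ) < I.card then (I.equivFin.symm ⟨j, h⟩ : I) else ⟨z0, hz0⟩, ?_⟩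
    intro i hi
    have hlt := (I.equivFin ⟨i, hi⟩).2
    refine ⟨⟨(I.equivFin ⟨i, hi⟩ : ℕ), lt_of_lt_of_le hlt hI3⟩, ?_⟩
    simp
  obtain ⟨f, hf⟩ := hf
  have hdis : Disjoint ((fun t : E2 => (t, t)) '' F (f 2)) (F (f 0) ×ˢ F (f 1)) := by
    rw [Set.disjoint_left]
    rintro _ ⟨t, ht, rfl⟩ ⟨h0, h1⟩
    apply hI
    refine ⟨t, ?_⟩
    simp only [mem_iInter]
    intro i hi
    obtain ⟨j, rfl⟩ := hf i hi
    fin_cases j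
    · exact h0
    · exact h1
    · exact ht
  have hDconv : Convex ℝ ((fun t : E2 => (t, t)) '' F (f 2)) := by
    have := (hFconv (f 2)).linear_image ((LinearMap.id : E2 →ₗ[ℝ] E2).prod LinearMap.id)
    exact this
  obtain ⟨g, a, b, hg1, hab, hg2⟩ := geometric_hahn_banach_compact_closed hDconv
    ((hFcomp (f 2)).image (by fun_prop)) ((hFconv (f 0)).prod (hFconv (f 1)))
    ((hFcomp (f 0)).prod (hFcomp (f 1))).isClosed hdis
  let b0 : Du × Du := (g.comp (ContinuousLinearMap.inl ℝ E2 E2), g.comp (ContinuousLinearMap.inr ℝ E2 E2))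
  have hsplit : ∀ v w, g (v, w) = b0.1 v + b0.2 w := by
    intro v w
    simp only [b0, ContinuousLinearMap.comp_apply, ContinuousLinearMap.inl_apply, ContinuousLinearMap.inr_apply]
    rw [← map_add]; simp
  have hineq : ∀ k1 ∈ K, ∀ k2 ∈ K, ∀ k3 ∈ K,
        0 < b0.1 (f 0 + ρ • k1) + b0.2 (f 1 + ρ • k2) - (b0.1 (f 2 + ρ • k3) + b0.2 (f 2 + ρ • k3)) := by
    intro k1 h1 k2 h2 k3 h3
    rw [← hsplit, ← hsplit]
    have e1 := hg1 _ ⟨_, ⟨k3, h3, rfl⟩, rfl⟩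
    have e2 := hg2 ((f 0 : E2) + ρ • k1, (f 1 : E2) + ρ • k2) ⟨⟨k1, h1, rfl⟩, ⟨k2, h2, rfl⟩⟩
    simp only at e1
    linarith
  have hb0 : b0 ≠ 0 := by
    intro h
    have := hineq z0 hz0 z0 hz0 z0 hz0
    rw [h] at this
    simp at this
  have hn : 0 < ‖b0‖ := norm_pos_iff.2 hb0
  refine ⟨f 0, (f 0).2, f 1, (f 1).2, f 2, (f 2).2, ‖b0‖⁻¹ • b0, ?_, ?_⟩
  · rw [norm_smul, norm_inv, norm_norm, inv_mul_cancel₀ hn.ne']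
  · intro k1 h1 k2 h2 k3 h3
    have := mul_pos (inv_pos.2 hn) (hineq k1 h1 k2 h2 k3 h3)
    simp only [Prod.smul_fst, Prod.smul_snd, ContinuousLinearMap.smul_apply, smul_eq_mul]
    linarith

lemma contact (K : Set E2) (hK : IsConvexBody K) (hc : MinkCentered K) (hs : 0 < minkAsym K) :
    ∃ p1 ∈ K, ∃ p2 ∈ K, ∃ p3 ∈ K, ∃ b1 b2 b3 : Du, b1 + b2 + b3 = 0 ∧ (b1 ≠ 0 ∨ b2 ≠ 0) ∧
      (∀ k ∈ K, -(minkAsym K) * b1 k ≤ b1 p1) ∧ (∀ k ∈ K, -(minkAsym K) * b2 k ≤ b2 p2) ∧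
      (∀ k ∈ K, -(minkAsym K) * b3 k ≤ b3 p3) := by
  set s := minkAsym K with hsd
  let ρ : ℕ → ℝ := fun n => s - s * (1 / ((n:ℝ) + 2))
  have hn2 : ∀ n : ℕ, 0 < 1 / ((n:ℝ)+2) ∧ 1 / ((n:ℝ)+2) < 1 := by
    intro n
    have : (0:ℝ) ≤ n := n.cast_nonneg
    constructor
    · positivity
    · rw [div_lt_one (by linarith)]; linarith
  have hρ0 : ∀ n, 0 < ρ n := by
    intro n
    have := mul_pos hs (sub_pos.2 (hn2 n).2)
    simp only [ρ]; linarith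
  have hρs : ∀ n, ρ n < s := by
    intro n
    have := mul_pos hs (hn2 n).1
    simp only [ρ]; linarith
  have hρt : Filter.Tendsto ρ Filter.atTop (nhds s) := by
    have h1 : Filter.Tendsto (fun n : ℕ => 1 / ((n:ℝ)+2)) Filter.atTop (nhds 0) := by
      apply Filter.Tendsto.div_atTop tendsto_const_nhds
      exact Filter.tendsto_atTop_add_const_right _ _ tendsto_natCast_atTop_atTop
    have := (tendsto_const_nhds (x := s)).sub ((tendsto_const_nhds (x := s)).mul h1)
    simpa [ρ] using this
  choose x1 hx1 x2 hx2 x3 hx3 b hb hbk using fun n => step_contact K hK (ρ n) (hρ0 n) (hρs n)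
  have hprop : ProperSpace (Du × Du) := FiniteDimensional.proper ℝ _
  have hcpt : IsCompact (K ×ˢ K ×ˢ K ×ˢ Metric.sphere (0 : Du × Du) 1) :=
    hK.2.1.prod (hK.2.1.prod (hK.2.1.prod (isCompact_sphere _ _)))
  obtain ⟨⟨p1, p2, p3, β⟩, hmem, φ, hφ, hlim⟩ := hcpt.tendsto_subseq
    (x := fun n => (x1 n, x2 n, x3 n, b n))
    (fun n => ⟨hx1 n, hx2 n, hx3 n, by simpa using hb n⟩)
  obtain ⟨m1, m2, m3, m4⟩ := hmem
  simp only at m1 m2 m3 m4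
  have hρφ : Filter.Tendsto (fun n => ρ (φ n)) Filter.atTop (nhds s) := hρt.comp hφ.tendsto_atTop
  have hlim2 := hlim.prodMk_nhds hρφ
  have key : ∀ k1 ∈ K, ∀ k2 ∈ K, ∀ k3 ∈ K,
        0 ≤ β.1 (p1 + s • k1) + β.2 (p2 + s • k2) - (β.1 (p3 + s • k3) + β.2 (p3 + s • k3)) := by
    intro k1 h1 k2 h2 k3 h3
    have hcont : Continuous (fun w : (E2 × E2 × E2 × (Du × Du)) × ℝ =>
        w.1.2.2.2.1 (w.1.1 + w.2 • k1) + w.1.2.2.2.2 (w.1.2.1 + w.2 • k2)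
          - (w.1.2.2.2.1 (w.1.2.2.1 + w.2 • k3) + w.1.2.2.2.2 (w.1.2.2.1 + w.2 • k3))) := by
      fun_prop
    have ht := (hcont.tendsto ((p1, p2, p3, β), s)).comp hlim2
    exact ge_of_tendsto' ht (fun n => hbk (φ n) k1 h1 k2 h2 k3 h3)
  have hneg : ∀ p ∈ K, ∃ k ∈ K, p + s • k = 0 := by
    intro p hp
    obtain ⟨w, hw, hwp⟩ := hc hp
    refine ⟨-w, hw, ?_⟩
    rw [← hwp]; simp [hsd]
  obtain ⟨c1, hc1, hc1'⟩ := hneg p1 m1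
  obtain ⟨c2, hc2, hc2'⟩ := hneg p2 m2
  obtain ⟨c3, hc3, hc3'⟩ := hneg p3 m3
  refine ⟨p1, m1, p2, m2, p3, m3, β.1, β.2, -(β.1+β.2), by abel, ?_, ?_, ?_, ?_⟩
  · by_contra hcon
    push Not at hcon
    have : β = 0 := Prod.ext hcon.1 hcon.2
    rw [this] at m4
    simp at m4
  · intro k hk
    have := key k hk c2 hc2 c3 hc3
    rw [hc2', hc3'] at this
    simp only [map_zero, map_add, map_smul, smul_eq_mul] at this
    linarith
  · intro k hk
    have := key c1 hc1 k hk c3 hc3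
    rw [hc1', hc3'] at this
    simp only [map_zero, map_add, map_smul, smul_eq_mul] at this
    linarith
  · intro k hk
    have := key c1 hc1 c2 hc2 k hk
    rw [hc1', hc2'] at this
    simp only [map_zero, map_add, map_smul, smul_eq_mul] at this
    simp only [ContinuousLinearMap.neg_apply, ContinuousLinearMap.add_apply]
    linarith

lemma zero_of_zero_on {K : Set E2} (hK : (interior K).Nonempty) (b : Du) (h : ∀ k ∈ K, b k = 0) : b = 0 := by
  have h1 : LinearMap.ker (b : E2 →ₗ[ℝ] ℝ) = ⊤ := by
    apply Submodule.eq_top_of_nonempty_interior'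
    refine hK.mono (interior_mono ?_)
    intro k hk
    simpa using h k hk
  ext v
  have : v ∈ LinearMap.ker (b : E2 →ₗ[ℝ] ℝ) := by rw [h1]; trivial
  simpa using this

lemma pos_aux {K : Set E2} {s : ℝ} (hs : 1 < s) {p q r : E2} (hp : p ∈ K) (hq : q ∈ K) (hr : r ∈ K)
    {a b c : Du} (hint : (interior K).Nonempty)
    (hsum : ∀ v, a v + b v + c v = 0) (hne : ¬ (b = 0 ∧ c = 0))
    (ha : ∀ k ∈ K, -s * a k ≤ a p) (ha' : ∀ k ∈ K, a k ≤ a p)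
    (hb : ∀ k ∈ K, -s * b k ≤ b q) (hb' : ∀ k ∈ K, b k ≤ b q)
    (hc : ∀ k ∈ K, -s * c k ≤ c r) (hc' : ∀ k ∈ K, c k ≤ c r) : 0 < a p := by
  have n1 : 0 ≤ a p := by nlinarith [ha p hp]
  have n2 : 0 ≤ b q := by nlinarith [hb q hq]
  have n3 : 0 ≤ c r := by nlinarith [hc r hr]
  rcases n1.lt_or_eq with h | h
  · exact h
  exfalso
  have a0 : a = 0 := by
    apply zero_of_zero_on hint
    intro k hk
    have := ha k hk
    have := ha' k hk
    nlinarith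
  have z : ∀ v, c v = - b v := by
    intro v
    have := hsum v
    rw [a0] at this
    simp at this
    linarith
  have e1 := hc q hq
  have e2 := hb r hr
  rw [z q] at e1
  have e3 := z r
  have c0 : c r = 0 := by nlinarith
  have b0 : b q = 0 := by nlinarith
  apply hne
  constructor
  · apply zero_of_zero_on hint
    intro k hk
    have := hb k hk
    have := hb' k hk
    nlinarith
  · apply zero_of_zero_on hint
    intro k hk
    have := hc k hk
    have := hc' k hk
    nlinarith

lemma exists_conf (K : Set E2) (hK : IsConvexBody K) (hc : MinkCentered K) (hs : phiR < minkAsym K) :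
    ∃ (l1 l2 l3 : ℝ) (u1 u2 u3 : Du) (p1 p2 p3 : E2), Conf K (minkAsym K) l1 l2 l3 u1 u2 u3 p1 p2 p3 := by
  obtain ⟨g1, -⟩ := xphi _ hs
  obtain ⟨p1, h1, p2, h2, p3, h3, b1, b2, b3, hb, hne, B1, B2, B3⟩ := contact K hK hc (by linarith)
  have hcc : ∀ k ∈ K, ∃ w ∈ K, k = minkAsym K • (-w) := by
    intro k hk
    obtain ⟨w, hw, h⟩ := hc hk
    exact ⟨-w, hw, by simpa using h.symm⟩
  generalize minkAsym K = s at *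
  have up : ∀ (b : Du) (p : E2), (∀ k ∈ K, -s * b k ≤ b p) → ∀ k ∈ K, b k ≤ b p := by
    intro b p hb k hk
    obtain ⟨w, hw, rfl⟩ := hcc k hk
    have := hb w hw
    simp only [map_smul, map_neg, smul_eq_mul]
    linarith
  have hsum : ∀ v, b1 v + b2 v + b3 v = 0 := by
    intro v
    have := congrArg (fun f : Du => f v) hb
    simpa using this
  have q1 : 0 < b1 p1 := by
    refine pos_aux g1 h1 h2 h3 hK.2.2 hsum ?_ B1 (up _ _ B1) B2 (up _ _ B2) B3 (up _ _ B3)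
    rintro ⟨r1, r2⟩
    subst r1 r2
    simp at hb
    simp [hb] at hne
  have q2 : 0 < b2 p2 := by
    refine pos_aux g1 h2 h3 h1 hK.2.2 (fun v => by linarith [hsum v]) ?_ B2 (up _ _ B2) B3 (up _ _ B3) B1 (up _ _ B1)
    rintro ⟨r1, r2⟩
    subst r1 r2
    simp at hb
    simp [hb] at hne
  have q3 : 0 < b3 p3 := by
    refine pos_aux g1 h3 h1 h2 hK.2.2 (fun v => by linarith [hsum v]) ?_ B3 (up _ _ B3) B1 (up _ _ B1) B2 (up _ _ B2)
    rintro ⟨r1, r2⟩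
    simp [r1, r2] at hne
  have s0 : 0 < s := by linarith
  have ev : ∀ (b : Du) (p v : E2), ((s / b p) • b) v = s * b v / b p := by
    intro b p v
    simp only [ContinuousLinearMap.smul_apply, smul_eq_mul]
    ring
  have lo : ∀ (b : Du) (p : E2), 0 < b p → (∀ k ∈ K, -s * b k ≤ b p) → ∀ k ∈ K, -1 ≤ ((s / b p) • b) k := by
    intro b p hp h k hk
    rw [ev, le_div_iff₀ hp]
    linarith [h k hk]
  have ee : ∀ (b : Du) (p : E2), 0 < b p → ((s / b p) • b) p = s := by
    intro b p hp
    rw [ev]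
    field_simp
  refine ⟨b1 p1 / s, b2 p2 / s, b3 p3 / s, (s / b1 p1) • b1, (s / b2 p2) • b2, (s / b3 p3) • b3,
    p1, p2, p3, by positivity, by positivity, by positivity, h1, h2, h3, ?_, lo _ _ q1 B1, lo _ _ q2 B2,
    lo _ _ q3 B3, ee _ _ q1, ee _ _ q2, ee _ _ q3, ?_⟩
  · intro v
    rw [ev, ev, ev]
    field_simp
    exact hsum v
  · intro z z1 z2 _
    rw [ev] at z1 z2
    have z1' : b1 z = 0 := by
      rcases div_eq_zero_iff.1 z1 with h | h
      · exact (mul_eq_zero.1 h).resolve_left s0.ne'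
      · exact absurd h q1.ne'
    have z2' : b2 z = 0 := by
      rcases div_eq_zero_iff.1 z2 with h | h
      · exact (mul_eq_zero.1 h).resolve_left s0.ne'
      · exact absurd h q2.ne'
    have hli : ¬ LinearIndependent ℝ ![p1, p2, z] := by
      intro h
      have := h.fintype_card_le_finrank
      simp at this
    obtain ⟨g, hg, i, hi⟩ := Fintype.not_linearIndependent_iff.1 hli
    simp [Fin.sum_univ_three] at hg
    have k1 := congrArg b1 hg
    have k2 := congrArg b2 hg
    simp [z1'] at k1
    simp [z2'] at k2
    have m12 := up _ _ B1 p2 h2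
    have m21 := up _ _ B2 p1 h1
    have m12' := B1 p2 h2
    have m21' := B2 p1 h1
    have n1 := B3 p1 h1
    have s1 := hsum p1
    have s3 := hsum p3
    have n3 := B1 p3 h3
    have n3' := B2 p3 h3
    -- strict: b2 p1 < b2 p2
    have m21s : b2 p1 < b2 p2 := by
      by_contra hcon
      have : b2 p1 = b2 p2 := by linarith
      nlinarith
    have hdet : b1 p2 * b2 p1 < b1 p1 * b2 p2 := by
      rcases le_or_gt 0 (b2 p1) with h | h
      · nlinarith [mul_le_mul_of_nonneg_right m12 h, mul_lt_mul_of_pos_left m21s q1]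
      · rcases le_or_gt 0 (b1 p2) with h' | h'
        · nlinarith [mul_nonneg h' (neg_nonneg.2 h.le), mul_pos q1 q2]
        · have a1 : -b1 p2 < b1 p1 := by nlinarith
          have a2 : -b2 p1 < b2 p2 := by nlinarith
          nlinarith [mul_pos (sub_pos.2 a1) q2, mul_pos (sub_pos.2 a2) (neg_pos.2 h')]
    have hd : b1 p1 * b2 p2 - b1 p2 * b2 p1 ≠ 0 := by linarith
    have w0 : g 0 = 0 := by
      have : g 0 * (b1 p1 * b2 p2 - b1 p2 * b2 p1) = 0 := by
        linear_combination b2 p2 * k1 - b1 p2 * k2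
      exact (mul_eq_zero.1 this).resolve_right hd
    have w1 : g 1 = 0 := by
      have : g 1 * (b1 p1 * b2 p2 - b1 p2 * b2 p1) = 0 := by
        linear_combination b1 p1 * k2 - b2 p1 * k1
      exact (mul_eq_zero.1 this).resolve_right hd
    have w2 : g 2 ≠ 0 := by
      intro w2
      fin_cases i
      · exact hi w0
      · exact hi w1
      · exact hi w2
    rw [w0, w1] at hg
    simpa [w2] using hg

lemma conf_le_two {K : Set E2} {s l1 l2 l3 : ℝ} {u1 u2 u3 : E2 →L[ℝ] ℝ} {p1 p2 p3 : E2}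
    (h : Conf K s l1 l2 l3 u1 u2 u3 p1 p2 p3) : s ≤ 2 := by
  obtain ⟨a1, a2, a3, q1, q2, q3, sm, o1, o2, o3, e1, e2, e3, -⟩ := h
  have t1 := sm p1
  have t2 := sm p2
  have t3 := sm p3
  rw [e1] at t1
  rw [e2] at t2
  rw [e3] at t3
  have r1 := mul_le_mul_of_nonneg_left (o2 p1 q1) a2.le
  have r2 := mul_le_mul_of_nonneg_left (o3 p1 q1) a3.le
  have r3 := mul_le_mul_of_nonneg_left (o1 p2 q2) a1.le
  have r4 := mul_le_mul_of_nonneg_left (o3 p2 q2) a3.le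
  have r5 := mul_le_mul_of_nonneg_left (o1 p3 q3) a1.le
  have r6 := mul_le_mul_of_nonneg_left (o2 p3 q3) a2.le
  have : s * (l1 + l2 + l3) ≤ 2 * (l1 + l2 + l3) := by nlinarith
  exact le_of_mul_le_mul_right this (by positivity)

theorem stmt11 (K : Set E2) (hK : IsConvexBody K) (hc : MinkCentered K)
    (hs : phiR < minkAsym K) :
    tauB K ≤ cFun (minkAsym K) := by
  obtain ⟨l1, l2, l3, u1, u2, u3, p1, p2, p3, h⟩ := exists_conf K hK hc hs
  have s2 := conf_le_two h
  obtain ⟨g1, -⟩ := xphi _ hs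
  have hcp := cFun_pos _ hs s2
  have c0 : 0 < cFun (minkAsym K) := by
    by_contra hcon
    nlinarith
  have hG := fun (x : E2) hx0 hx hx' => chord_all (x := x) hK.1 h hs hx0 hx hx'
  unfold Good at hG
  have hconv := hK.1
  unfold tauB
  generalize cFun (minkAsym K) = c at *
  refine csInf_le ⟨0, fun ρ hρ => hρ.1.le⟩ ⟨c0, ?_⟩
  rintro x ⟨hx, hx'⟩
  have key : ∃ k1 ∈ K, ∃ k2 ∈ K, k1 - k2 = (2 / c) • x := by
    by_cases hx0 : x = 0
    · exact ⟨x, hx, x, hx, by simp [hx0]⟩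
    obtain ⟨k1, hk1, k2, hk2, r, hr, he⟩ := hG x hx0 hx hx'
    have q : 0 < 2 / c := by positivity
    have r0 : 0 < r := by linarith
    have t0 : 0 ≤ 2 / c / r := by positivity
    have t1 : 2 / c / r ≤ 1 := by rw [div_le_one r0]; exact hr
    refine ⟨(2 / c / r) • k1 + (1 - 2 / c / r) • k2, hconv hk1 hk2 t0 (by linarith) (by ring), k2, hk2, ?_⟩
    have : (2 / c / r) • k1 + (1 - 2 / c / r) • k2 - k2 = (2 / c / r) • (k1 - k2) := by module
    rw [this, he, smul_smul, div_mul_cancel₀ _ r0.ne']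
  obtain ⟨k1, hk1, k2, hk2, he⟩ := key
  refine ⟨(2:ℝ)⁻¹ • (k1 - k2), ⟨k1 - k2, ⟨k1, hk1, k2, hk2, rfl⟩, rfl⟩, ?_⟩
  simp only [he, smul_smul]
  have : c * (2⁻¹ * (2 / c)) = 1 := by field_simp
  rw [this, one_smul]
end
end

section
/- Let K ⊆ ℝ² be a Minkowski centered convex body. Then 2/(s(K)+1) ≤ γ(K) ≤ c(s(K)). -/
open scoped Pointwise RealInnerProductSpace
open Set

noncomputable section

lemma phi_lt_iff {s : ℝ} (hs : phiR < s) : 1 < s ∧ 0 < s^2 - s - 1 := by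
  unfold phiR at hs
  have h5 : Real.sqrt 5 ^ 2 = 5 := Real.sq_sqrt (by norm_num)
  have h0 := Real.sqrt_nonneg 5
  have h1 : 1 < Real.sqrt 5 := by nlinarith
  constructor
  · linarith
  · nlinarith

lemma cE2_spec {s : ℝ} (h1 : 1 < s) :
    0 < cExpr2 s ∧ cExpr2 s * (s^2-1) = s^2+2*s-1 - 2 * Real.sqrt (s*(s^2-1)) := by
  have hq : 0 < s^2-1 := by nlinarith
  have hr2 : Real.sqrt (s*(s^2-1))^2 = s*(s^2-1) := Real.sq_sqrt (by positivity)
  have hr0 := Real.sqrt_nonneg (s*(s^2-1))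
  unfold cExpr2
  set r := Real.sqrt (s*(s^2-1))
  have hE : 0 < s^2+2*s-1+2*r := by nlinarith
  constructor
  · positivity
  · have : (s^2+1)^2 = (s^2+2*s-1 - 2*r) * (s^2+2*s-1+2*r) := by linear_combination 4*hr2
    rw [this, div_mul_eq_mul_div, div_eq_iff (by positivity)]
    ring

lemma cE2_le {s : ℝ} (hs : phiR < s) : cExpr2 s ≤ 1 := by
  obtain ⟨h1, h2⟩ := phi_lt_iff hs
  obtain ⟨h3, h4⟩ := cE2_spec h1
  have hq : 0 < s^2-1 := by nlinarith
  have hr : s ≤ Real.sqrt (s*(s^2-1)) := Real.le_sqrt_of_sq_le (by nlinarith)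
  have : cExpr2 s * (s^2-1) ≤ 1 * (s^2-1) := by rw [h4]; linarith
  exact le_of_mul_le_mul_right this hq

lemma cE3_spec {s : ℝ} (h1 : 1 < s) (h2 : s ≤ 2) :
    0 < cExpr3 s ∧ cExpr3 s ≤ 1 ∧ cExpr3 s * ((3-s)*(s+1)) = 2*(2*s+1-s^2) := by
  have h3 : 0 < (3-s)*(s+1) := mul_pos (by linarith) (by linarith)
  have e : cExpr3 s = 2*(2*s+1-s^2) / ((3-s)*(s+1)) := by
    unfold cExpr3
    have : s - 3 ≠ 0 := by linarith
    have : 3 - s ≠ 0 := by linarith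
    have : s + 1 ≠ 0 := by linarith
    field_simp
    ring
  refine ⟨?_, ?_, ?_⟩
  · rw [e]; apply div_pos _ h3; nlinarith
  · rw [e, div_le_one h3]; nlinarith [sq_nonneg (s-1)]
  · rw [e]; exact div_mul_cancel₀ _ h3.ne'

/-- the quadratic -/
def Qd (s c a : ℝ) : ℝ :=
  c*(s+1)*(s^2-1)^2 + (2*(s^2-1)*c - 2*s*(s^2+1))*a + (2*s - c*(s-1))*a^2

lemma disc_eq (s c : ℝ) :
    (2*(s^2-1)*c - 2*s*(s^2+1))^2 - 4*(2*s - c*(s-1))*(c*(s+1)*(s^2-1)^2)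
    = 4*s^2*((c*(s^2-1) - (s^2+2*s-1))^2 - 4*(s*(s^2-1))) := by ring

lemma Qd_a0 (s c : ℝ) : Qd s c ((s^2-1)*(s-1)) =
    (s^2-1)*(s-1)*s^2*(c*((3-s)*(s+1)) - 2*(2*s+1-s^2)) := by
  unfold Qd; ring

lemma h_of_eq {s : ℝ} (h1 : phiR < s) (h2 : s ≤ 2) (h : cExpr2 s = cExpr3 s) :
    (s-1)^3 - 4*(s-1)^2 - 2*(s-1) + 4 = 0 := by
  obtain ⟨g1, g2⟩ := phi_lt_iff h1
  obtain ⟨e1, e2⟩ := cE2_spec g1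
  obtain ⟨f1, f2, f3⟩ := cE3_spec g1 h2
  have hq : 0 < s^2-1 := by nlinarith
  have hr2 : Real.sqrt (s*(s^2-1))^2 = s*(s^2-1) := Real.sq_sqrt (by positivity)
  have hd := disc_eq s (cExpr3 s)
  have ha := Qd_a0 s (cExpr3 s)
  rw [h] at e2
  rw [e2] at hd
  rw [f3] at ha
  set c := cExpr3 s
  set r := Real.sqrt (s*(s^2-1))
  have hd' : (2*(s^2-1)*c - 2*s*(s^2+1))^2 - 4*(2*s - c*(s-1))*(c*(s+1)*(s^2-1)^2) = 0 := by
    rw [hd, ← hr2]; ring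
  have ha' : Qd s c ((s^2-1)*(s-1)) = 0 := by rw [ha]; ring
  unfold Qd at ha'
  set B := 2*(s^2-1)*c - 2*s*(s^2+1)
  set A := 2*s - c*(s-1)
  have hA : 0 < A := by simp only [A]; nlinarith
  have hB : (2*A*((s^2-1)*(s-1)) + B)^2 = 0 := by
    linear_combination hd' + 4*A*ha'
  have hB' : 2*A*((s^2-1)*(s-1)) + B = 0 := by simpa using hB
  have h5 : (s^2-1)^2*(c*(s+1) - A*(s-1)^2) = 0 := by
    linear_combination ha' - ((s^2-1)*(s-1))*hB'
  have h6 : c*(s+1) - A*(s-1)^2 = 0 := by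
    rcases mul_eq_zero.1 h5 with h | h
    · exact absurd h (by positivity)
    · exact h
  have h7 : s * ((s-1)^3 - 4*(s-1)^2 - 2*(s-1) + 4) = 0 := by
    have : c*((3-s)*(s+1)) * ((s+1)+(s-1)^3) = 2*s*(s-1)^2 * ((3-s)*(s+1)) := by
      simp only [A] at h6
      linear_combination ((3-s)*(s+1)) * h6
    rw [f3] at this
    linear_combination this/2
  rcases mul_eq_zero.1 h7 with h | h
  · linarith
  · exact h

lemma eq_of_h {s : ℝ} (h1 : phiR < s) (h2 : s ≤ 2)
    (h : (s-1)^3 - 4*(s-1)^2 - 2*(s-1) + 4 = 0) : cExpr2 s = cExpr3 s := by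
  obtain ⟨g1, g2⟩ := phi_lt_iff h1
  obtain ⟨e1, e2⟩ := cE2_spec g1
  obtain ⟨f1, f2, f3⟩ := cE3_spec g1 h2
  have hq : 0 < s^2-1 := by nlinarith
  have hr2 : Real.sqrt (s*(s^2-1))^2 = s*(s^2-1) := Real.sq_sqrt (by positivity)
  have hr0 := Real.sqrt_nonneg (s*(s^2-1))
  have hd := disc_eq s (cExpr3 s)
  have ha := Qd_a0 s (cExpr3 s)
  rw [f3] at ha
  set c := cExpr3 s
  set r := Real.sqrt (s*(s^2-1))
  have ha' : Qd s c ((s^2-1)*(s-1)) = 0 := by rw [ha]; ring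
  unfold Qd at ha'
  have hw : 0 < (3-s)*(s+1) := mul_pos (by linarith) (by linarith)
  have h6 : c*(s+1) - (2*s - c*(s-1))*(s-1)^2 = 0 := by
    have : ((3-s)*(s+1)) * (c*(s+1) - (2*s - c*(s-1))*(s-1)^2) = 0 := by
      linear_combination ((s+1)+(s-1)^3)*f3 + 2*s*h
    rcases mul_eq_zero.1 this with h | h
    · linarith
    · exact h
  set B := 2*(s^2-1)*c - 2*s*(s^2+1)
  set A := 2*s - c*(s-1)
  have hB : ((s^2-1)*(s-1))*(2*A*((s^2-1)*(s-1)) + B) = 0 := by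
    linear_combination ha' - (s^2-1)^2*h6
  have hB' : 2*A*((s^2-1)*(s-1)) + B = 0 := by
    rcases mul_eq_zero.1 hB with h | h
    · have : 0 < (s^2-1)*(s-1) := mul_pos hq (by linarith)
      linarith
    · exact h
  have hz : B^2 - 4*A*(c*(s+1)*(s^2-1)^2) = 0 := by
    linear_combination (2*A*((s^2-1)*(s-1)) + B)*hB' - 4*A*ha'
  rw [hz] at hd
  have h8 : (c*(s^2-1) - (s^2+2*s-1))^2 = (2*r)^2 := by
    have : 4*s^2 ≠ 0 := by positivity
    have := (mul_eq_zero.1 hd.symm).resolve_left this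
    linear_combination this - 4*hr2
  rcases sq_eq_sq_iff_eq_or_eq_neg.1 h8 with h | h
  · exfalso; nlinarith
  · have : cExpr2 s * (s^2-1) = c * (s^2-1) := by rw [e2]; linarith
    exact mul_right_cancel₀ hq.ne' this

lemma sHat_spec {s : ℝ} (hs : phiR < s) (h2 : s ≤ 2) (h : sHat < s) :
    (s-1)^3 - 4*(s-1)^2 - 2*(s-1) + 4 ≤ 0 := by
  have hφ : phiR < 17/10 := by
    unfold phiR
    have : Real.sqrt 5 < 24/10 := by
      rw [Real.sqrt_lt' (by norm_num)]; norm_num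
    linarith
  have hne : {s : ℝ | phiR < s ∧ s < 2 ∧ cExpr2 s = cExpr3 s}.Nonempty := by
    have hcont : ContinuousOn (fun s : ℝ => (s-1)^3 - 4*(s-1)^2 - 2*(s-1) + 4) (Icc (17/10) (19/10)) := by
      fun_prop
    have := intermediate_value_Icc' (by norm_num) hcont
    obtain ⟨x, hx, hx0⟩ := this (show (0:ℝ) ∈ _ by constructor <;> norm_num)
    have hx1 : phiR < x := by linarith [hx.1]
    have hx2 : x < 2 := by linarith [hx.2]
    exact ⟨x, hx1, hx2, eq_of_h hx1 hx2.le hx0⟩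
  obtain ⟨x, ⟨hx1, hx2, hx3⟩, hx⟩ := exists_lt_of_csInf_lt hne h
  have := h_of_eq hx1 hx2.le hx3
  have h1 := (phi_lt_iff hx1).1
  nlinarith [mul_pos (sub_pos.2 hx) (sub_pos.2 h1), sq_nonneg (s - x), mul_nonneg (sub_nonneg.2 hx.le) (sub_nonneg.2 h2), mul_pos (sub_pos.2 hx) (sub_pos.2 hx2), mul_pos (mul_pos (sub_pos.2 hx) (sub_pos.2 h1)) (sub_pos.2 hx2), mul_nonneg (mul_nonneg (sub_nonneg.2 hx.le) (sub_nonneg.2 h2)) (sub_pos.2 h1).le, mul_nonneg (mul_nonneg (sub_nonneg.2 hx.le) (sub_nonneg.2 h2)) (sub_nonneg.2 h2)]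

lemma cFun_spec {s : ℝ} (hs : phiR < s) (h2 : s ≤ 2) : 0 < cFun s ∧ cFun s ≤ 1 ∧
    ∀ a, (s^2-1)*(s-1) ≤ a → 0 ≤ Qd s (cFun s) a := by
  obtain ⟨g1, g2⟩ := phi_lt_iff hs
  have hq : 0 < s^2-1 := by nlinarith
  unfold cFun
  rw [if_neg (not_le.2 hs)]
  split_ifs with h
  · obtain ⟨e1, e2⟩ := cE2_spec g1
    have e3 := cE2_le hs
    refine ⟨e1, e3, fun a _ => ?_⟩
    have hr2 : Real.sqrt (s*(s^2-1))^2 = s*(s^2-1) := Real.sq_sqrt (by positivity)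
    have hd := disc_eq s (cExpr2 s)
    rw [e2] at hd
    set c := cExpr2 s
    set r := Real.sqrt (s*(s^2-1))
    have hA : 0 < 2*s - c*(s-1) := by nlinarith
    have : 4*(2*s - c*(s-1)) * Qd s c a = (2*(2*s - c*(s-1))*a + (2*(s^2-1)*c - 2*s*(s^2+1)))^2 := by
      unfold Qd
      linear_combination -hd - 16*s^2*hr2
    have h4 : 0 ≤ 4*(2*s - c*(s-1)) * Qd s c a := by rw [this]; positivity
    exact nonneg_of_mul_nonneg_right h4 (by positivity)
  · obtain ⟨f1, f2, f3⟩ := cE3_spec g1 h2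
    refine ⟨f1, f2, fun a ha => ?_⟩
    have hh := sHat_spec hs h2 (not_le.1 h)
    have h0 := Qd_a0 s (cExpr3 s)
    rw [f3] at h0
    set c := cExpr3 s
    have ha' : Qd s c ((s^2-1)*(s-1)) = 0 := by rw [h0]; ring
    have hA : 0 < 2*s - c*(s-1) := by nlinarith
    have hw : 0 < (3-s)*(s+1) := mul_pos (by linarith) (by linarith)
    have h6 : c*(s+1) ≤ (2*s - c*(s-1))*(s-1)^2 := by
      have : ((3-s)*(s+1)) * (c*(s+1) - (2*s - c*(s-1))*(s-1)^2) ≤ 0 := by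
        have e : ((3-s)*(s+1)) * (c*(s+1) - (2*s - c*(s-1))*(s-1)^2)
          = 2*s*((s-1)^3 - 4*(s-1)^2 - 2*(s-1) + 4) := by
          linear_combination ((s+1)+(s-1)^3)*f3
        rw [e]
        exact mul_nonpos_of_nonneg_of_nonpos (by linarith) hh
      have := nonpos_of_mul_nonpos_right this hw
      linarith
    set a0 := (s^2-1)*(s-1) with ha0
    have ha0p : 0 < a0 := mul_pos hq (by linarith)
    have e : a0 * Qd s c a = (a - a0) * ((2*s - c*(s-1))*a0*a - c*(s+1)*(s^2-1)^2) := by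
      unfold Qd at ha' ⊢
      linear_combination a * ha'
    have h7 : 0 ≤ (2*s - c*(s-1))*a0*a - c*(s+1)*(s^2-1)^2 := by
      have : c*(s+1)*(s^2-1)^2 ≤ (2*s - c*(s-1))*(s-1)^2*(s^2-1)^2 :=
        mul_le_mul_of_nonneg_right h6 (sq_nonneg _)
      have h8 : (2*s - c*(s-1))*a0*a0 ≤ (2*s - c*(s-1))*a0*a :=
        mul_le_mul_of_nonneg_left ha (by positivity)
      rw [ha0] at h8 ⊢
      nlinarith
    have : 0 ≤ a0 * Qd s c a := by rw [e]; exact mul_nonneg (by linarith) h7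
    exact nonneg_of_mul_nonneg_right this ha0p

lemma core {s al be : ℝ} (hs : phiR < s) (h2 : s ≤ 2) (ha : 0 ≤ al) (ha' : s*al ≤ 1)
    (hb' : s*be ≤ 1) (hc : (s^2-1)^2 ≤ (s^2*al+1)*(s^2*be+1)) :
    2*(1-al) ≤ cFun s * (s*(1-al*be) + be - al) := by
  obtain ⟨c0, c1, hQ⟩ := cFun_spec hs h2
  obtain ⟨g1, g2⟩ := phi_lt_iff hs
  set c := cFun s
  have hq : 0 < s^2-1 := by nlinarith
  set a := s^2*al+1 with hadef
  have hap : 0 < a := by positivity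
  have haa : (s^2-1)*(s-1) ≤ a := by
    have : s^2*be+1 ≤ s+1 := by nlinarith
    have h3 : a*(s^2*be+1) ≤ a*(s+1) := mul_le_mul_of_nonneg_left this hap.le
    have h4 : ((s^2-1)*(s-1))*(s+1) ≤ a*(s+1) := by nlinarith
    exact le_of_mul_le_mul_right h4 (by linarith)
  have hq' := hQ a haa
  -- a * s^3 * (target difference) = Q + c (s+1-a) (a b - q^2)
  have e : a * s^3 * (c * (s*(1-al*be) + be - al) - 2*(1-al)) =
      Qd s c a + c*(s*(1-s*al))*(a*(s^2*be+1) - (s^2-1)^2) := by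
    unfold Qd
    simp only [hadef]
    ring
  have : 0 ≤ a * s^3 * (c * (s*(1-al*be) + be - al) - 2*(1-al)) := by
    rw [e]
    apply add_nonneg hq'
    apply mul_nonneg
    · apply mul_nonneg c0.le; apply mul_nonneg <;> linarith
    · linarith
  have := nonneg_of_mul_nonneg_right this (by positivity)
  linarith

lemma scal1 {s al be A B w : ℝ} (hs : phiR < s) (h2 : s ≤ 2) (ha : 0 ≤ al) (ha' : s*al ≤ 1)
    (hb : 0 ≤ be) (hb' : s*be ≤ 1) (hc : (s^2-1)^2 ≤ (s^2*al+1)*(s^2*be+1))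
    (hAB : A + B ≤ 2) (hwA : w ≤ A) (hle : A ≤ B)
    (hw : w * (s*(1-al*be)) ≤ A*(1-be) + B*(1-al)) : w ≤ cFun s := by
  obtain ⟨c0, c1, -⟩ := cFun_spec hs h2
  obtain ⟨g1, g2⟩ := phi_lt_iff hs
  have k1 := core hs h2 ha ha' hb' hc
  have k2 := core hs h2 hb hb' ha' (by linarith)
  set c := cFun s
  have al1 : al < 1 := by nlinarith
  have be1 : be < 1 := by nlinarith
  have hD : 0 < s*(1-al*be) := by
    apply mul_pos (by linarith); nlinarith
  have hA1 : A ≤ 1 := by linarith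
  have hw2 : w * (s*(1-al*be)) ≤ 2*(1-al) + A*(al-be) := by nlinarith
  rcases le_total al be with h | h
  · have h3 : w * (s*(1-al*be) + be - al) ≤ c * (s*(1-al*be) + be - al) := by nlinarith
    exact le_of_mul_le_mul_right h3 (by linarith)
  · have h3 : w * (s*(1-al*be)) ≤ c * (s*(1-al*be)) := by nlinarith
    exact le_of_mul_le_mul_right h3 hD

lemma scal2 {s al be A B w : ℝ} (hs : phiR < s) (h2 : s ≤ 2) (ha : 0 ≤ al) (ha' : s*al ≤ 1)
    (hb : 0 ≤ be) (hb' : s*be ≤ 1) (hc : (s^2-1)^2 ≤ (s^2*al+1)*(s^2*be+1))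
    (hAB : A + B ≤ 2) (hwA : w ≤ A) (hwB : w ≤ B)
    (hw : w * (s*(1-al*be)) ≤ A*(1-be) + B*(1-al)) : w ≤ cFun s := by
  rcases le_total A B with h | h
  · exact scal1 hs h2 ha ha' hb hb' hc hAB hwA h hw
  · exact scal1 hs h2 hb hb' ha ha' (by linarith) (by linarith) hwB h
      (by rw [mul_comm be al]; linarith)

lemma carath3 {T : Set E2} {x : E2} (hx : x ∈ convexHull ℝ T) :
    ∃ (w : Fin 3 → ℝ) (z : Fin 3 → E2), w ∈ stdSimplex ℝ (Fin 3) ∧ (∀ i, z i ∈ T) ∧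
      ∑ i, w i • z i = x := by
  obtain ⟨ι, _, z, w, hz, hai, hw, hw1, hx⟩ := eq_pos_convex_span_of_mem_convexHull hx
  have hcard : Fintype.card ι ≤ 3 := by
    have h1 := hai.card_le_finrank_succ
    have h2 := Submodule.finrank_le (vectorSpan ℝ (Set.range z))
    have h3 : Module.finrank ℝ E2 = 2 := by simp
    omega
  have hne : Nonempty ι := by
    by_contra h
    rw [not_nonempty_iff] at h
    simp at hw1
  obtain ⟨e⟩ : Nonempty (ι ↪ Fin 3) := Function.Embedding.nonempty_of_card_le (by simpa using hcard)
  obtain ⟨i0⟩ := hne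
  refine ⟨Function.extend e w 0, Function.extend e z (fun _ => z i0), ⟨?_, ?_⟩, ?_, ?_⟩
  · intro j
    by_cases h : ∃ i, e i = j
    · obtain ⟨i, rfl⟩ := h
      rw [e.injective.extend_apply]; exact (hw i).le
    · rw [Function.extend_apply' _ _ _ h]; simp
  · rw [← hw1]
    symm
    apply Fintype.sum_of_injective e e.injective
    · intro j hj
      rw [Function.extend_apply' _ _ _ hj]; simp
    · intro i
      rw [e.injective.extend_apply]
  · intro j
    by_cases h : ∃ i, e i = j
    · obtain ⟨i, rfl⟩ := h
      rw [e.injective.extend_apply]; exact hz ⟨i, rfl⟩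
    · rw [Function.extend_apply' _ _ _ h]; exact hz ⟨i0, rfl⟩
  · rw [← hx]
    symm
    apply Fintype.sum_of_injective e e.injective
    · intro j hj
      rw [Function.extend_apply' _ _ _ hj]; simp
    · intro i
      rw [e.injective.extend_apply, e.injective.extend_apply]

lemma hull_compact {T : Set E2} (hT : IsCompact T) : IsCompact (convexHull ℝ T) := by
  have h : convexHull ℝ T = (fun q : (Fin 3 → ℝ) × (Fin 3 → E2) => ∑ i, q.1 i • q.2 i) ''
      (stdSimplex ℝ (Fin 3) ×ˢ Set.pi univ (fun _ => T)) := by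
    ext x
    constructor
    · intro hx
      obtain ⟨w, z, hw, hz, rfl⟩ := carath3 hx
      exact ⟨(w, z), ⟨hw, fun i _ => hz i⟩, rfl⟩
    · rintro ⟨⟨w, z⟩, ⟨hw, hz⟩, rfl⟩
      exact (convex_convexHull ℝ T).sum_mem (fun i _ => hw.1 i) hw.2
        (fun i _ => subset_convexHull ℝ T (hz i trivial))
  rw [h]
  apply IsCompact.image
  · exact (isCompact_stdSimplex ℝ (Fin 3)).prod (isCompact_univ_pi (fun _ => hT))
  · fun_prop

lemma exists_inner (f : StrongDual ℝ E2) : ∃ t : E2, ∀ x, f x = inner ℝ x t := by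
  refine ⟨(InnerProductSpace.toDual ℝ E2).symm f, fun x => ?_⟩
  rw [real_inner_comm, InnerProductSpace.toDual_symm_apply]

lemma sep_unit {C : Set E2} (hC : Convex ℝ C) (hcl : IsClosed C) (h0 : 0 ∈ C) {z : E2}
    (hz : z ∉ C) : ∃ y : E2, (∀ x ∈ C, inner ℝ x y ≤ (1:ℝ)) ∧ 1 < (inner ℝ z y : ℝ) := by
  obtain ⟨f, u, h1, h2⟩ := geometric_hahn_banach_closed_point hC hcl hz
  obtain ⟨t, ht⟩ := exists_inner f
  have hu : 0 < u := by simpa using h1 0 h0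
  refine ⟨u⁻¹ • t, fun x hx => ?_, ?_⟩
  · have := h1 x hx
    rw [ht] at this
    rw [inner_smul_right, inv_mul_le_iff₀ hu]; linarith
  · rw [ht] at h2
    rw [inner_smul_right, lt_inv_mul_iff₀ hu]; linarith

section body
variable {K : Set E2}

lemma s_pos (hK : IsConvexBody K) (hc : MinkCentered K) : 0 < minkAsym K := by
  have h0 : 0 ≤ minkAsym K := Real.sInf_nonneg (fun x hx => hx.1.le)
  rcases h0.lt_or_eq with h | h
  · exact h
  · exfalso
    have h1 : K ⊆ {0} := by
      intro x hx
      have := hc hx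
      rw [← h] at this
      obtain ⟨y, -, rfl⟩ := this
      simp
    have := interior_mono h1
    rw [interior_singleton] at this
    obtain ⟨x, hx⟩ := hK.2.2
    exact this hx

lemma neg_mem (hK : IsConvexBody K) (hc : MinkCentered K) {x : E2} (hx : x ∈ K) :
    -((minkAsym K)⁻¹ • x) ∈ K := by
  obtain ⟨y, hy, rfl⟩ := hc hx
  have := (s_pos hK hc).ne'
  simp only [smul_smul, inv_mul_cancel₀ this, one_smul]
  exact hy

lemma zero_int (hK : IsConvexBody K) (hc : MinkCentered K) : (0 : E2) ∈ interior K := by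
  obtain ⟨x, hx⟩ := hK.2.2
  have h1 := neg_mem hK hc (interior_subset hx)
  have hs := s_pos hK hc
  apply hK.1.openSegment_interior_self_subset_interior hx h1
  set s := minkAsym K
  refine ⟨1/(s+1), s/(s+1), by positivity, by positivity, by field_simp; ring, ?_⟩
  rw [smul_neg, smul_smul]
  have : s/(s+1) * s⁻¹ = 1/(s+1) := by field_simp
  rw [this]; simp

lemma polar_compact (hK : IsConvexBody K) (hc : MinkCentered K) : IsCompact (polarBody K) := by
  apply Metric.isCompact_of_isClosed_isBounded
  · have : polarBody K = ⋂ x ∈ K, {y | (inner ℝ x y : ℝ) ≤ 1} := by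
      ext y; simp [polarBody]
    rw [this]
    apply isClosed_biInter
    intro x _
    exact isClosed_le (by fun_prop) continuous_const
  · obtain ⟨ε, hε, hb⟩ := Metric.isOpen_iff.1 isOpen_interior _ (zero_int hK hc)
    rw [isBounded_iff_forall_norm_le]
    refine ⟨2/ε, fun y hy => ?_⟩
    by_cases h0 : ‖y‖ = 0
    · rw [h0]; positivity
    have hp : 0 < ‖y‖ := lt_of_le_of_ne (norm_nonneg _) (Ne.symm h0)
    have : (ε/2/‖y‖) • y ∈ K := by
      apply interior_subset; apply hb
      rw [mem_ball_zero_iff, norm_smul, Real.norm_of_nonneg (by positivity)]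
      field_simp
      norm_num
    have h := hy _ this
    rw [real_inner_smul_left, real_inner_self_eq_norm_sq] at h
    rw [le_div_iff₀ hε]
    field_simp at h
    linarith

lemma bipolar (hK : IsConvexBody K) (hc : MinkCentered K) {z : E2}
    (h : ∀ y ∈ polarBody K, (inner ℝ z y : ℝ) ≤ 1) : z ∈ K := by
  by_contra hz
  obtain ⟨y, hy, hy1⟩ := sep_unit hK.1 hK.2.1.isClosed (interior_subset (zero_int hK hc)) hz
  linarith [h y hy]

lemma polar_ge (hK : IsConvexBody K) (hc : MinkCentered K) {x y : E2} (hx : x ∈ K)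
    (hy : y ∈ polarBody K) : -(inner ℝ x y : ℝ) ≤ minkAsym K := by
  have := hy _ (neg_mem hK hc hx)
  have hs := s_pos hK hc
  rw [inner_neg_left, real_inner_smul_left, ← mul_neg, inv_mul_le_iff₀ hs] at this
  linarith

def touch (K : Set E2) : Set E2 :=
  {y | y ∈ polarBody K ∧ ∃ p ∈ K, -(minkAsym K • p) ∈ K ∧ (inner ℝ p y : ℝ) = 1}

lemma touch_compact (hK : IsConvexBody K) (hc : MinkCentered K) : IsCompact (touch K) := by
  have : touch K = Prod.fst '' ((polarBody K ×ˢ K) ∩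
      {q : E2 × E2 | -(minkAsym K • q.2) ∈ K ∧ (inner ℝ q.2 q.1 : ℝ) = 1}) := by
    ext y
    constructor
    · rintro ⟨h1, p, h2, h3, h4⟩
      exact ⟨(y, p), ⟨⟨h1, h2⟩, h3, h4⟩, rfl⟩
    · rintro ⟨⟨y, p⟩, ⟨⟨h1, h2⟩, h3, h4⟩, rfl⟩
      exact ⟨h1, p, h2, h3, h4⟩
  rw [this]
  apply IsCompact.image _ continuous_fst
  apply ((polar_compact hK hc).prod hK.2.1).inter_right
  apply IsClosed.inter
  · exact hK.2.1.isClosed.preimage (f := fun q : E2 × E2 => -(minkAsym K • q.2)) (by fun_prop)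
  · exact isClosed_eq (by fun_prop) continuous_const

lemma zero_mem_hull (hK : IsConvexBody K) (hc : MinkCentered K) :
    (0 : E2) ∈ convexHull ℝ (touch K) := by
  by_contra hcon
  have hs := s_pos hK hc
  have hL := polar_compact hK hc
  obtain ⟨f, d, hd0, hd⟩ := geometric_hahn_banach_point_closed (convex_convexHull ℝ _)
    (hull_compact (touch_compact hK hc)).isClosed hcon
  obtain ⟨t, ht⟩ := exists_inner f
  rw [map_zero] at hd0
  have hT : ∀ y ∈ touch K, d < inner ℝ y t := fun y hy => by
    rw [← ht]; exact hd y (subset_convexHull ℝ _ hy)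
  have hge := fun x hx y hy => @polar_ge K hK hc x y hx hy
  set s := minkAsym K with hsdef
  -- bound
  obtain ⟨M, hM⟩ := hL.exists_bound_of_continuousOn (f := fun y : E2 => (inner ℝ y t : ℝ)) (by fun_prop)
  have hη : ∃ η > 0, ∀ y ∈ polarBody K, ∀ x ∈ K, (inner ℝ y t : ℝ) ≤ d →
      -(inner ℝ x y : ℝ) ≤ s - η := by
    have hZ : IsCompact ((polarBody K ×ˢ K) ∩ {q : E2 × E2 | (inner ℝ q.1 t : ℝ) ≤ d}) :=
      (hL.prod hK.2.1).inter_right (isClosed_le (by fun_prop) continuous_const)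
    rcases ((polarBody K ×ˢ K) ∩ {q : E2 × E2 | (inner ℝ q.1 t : ℝ) ≤ d}).eq_empty_or_nonempty with he | hne
    · refine ⟨1, one_pos, fun y hy x hx hyt => ?_⟩
      have : (y, x) ∈ ((polarBody K ×ˢ K) ∩ {q : E2 × E2 | (inner ℝ q.1 t : ℝ) ≤ d}) := ⟨⟨hy, hx⟩, hyt⟩
      rw [he] at this
      exact absurd this (by simp)
    · obtain ⟨⟨y0, x0⟩, ⟨⟨hy0, hx0⟩, hyt0⟩, hmax⟩ := hZ.exists_isMaxOn hne
        (f := fun q : E2 × E2 => -(inner ℝ q.2 q.1 : ℝ)) (by fun_prop)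
      refine ⟨s + inner ℝ x0 y0, ?_, fun y hy x hx hyt => ?_⟩
      · have h1 := hge x0 hx0 y0 hy0
        rcases h1.lt_or_eq with h | h
        · linarith
        · exfalso
          have : y0 ∈ touch K := by
            refine ⟨hy0, -(s⁻¹ • x0), neg_mem hK hc hx0, ?_, ?_⟩
            · rw [← hsdef, smul_neg, neg_neg, smul_smul, mul_inv_cancel₀ hs.ne', one_smul]; exact hx0
            · rw [inner_neg_left, real_inner_smul_left, ← mul_neg, h, inv_mul_cancel₀ hs.ne']
          have h2 := hT y0 this
          simp only [Set.mem_ofPred_eq] at hyt0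
          linarith
      · have h3 : (y, x) ∈ ((polarBody K ×ˢ K) ∩ {q : E2 × E2 | (inner ℝ q.1 t : ℝ) ≤ d}) := ⟨⟨hy, hx⟩, hyt⟩
        have := hmax h3
        simp only [Set.mem_ofPred_eq] at this
        linarith
  obtain ⟨η, hη0, hη⟩ := hη
  have hX : 0 < (1+s)*|M| + d := by positivity
  obtain ⟨ε, hε0, hε1, hε2⟩ : ∃ ε > 0, ε * ((1+s)*|M| + d) ≤ η ∧ ε * d < s := by
    refine ⟨min (η / ((1+s)*|M| + d)) (s/(2*d)), by positivity, ?_, ?_⟩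
    · rw [← le_div_iff₀ hX]; exact min_le_left _ _
    · have := min_le_right (η / ((1+s)*|M| + d)) (s/(2*d))
      have h2 : min (η / ((1+s)*|M| + d)) (s/(2*d)) * d ≤ s/(2*d) * d := mul_le_mul_of_nonneg_right this hd0.le
      have h3 : s/(2*d) * d = s/2 := by field_simp
      linarith
  set ρ := s - ε*d with hρ
  have hρ0 : 0 < ρ := by linarith
  have hρs : ρ < s := by have := mul_pos hε0 hd0; linarith
  have hmem : ρ ∈ {ρ : ℝ | 0 < ρ ∧ ∃ c : E2, K - {c} ⊆ ρ • ({c} - K)} := by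
    refine ⟨hρ0, -(ε • t), ?_⟩
    rintro _ ⟨x, hx, c, hc', rfl⟩
    rw [mem_singleton_iff] at hc'
    subst hc'
    have hk : ρ⁻¹ • ((1+ρ) • (-(ε • t)) - x) ∈ K := by
      apply bipolar hK hc
      intro y hy
      rw [real_inner_smul_left, inv_mul_le_iff₀ hρ0, inner_sub_left, real_inner_smul_left,
        inner_neg_left, real_inner_smul_left, real_inner_comm]
      have hMy := hM y hy
      rw [Real.norm_eq_abs] at hMy
      have hMy2 : -(inner ℝ y t : ℝ) ≤ |M| := (neg_le_abs _).trans (hMy.trans (le_abs_self M))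
      rcases le_or_gt (inner ℝ y t : ℝ) d with h | h
      · have h1 := hη y hy x hx h
        have h4 : (1+ρ)*(ε * -(inner ℝ y t : ℝ)) ≤ (1+s)*(ε * |M|) := by
          have : (1+ρ)*(ε * -(inner ℝ y t : ℝ)) ≤ (1+ρ)*(ε * |M|) := by gcongr
          have : (1+ρ)*(ε * |M|) ≤ (1+s)*(ε * |M|) := by gcongr
          linarith
        linarith
      · have h1 := hge x hx y hy
        have h4 : ε * d ≤ ε * (inner ℝ y t : ℝ) := by gcongr
        have h5 : 0 ≤ ρ * (ε * (inner ℝ y t : ℝ)) := by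
          have : 0 < ε * (inner ℝ y t : ℝ) := mul_pos hε0 (by linarith)
          positivity
        linarith
    refine ⟨-(ε • t) - ρ⁻¹ • ((1+ρ) • (-(ε • t)) - x), ⟨_, rfl, _, hk, rfl⟩, ?_⟩
    simp only [smul_sub, smul_smul, mul_inv_cancel₀ hρ0.ne', one_smul, add_smul]
    abel
  have : s ≤ ρ := csInf_le ⟨0, fun x hx => hx.1.le⟩ hmem
  linarith

lemma hull_sep (hK : IsConvexBody K) (hc : MinkCentered K) {x : E2} {c : ℝ} (h0 : 0 < c)
    (hx : x ∉ c • convexHull ℝ (K ∪ -K)) :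
    ∃ u, u ∈ polarBody K ∧ -u ∈ polarBody K ∧ c < inner ℝ x u := by
  have h0K := interior_subset (zero_int hK hc)
  have hz : c⁻¹ • x ∉ convexHull ℝ (K ∪ -K) := by
    intro h
    exact hx ⟨_, h, by simp [smul_smul, mul_inv_cancel₀ h0.ne']⟩
  obtain ⟨u, h1, h2⟩ := sep_unit (convex_convexHull ℝ _)
    (hull_compact (hK.2.1.union hK.2.1.neg)).isClosed (subset_convexHull ℝ _ (Or.inl h0K)) hz
  refine ⟨u, fun y hy => h1 y (subset_convexHull ℝ _ (Or.inl hy)), fun y hy => ?_, ?_⟩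
  · have := h1 (-y) (subset_convexHull ℝ _ (Or.inr (by simpa using hy)))
    rw [inner_neg_left] at this
    rw [inner_neg_right]; exact this
  · rw [real_inner_smul_left, lt_inv_mul_iff₀ h0] at h2; linarith

lemma harm_iff {x : E2} (hx : x ∈ polarBody ((2:ℝ)⁻¹ • (polarBody K - polarBody K)))
    {y z : E2} (hy : y ∈ polarBody K) (hz : z ∈ polarBody K) :
    (inner ℝ x y : ℝ) - inner ℝ x z ≤ 2 := by
  have := hx ((2:ℝ)⁻¹ • (y - z)) ⟨y - z, ⟨y, hy, z, hz, rfl⟩, rfl⟩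
  rw [real_inner_comm, real_inner_smul_right, inner_sub_right] at this
  linarith

lemma gamma_lower (hK : IsConvexBody K) (hc : MinkCentered K) {ρ : ℝ} (hρ : 0 < ρ)
    (h : polarBody ((2:ℝ)⁻¹ • (polarBody K - polarBody K)) ⊆ ρ • convexHull ℝ (K ∪ -K)) :
    2 / (minkAsym K + 1) ≤ ρ := by
  have hs := s_pos hK hc
  obtain ⟨a, ha, p, hp, hsp, hpa⟩ : (touch K).Nonempty :=
    convexHull_nonempty_iff.1 ⟨0, zero_mem_hull hK hc⟩
  have hge := fun x hx => @polar_ge K hK hc x a hx ha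
  set s := minkAsym K
  have h1 : (2*s/(s+1)) • p ∈ polarBody ((2:ℝ)⁻¹ • (polarBody K - polarBody K)) := by
    rintro _ ⟨_, ⟨y, hy, z, hz, rfl⟩, rfl⟩
    have e1 := hy p hp
    have e2 := hz _ hsp
    rw [inner_neg_left, real_inner_smul_left] at e2
    simp only
    rw [real_inner_comm, real_inner_smul_right, real_inner_smul_left, inner_sub_right]
    have : s * ((inner ℝ p y : ℝ) - inner ℝ p z) ≤ s + 1 := by nlinarith
    calc _ = (s * ((inner ℝ p y : ℝ) - inner ℝ p z)) / (s+1) := by field_simp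
      _ ≤ 1 := by rw [div_le_one (by positivity)]; exact this
  obtain ⟨q, hq, hqe⟩ := h h1
  have h2 : (inner ℝ q a : ℝ) ≤ s := by
    have hsub : convexHull ℝ (K ∪ -K) ⊆ {q : E2 | (inner ℝ q a : ℝ) ≤ s} := by
      apply convexHull_min
      · rintro y (hy | hy)
        · have h3 := ha y hy
          have h4 := hge _ hsp
          rw [inner_neg_left, real_inner_smul_left, hpa] at h4
          have h5 := hge p hp
          have h6 := ha _ hsp
          rw [inner_neg_left, real_inner_smul_left, hpa] at h6
          have h7 := hge y hy
          -- y ≤ 1 ≤ s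
          have h1s : 1 ≤ s := by
            have e3 := ha _ (neg_mem hK hc (neg_mem hK hc hp))
            rw [smul_neg, neg_neg, real_inner_smul_left, real_inner_smul_left, hpa, mul_one] at e3
            by_contra hlt
            push Not at hlt
            have : 1 < s⁻¹ := (one_lt_inv₀ hs).2 hlt
            have e4 : s⁻¹ * s⁻¹ ≤ 1 := e3
            nlinarith
          simp only [Set.mem_ofPred_eq]; linarith
        · have := hge _ hy
          rw [inner_neg_left, neg_neg] at this; exact this
      · intro y hy z hz α β hα hβ hab
        simp only [Set.mem_ofPred_eq, inner_add_left, real_inner_smul_left] at *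
        nlinarith
    exact hsub hq
  have h3 : ρ * (inner ℝ q a : ℝ) = 2*s/(s+1) := by
    rw [← real_inner_smul_left]
    have : ρ • q = (2*s/(s+1)) • p := hqe
    rw [this, real_inner_smul_left, hpa, mul_one]
  have h4 : 2*s/(s+1) ≤ ρ * s := by rw [← h3]; gcongr
  have h5 : 2/(s+1) * s ≤ ρ * s := by
    calc _ = 2*s/(s+1) := by ring
      _ ≤ _ := h4
  exact le_of_mul_le_mul_right h5 hs

end body

lemma pairC {s l1 l2 l3 m12 m21 m13 m31 m23 m32 : ℝ} (hs : phiR < s)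
    (hl1 : 0 ≤ l1) (hl2 : 0 ≤ l2) (hl3 : 0 ≤ l3) (hl : l1 + l2 + l3 = 1)
    (c1 : l1 + l2*m21 + l3*m31 = 0) (c2 : l1*m12 + l2 + l3*m32 = 0) (c3 : l1*m13 + l2*m23 + l3 = 0)
    (b12 : -1 ≤ s*m12) (b21 : -1 ≤ s*m21) (b13 : -1 ≤ s*m13) (b31 : -1 ≤ s*m31)
    (b23 : -1 ≤ s*m23) (b32 : -1 ≤ s*m32) :
    0 < l1 ∧ s ≤ 2 ∧ m12 ≤ 0 ∧ m21 ≤ 0 ∧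
      (s^2-1)^2 ≤ (s^2*(-m12)+1)*(s^2*(-m21)+1) := by
  obtain ⟨g1, g2⟩ := phi_lt_iff hs
  have k1 : s*l1 ≤ l2 + l3 := by
    linear_combination s*c1 + mul_le_mul_of_nonneg_left b21 hl2 + mul_le_mul_of_nonneg_left b31 hl3
  have k2 : s*l2 ≤ l1 + l3 := by
    linear_combination s*c2 + mul_le_mul_of_nonneg_left b12 hl1 + mul_le_mul_of_nonneg_left b32 hl3
  have k3 : s*l3 ≤ l1 + l2 := by
    linear_combination s*c3 + mul_le_mul_of_nonneg_left b13 hl1 + mul_le_mul_of_nonneg_left b23 hl2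
  have hl1p : 0 < l1 := by nlinarith
  have hl2p : 0 < l2 := by nlinarith
  have hl3p : 0 < l3 := by nlinarith
  have hs2 : s ≤ 2 := by nlinarith
  have j1 : (s-1)*l3 ≤ l2 := by
    have : (s+1)*((s-1)*l3) ≤ (s+1)*l2 := by nlinarith
    exact le_of_mul_le_mul_left this (by linarith)
  have j2 : (s-1)*l3 ≤ l1 := by
    have : (s+1)*((s-1)*l3) ≤ (s+1)*l1 := by nlinarith
    exact le_of_mul_le_mul_left this (by linarith)
  have i1 : s*l2 - l3 ≤ s*(-m12)*l1 := by
    linear_combination s*c2 + mul_le_mul_of_nonneg_left b32 hl3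
  have i2 : s*l1 - l3 ≤ s*(-m21)*l2 := by
    linear_combination s*c1 + mul_le_mul_of_nonneg_left b31 hl3
  have n1 : m12 ≤ 0 := by
    by_contra h
    push Not at h
    have : 0 < s*m12*l1 := by positivity
    nlinarith
  have n2 : m21 ≤ 0 := by
    by_contra h
    push Not at h
    have : 0 < s*m21*l2 := by positivity
    nlinarith
  refine ⟨hl1p, hs2, n1, n2, ?_⟩
  have q1 : (s^2-1)*l2 ≤ (s^2*(-m12)+1)*l1 := by nlinarith
  have q2 : (s^2-1)*l1 ≤ (s^2*(-m21)+1)*l2 := by nlinarith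
  have hq : 0 < s^2-1 := by nlinarith
  have : (s^2-1)^2*(l1*l2) ≤ ((s^2*(-m12)+1)*(s^2*(-m21)+1))*(l1*l2) := by
    calc _ = ((s^2-1)*l2)*((s^2-1)*l1) := by ring
      _ ≤ ((s^2*(-m12)+1)*l1)*((s^2*(-m21)+1)*l2) := by
        apply mul_le_mul q1 q2 (by positivity)
        exact le_trans (by positivity) q1
      _ = _ := by ring
  exact le_of_mul_le_mul_right this (by positivity)

/-- configuration -/
def Config (s : ℝ) (a1 a2 a3 p1 p2 p3 : E2) (l1 l2 l3 : ℝ) : Prop :=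
  0 ≤ l1 ∧ 0 ≤ l2 ∧ 0 ≤ l3 ∧ l1 + l2 + l3 = 1 ∧ l1 • a1 + l2 • a2 + l3 • a3 = 0 ∧
  (inner ℝ p1 a1 : ℝ) = 1 ∧ (inner ℝ p2 a2 : ℝ) = 1 ∧ (inner ℝ p3 a3 : ℝ) = 1 ∧
  -1 ≤ s * (inner ℝ p2 a1 : ℝ) ∧ -1 ≤ s * (inner ℝ p1 a2 : ℝ) ∧
  -1 ≤ s * (inner ℝ p3 a1 : ℝ) ∧ -1 ≤ s * (inner ℝ p1 a3 : ℝ) ∧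
  -1 ≤ s * (inner ℝ p3 a2 : ℝ) ∧ -1 ≤ s * (inner ℝ p2 a3 : ℝ)

lemma Config.pair {s : ℝ} {a1 a2 a3 p1 p2 p3 : E2} {l1 l2 l3 : ℝ} (hs : phiR < s)
    (h : Config s a1 a2 a3 p1 p2 p3 l1 l2 l3) :
    0 < l1 ∧ s ≤ 2 ∧ (inner ℝ p2 a1 : ℝ) ≤ 0 ∧ (inner ℝ p1 a2 : ℝ) ≤ 0 ∧
      (s^2-1)^2 ≤ (s^2*(-(inner ℝ p2 a1 : ℝ))+1)*(s^2*(-(inner ℝ p1 a2 : ℝ))+1) := by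
  obtain ⟨h1, h2, h3, h4, h5, e1, e2, e3, b1, b2, b3, b4, b5, b6⟩ := h
  have c : ∀ p : E2, l1 * (inner ℝ p a1 : ℝ) + l2 * (inner ℝ p a2 : ℝ) + l3 * (inner ℝ p a3 : ℝ) = 0 := by
    intro p
    have := congrArg (fun v => (inner ℝ p v : ℝ)) h5
    simpa [inner_add_right, real_inner_smul_right] using this
  have c1 := c p1
  have c2 := c p2
  have c3 := c p3
  rw [e1, mul_one] at c1
  rw [e2, mul_one] at c2
  rw [e3, mul_one] at c3
  exact pairC hs h1 h2 h3 h4 c1 c2 c3 b1 b2 b3 b4 b5 b6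

lemma Config.rot {s : ℝ} {a1 a2 a3 p1 p2 p3 : E2} {l1 l2 l3 : ℝ}
    (h : Config s a1 a2 a3 p1 p2 p3 l1 l2 l3) : Config s a2 a3 a1 p2 p3 p1 l2 l3 l1 := by
  obtain ⟨h1, h2, h3, h4, h5, e1, e2, e3, b1, b2, b3, b4, b5, b6⟩ := h
  exact ⟨h2, h3, h1, by linarith, by rw [← h5]; abel, e2, e3, e1, b5, b6, b2, b1, b4, b3⟩

lemma Config.swap {s : ℝ} {a1 a2 a3 p1 p2 p3 : E2} {l1 l2 l3 : ℝ}
    (h : Config s a1 a2 a3 p1 p2 p3 l1 l2 l3) : Config s a2 a1 a3 p2 p1 p3 l2 l1 l3 := by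
  obtain ⟨h1, h2, h3, h4, h5, e1, e2, e3, b1, b2, b3, b4, b5, b6⟩ := h
  exact ⟨h2, h1, h3, by linarith, by rw [← h5]; abel, e2, e1, e3, b2, b1, b5, b6, b3, b4⟩

lemma Config.final {s : ℝ} {a1 a2 a3 p1 p2 p3 : E2} {l1 l2 l3 : ℝ} (hs : phiR < s)
    (h : Config s a1 a2 a3 p1 p2 p3 l1 l2 l3) {x u : E2} {A B ξ η : ℝ} (hξ : 0 ≤ ξ) (hη : 0 ≤ η)
    (hx : x = ξ • p1 - η • p2) (hA : (inner ℝ x a1 : ℝ) ≤ A) (hB : -(inner ℝ x a2 : ℝ) ≤ B)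
    (hAB : A + B ≤ 2) (hwA : (inner ℝ x u : ℝ) ≤ A) (hwB : (inner ℝ x u : ℝ) ≤ B)
    (u1 : s * (inner ℝ p1 u : ℝ) ≤ 1) (u2 : -1 ≤ s * (inner ℝ p2 u : ℝ)) :
    (inner ℝ x u : ℝ) ≤ cFun s := by
  obtain ⟨hl, h2, n1, n2, hq⟩ := h.pair hs
  obtain ⟨g1, g2⟩ := phi_lt_iff hs
  obtain ⟨-, -, -, -, -, e1, e2, -, b1, b2, -, -, -, -⟩ := h
  apply scal2 hs h2 (by linarith : 0 ≤ -(inner ℝ p2 a1 : ℝ)) (by linarith)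
    (by linarith : 0 ≤ -(inner ℝ p1 a2 : ℝ)) (by linarith) hq hAB hwA hwB
  subst hx
  simp only [inner_sub_left, real_inner_smul_left, e1, e2, mul_one] at *
  set al := -(inner ℝ p2 a1 : ℝ) with hal
  set be := -(inner ℝ p1 a2 : ℝ) with hbe
  have e3 : (inner ℝ p2 a1 : ℝ) = -al := by linarith
  have e4 : (inner ℝ p1 a2 : ℝ) = -be := by linarith
  rw [e3] at hA b1
  rw [e4] at hB b2
  have al0 : 0 ≤ al := by linarith
  have be0 : 0 ≤ be := by linarith
  have al1 : al ≤ 1 := by nlinarith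
  have be1 : be ≤ 1 := by nlinarith
  have hab : 0 ≤ 1 - al*be := by nlinarith
  have w1 : (ξ * (inner ℝ p1 u : ℝ) - η * (inner ℝ p2 u : ℝ)) * s ≤ ξ + η := by
    nlinarith
  calc _ = ((ξ * (inner ℝ p1 u : ℝ) - η * (inner ℝ p2 u : ℝ)) * s) * (1-al*be) := by ring
    _ ≤ (ξ + η)*(1-al*be) := mul_le_mul_of_nonneg_right w1 hab
    _ = (ξ - η * (-al))*(1-be) + (-(ξ*(-be) - η))*(1-al) := by ring
    _ ≤ _ := by
      apply add_le_add
      · exact mul_le_mul_of_nonneg_right hA (by linarith)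
      · exact mul_le_mul_of_nonneg_right hB (by linarith)

def cr (a b : E2) : ℝ := a 0 * b 1 - a 1 * b 0

lemma inner_coord (a b : E2) : (inner ℝ a b : ℝ) = a 0 * b 0 + a 1 * b 1 := by
  simp [PiLp.inner_apply, Fin.sum_univ_two]
  ring

lemma Config.crs {s : ℝ} {a1 a2 a3 p1 p2 p3 : E2} {l1 l2 l3 : ℝ} (hs : phiR < s)
    (h : Config s a1 a2 a3 p1 p2 p3 l1 l2 l3) :
    0 < cr a1 a2 * cr p1 p2 ∧ l1 * cr a1 a2 = l3 * cr a2 a3 := by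
  obtain ⟨hl, h2, n1, n2, hq⟩ := h.pair hs
  obtain ⟨g1, g2⟩ := phi_lt_iff hs
  obtain ⟨-, -, -, -, h5, e1, e2, -, b1, b2, -, -, -, -⟩ := h
  constructor
  · have : cr a1 a2 * cr p1 p2 = (inner ℝ p1 a1 : ℝ) * inner ℝ p2 a2 - inner ℝ p2 a1 * inner ℝ p1 a2 := by
      simp only [inner_coord, cr]; ring
    rw [this, e1, e2]
    have : -1 < (inner ℝ p2 a1 : ℝ) := by nlinarith
    have : -1 < (inner ℝ p1 a2 : ℝ) := by nlinarith
    nlinarith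
  · have k0 := congrArg (fun v : E2 => v 0) h5
    have k1 := congrArg (fun v : E2 => v 1) h5
    simp at k0 k1
    simp only [cr]
    linear_combination k0 * a2 1 - k1 * a2 0

lemma cone {p1 p2 p3 : E2} {κ : ℝ} (h1 : 0 < κ * cr p2 p3) (h2 : 0 < κ * cr p3 p1)
    (h3 : 0 < κ * cr p1 p2) (x : E2) (P : E2 → E2 → Prop)
    (hP : ∀ (i j : E2) (ξ η : ℝ), P i j → 0 ≤ ξ → 0 ≤ η → x = ξ • i - η • j → False)
    (h12 : P p1 p2) (h21 : P p2 p1) (h13 : P p1 p3) (h31 : P p3 p1) (h23 : P p2 p3) (h32 : P p3 p2) :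
    False := by
  have hrel : (κ * cr p2 p3) • p1 + (κ * cr p3 p1) • p2 + (κ * cr p1 p2) • p3 = 0 := by
    ext i; fin_cases i <;> simp [cr] <;> ring
  have hrep : ∃ y1 y2 y3 : ℝ, x = y1 • (κ * cr p2 p3) • p1 + y2 • (κ * cr p3 p1) • p2 + y3 • (κ * cr p1 p2) • p3 := by
    refine ⟨cr x p2 * κ / (κ * cr p1 p2) / (κ * cr p2 p3), cr p1 x * κ / (κ * cr p1 p2) / (κ * cr p3 p1), 0, ?_⟩
    rw [smul_smul, smul_smul, div_mul_cancel₀ _ h1.ne', div_mul_cancel₀ _ h2.ne']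
    have h3' := h3.ne'
    have : (κ * cr p1 p2) • x = (κ * cr p1 p2) • ((cr x p2 * κ / (κ * cr p1 p2)) • p1 + (cr p1 x * κ / (κ * cr p1 p2)) • p2) := by
      rw [smul_add, smul_smul, smul_smul, mul_div_cancel₀ _ h3', mul_div_cancel₀ _ h3']
      ext i; fin_cases i <;> simp [cr] <;> ring
    have := smul_right_injective E2 h3' this
    rw [zero_smul, add_zero]; exact this
  obtain ⟨y1, y2, y3, hx⟩ := hrep
  set m1 := κ * cr p2 p3
  set m2 := κ * cr p3 p1
  set m3 := κ * cr p1 p2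
  -- subtract y_k times the relation
  have hx3 : x = ((y1-y3)*m1) • p1 + ((y2-y3)*m2) • p2 := by
    have : x = x - y3 • (m1 • p1 + m2 • p2 + m3 • p3) := by rw [hrel]; simp
    rw [this, hx]; module
  have hx2 : x = ((y1-y2)*m1) • p1 + ((y3-y2)*m3) • p3 := by
    have : x = x - y2 • (m1 • p1 + m2 • p2 + m3 • p3) := by rw [hrel]; simp
    rw [this, hx]; module
  have hx1 : x = ((y2-y1)*m2) • p2 + ((y3-y1)*m3) • p3 := by
    have : x = x - y1 • (m1 • p1 + m2 • p2 + m3 • p3) := by rw [hrel]; simp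
    rw [this, hx]; module
  have nn : ∀ {a b m : ℝ}, 0 < m → b ≤ a → 0 ≤ (a - b) * m := fun hm h => mul_nonneg (by linarith) hm.le
  rcases le_total y1 y2 with o12 | o12 <;> rcases le_total y2 y3 with o23 | o23 <;>
    rcases le_total y1 y3 with o13 | o13
  · exact hP _ _ _ _ h31 (nn h3 o23) (nn h1 o12) (by rw [hx2]; module)
  · exact hP _ _ _ _ h31 (nn h3 o23) (nn h1 o12) (by rw [hx2]; module)
  · exact hP _ _ _ _ h21 (nn h2 o23) (nn h1 o13) (by rw [hx3]; module)
  · exact hP _ _ _ _ h23 (nn h2 o12) (nn h3 o13) (by rw [hx1]; module)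
  · exact hP _ _ _ _ h32 (nn h3 o13) (nn h2 o12) (by rw [hx1]; module)
  · exact hP _ _ _ _ h12 (nn h1 o13) (nn h2 o23) (by rw [hx3]; module)
  · exact hP _ _ _ _ h13 (nn h1 o12) (nn h3 o23) (by rw [hx2]; module)
  · exact hP _ _ _ _ h13 (nn h1 o12) (nn h3 o23) (by rw [hx2]; module)

lemma Config.bound {s : ℝ} {a1 a2 a3 p1 p2 p3 : E2} {l1 l2 l3 : ℝ} (hs : phiR < s)
    (h : Config s a1 a2 a3 p1 p2 p3 l1 l2 l3) {x u : E2} {A B : ℝ}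
    (A1 : (inner ℝ x a1 : ℝ) ≤ A) (A2 : (inner ℝ x a2 : ℝ) ≤ A) (A3 : (inner ℝ x a3 : ℝ) ≤ A)
    (B1 : -(inner ℝ x a1 : ℝ) ≤ B) (B2 : -(inner ℝ x a2 : ℝ) ≤ B) (B3 : -(inner ℝ x a3 : ℝ) ≤ B)
    (hAB : A + B ≤ 2) (hwA : (inner ℝ x u : ℝ) ≤ A) (hwB : (inner ℝ x u : ℝ) ≤ B)
    (u1 : s * (inner ℝ p1 u : ℝ) ≤ 1) (u1' : -1 ≤ s * (inner ℝ p1 u : ℝ))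
    (u2 : s * (inner ℝ p2 u : ℝ) ≤ 1) (u2' : -1 ≤ s * (inner ℝ p2 u : ℝ))
    (u3 : s * (inner ℝ p3 u : ℝ) ≤ 1) (u3' : -1 ≤ s * (inner ℝ p3 u : ℝ)) :
    (inner ℝ x u : ℝ) ≤ cFun s := by
  by_contra hcon
  have l1 := (h.pair hs).1
  have l2 := (h.rot.pair hs).1
  have l3 := (h.rot.rot.pair hs).1
  obtain ⟨r3, q1⟩ := h.crs hs
  obtain ⟨r1, q2⟩ := h.rot.crs hs
  obtain ⟨r2, q3⟩ := h.rot.rot.crs hs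
  have hk : ∀ {d e f P l m : ℝ}, 0 < l → 0 < m → l * d = m * e → 0 < e * P → 0 < d * P := by
    intro d e f P l m hl hm h1 h2
    have : 0 < l * (d * P) := by
      have : l * (d*P) = m * (e * P) := by rw [← mul_assoc, h1, mul_assoc]
      rw [this]; positivity
    exact (mul_pos_iff_of_pos_left hl).1 this
  have r1' : 0 < cr a1 a2 * cr p2 p3 := hk (f := 0) l1 l3 q1 r1
  have r2' : 0 < cr a1 a2 * cr p3 p1 := hk (f := 0) l2 l3 q3.symm r2
  refine cone r1' r2' r3 x (fun i j => ∀ ξ η : ℝ, 0 ≤ ξ → 0 ≤ η → x = ξ • i - η • j → False)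
    (fun i j ξ η hh hx hy hxx => hh ξ η hx hy hxx) ?_ ?_ ?_ ?_ ?_ ?_ <;> intro ξ η hξ hη hx <;> apply hcon
  · exact h.final hs hξ hη hx A1 B2 hAB hwA hwB u1 u2'
  · exact h.swap.final hs hξ hη hx A2 B1 hAB hwA hwB u2 u1'
  · exact h.rot.rot.swap.final hs hξ hη hx A1 B3 hAB hwA hwB u1 u3'
  · exact h.rot.rot.final hs hξ hη hx A3 B1 hAB hwA hwB u3 u1'
  · exact h.rot.final hs hξ hη hx A2 B3 hAB hwA hwB u2 u3'
  · exact h.rot.swap.final hs hξ hη hx A3 B2 hAB hwA hwB u3 u2'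

lemma gamma_upper {K : Set E2} (hK : IsConvexBody K) (hc : MinkCentered K) :
    0 < cFun (minkAsym K) ∧ polarBody ((2:ℝ)⁻¹ • (polarBody K - polarBody K)) ⊆
      cFun (minkAsym K) • convexHull ℝ (K ∪ -K) := by
  rcases le_or_gt (minkAsym K) phiR with hs | hs
  · have hc1 : cFun (minkAsym K) = 1 := by unfold cFun; rw [if_pos hs]
    rw [hc1]
    refine ⟨one_pos, fun x hx => ?_⟩
    by_contra hcon
    obtain ⟨u, hu, hu', h⟩ := hull_sep hK hc one_pos hcon
    have := harm_iff hx hu hu'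
    rw [inner_neg_right] at this
    linarith
  · obtain ⟨w, a, hw, ha, hsum⟩ := carath3 (zero_mem_hull hK hc)
    choose haL p hp hsp hpa using ha
    have hpt : ∀ j, ∀ y ∈ polarBody K, -1 ≤ minkAsym K * (inner ℝ (p j) y : ℝ) := by
      intro j y hy
      have := hy _ (hsp j)
      rw [inner_neg_left, real_inner_smul_left] at this
      linarith
    have hw1 := hw.2
    rw [Fin.sum_univ_three] at hsum hw1
    have hconf : Config (minkAsym K) (a 0) (a 1) (a 2) (p 0) (p 1) (p 2) (w 0) (w 1) (w 2) :=
      ⟨hw.1 0, hw.1 1, hw.1 2, hw1, hsum, hpa 0, hpa 1, hpa 2, hpt _ _ (haL _), hpt _ _ (haL _),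
        hpt _ _ (haL _), hpt _ _ (haL _), hpt _ _ (haL _), hpt _ _ (haL _)⟩
    have hc0 := (cFun_spec hs (hconf.pair hs).2.1).1
    refine ⟨hc0, fun x hx => ?_⟩
    by_contra hcon
    obtain ⟨u, hu, hu', h⟩ := hull_sep hK hc hc0 hcon
    have hLc := polar_compact hK hc
    obtain ⟨y, hy, hymax⟩ := hLc.exists_isMaxOn ⟨u, hu⟩ (f := fun y : E2 => (inner ℝ x y : ℝ)) (by fun_prop)
    obtain ⟨z, hz, hzmin⟩ := hLc.exists_isMinOn ⟨u, hu⟩ (f := fun y : E2 => (inner ℝ x y : ℝ)) (by fun_prop)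
    have hA : ∀ v ∈ polarBody K, (inner ℝ x v : ℝ) ≤ inner ℝ x y := fun v hv => hymax hv
    have hB : ∀ v ∈ polarBody K, -(inner ℝ x v : ℝ) ≤ -inner ℝ x z := fun v hv => neg_le_neg (hzmin hv)
    have hub : ∀ j, minkAsym K * (inner ℝ (p j) u : ℝ) ≤ 1 := by
      intro j
      have := hpt j _ hu'
      rw [inner_neg_right] at this
      linarith
    have hwB := hB _ hu'
    rw [inner_neg_right, neg_neg] at hwB
    have := hconf.bound hs (x := x) (u := u) (hA _ (haL 0)) (hA _ (haL 1)) (hA _ (haL 2))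
      (hB _ (haL 0)) (hB _ (haL 1)) (hB _ (haL 2)) (by linarith [harm_iff hx hy hz]) (hA _ hu) hwB
      (hub 0) (hpt 0 _ hu) (hub 1) (hpt 1 _ hu) (hub 2) (hpt 2 _ hu)
    linarith

theorem stmt12 (K : Set E2) (hK : IsConvexBody K) (hc : MinkCentered K) :
    2 / (minkAsym K + 1) ≤ gammaB K ∧ gammaB K ≤ cFun (minkAsym K) := by
  have hm := gamma_upper hK hc
  constructor
  · unfold gammaB
    refine le_csInf ⟨cFun (minkAsym K), hm.1, hm.2⟩ ?_
    rintro ρ ⟨h1, h2⟩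
    exact gamma_lower hK hc h1 h2
  · exact csInf_le ⟨0, fun x hx => hx.1.le⟩ hm
end
end

section
/- For every pair (γ, s) with 1 ≤ s ≤ 2 and 2/(s+1) ≤ γ ≤ c(s), there exists a Minkowski centered convex body K ⊆ ℝ² such that s(K) = s and γ(K) = γ. -/
open scoped Pointwise RealInnerProductSpace
open Set

noncomputable section

/-- harmonic mean body -/
def HB (K : Set E2) : Set E2 := polarBody ((2:ℝ)⁻¹ • (polarBody K - polarBody K))

def MB (K : Set E2) : Set E2 := convexHull ℝ (K ∪ -K)

def GS (K : Set E2) : Set ℝ := {ρ : ℝ | 0 < ρ ∧ HB K ⊆ ρ • MB K}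

lemma gammaB_eq (K : Set E2) : gammaB K = sInf (GS K) := rfl

lemma mem_HB (K : Set E2) (x : E2) :
    x ∈ HB K ↔ ∀ y ∈ polarBody K, ∀ z ∈ polarBody K, (inner ℝ y x : ℝ) - inner ℝ z x ≤ 2 := by
  constructor
  · intro h y hy z hz
    have := h ((2:ℝ)⁻¹ • (y - z)) (Set.smul_mem_smul_set (Set.sub_mem_sub hy hz))
    rw [real_inner_smul_left, inner_sub_left] at this
    linarith
  · rintro h w ⟨_, ⟨y, hy, z, hz, rfl⟩, rfl⟩
    have := h y hy z hz
    simp only [real_inner_smul_left, inner_sub_left]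
    linarith

lemma HB_scale (K K' : Set E2) (l : ℝ) (hl : 0 < l) (h : K' ⊆ l • K) (x : E2)
    (hx : x ∈ HB K') : l⁻¹ • x ∈ HB K := by
  rw [mem_HB] at hx ⊢
  have key : ∀ y ∈ polarBody K, l⁻¹ • y ∈ polarBody K' := by
    intro y hy w hw
    obtain ⟨k, hk, rfl⟩ := h hw
    have := hy k hk
    simp only [real_inner_smul_left, real_inner_smul_right]
    rw [← mul_assoc, inv_mul_cancel₀ hl.ne']
    linarith
  intro y hy z hz
  have := hx _ (key y hy) _ (key z hz)
  simpa only [real_inner_smul_left, real_inner_smul_right] using this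

lemma HB_mono (K K' : Set E2) (h : K ⊆ K') : HB K ⊆ HB K' := by
  intro x hx
  have := HB_scale K' K 1 one_pos (by simpa using h) x hx
  simpa using this

lemma MB_mono (K K' : Set E2) (h : K ⊆ K') : MB K ⊆ MB K' :=
  convexHull_mono (Set.union_subset_union h (Set.neg_subset_neg.2 h))

lemma MB_scale (K K' : Set E2) (l : ℝ) (h : K' ⊆ l • K) : MB K' ⊆ l • MB K := by
  unfold MB
  rw [← convexHull_smul]
  apply convexHull_mono
  rw [Set.smul_set_union]
  apply Set.union_subset_union h
  rw [Set.smul_set_neg]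
  exact Set.neg_subset_neg.2 h

lemma GS_up (K K' : Set E2) (l ρ : ℝ) (hl : 0 < l) (h1 : K ⊆ K') (h : K' ⊆ l • K)
    (hρ : ρ ∈ GS K) : l * ρ ∈ GS K' := by
  refine ⟨mul_pos hl hρ.1, fun x hx => ?_⟩
  obtain ⟨y, hy, hxy⟩ := hρ.2 (HB_scale K K' l hl h x hx)
  refine ⟨y, MB_mono _ _ h1 hy, ?_⟩
  simp only at hxy ⊢
  rw [mul_smul, hxy, smul_smul, mul_inv_cancel₀ hl.ne', one_smul]

lemma GS_down (K K' : Set E2) (l ρ : ℝ) (hl : 0 < l) (h1 : K ⊆ K') (h : K' ⊆ l • K)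
    (hρ : ρ ∈ GS K') : l * ρ ∈ GS K := by
  refine ⟨mul_pos hl hρ.1, fun x hx => ?_⟩
  obtain ⟨y, hy, rfl⟩ := hρ.2 (HB_mono _ _ h1 hx)
  obtain ⟨z, hz, rfl⟩ := MB_scale K K' l h hy
  refine ⟨z, hz, ?_⟩
  simp only
  rw [mul_comm, mul_smul]

lemma GS_bdd (K : Set E2) : BddBelow (GS K) := ⟨0, fun _ h => h.1.le⟩

lemma gamma_le_mul (K K' : Set E2) (l : ℝ) (hl : 0 < l) (hne : (GS K).Nonempty)
    (h : ∀ ρ ∈ GS K, l * ρ ∈ GS K') : gammaB K' ≤ l * gammaB K := by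
  rw [gammaB_eq, gammaB_eq, mul_comm, ← div_le_iff₀ hl]
  apply le_csInf hne
  intro ρ hρ
  rw [div_le_iff₀ hl, mul_comm]
  exact csInf_le (GS_bdd _) (h ρ hρ)

def Kr (s : ℝ) (v1 v2 v3 e : E2) (r : ℝ) : Set E2 :=
  {x | (-s ≤ (inner ℝ v1 x : ℝ) ∧ (inner ℝ v1 x : ℝ) ≤ 1) ∧
    (-s ≤ (inner ℝ v2 x : ℝ) ∧ (inner ℝ v2 x : ℝ) ≤ 1) ∧
    (-s ≤ (inner ℝ v3 x : ℝ) ∧ (inner ℝ v3 x : ℝ) ≤ 1) ∧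
    (-r ≤ (inner ℝ e x : ℝ) ∧ (inner ℝ e x : ℝ) ≤ r)}

lemma Kr_mono (s : ℝ) (v1 v2 v3 e : E2) (r r' : ℝ) (h : r ≤ r') :
    Kr s v1 v2 v3 e r ⊆ Kr s v1 v2 v3 e r' := by
  rintro x ⟨h1, h2, h3, h4, h5⟩
  exact ⟨h1, h2, h3, by linarith, by linarith⟩

lemma shr (s t a : ℝ) (hs : 0 ≤ s) (ht0 : 0 ≤ t) (ht : t ≤ 1) (h : -s ≤ a ∧ a ≤ 1) :
    -s ≤ t * a ∧ t * a ≤ 1 := by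
  constructor
  · nlinarith
  · nlinarith

lemma Kr_scale (s : ℝ) (v1 v2 v3 e : E2) (r r' : ℝ) (hs : 0 ≤ s) (hr : 0 < r) (h : r ≤ r') :
    Kr s v1 v2 v3 e r' ⊆ (r' / r) • Kr s v1 v2 v3 e r := by
  rintro x ⟨h1, h2, h3, h4⟩
  have hr' : 0 < r' := by linarith
  have ht0 : 0 ≤ r / r' := by positivity
  have ht : r / r' ≤ 1 := (div_le_one hr').2 h
  refine ⟨(r / r') • x, ⟨?_, ?_, ?_, ?_⟩, ?_⟩
  · rw [real_inner_smul_right]; exact shr _ _ _ hs ht0 ht h1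
  · rw [real_inner_smul_right]; exact shr _ _ _ hs ht0 ht h2
  · rw [real_inner_smul_right]; exact shr _ _ _ hs ht0 ht h3
  · rw [real_inner_smul_right]
    have e1 : r / r' * r' = r := by field_simp
    constructor
    · have := mul_le_mul_of_nonneg_left h4.1 ht0
      linarith
    · have := mul_le_mul_of_nonneg_left h4.2 ht0
      linarith
  · simp only [smul_smul]
    have : r' / r * (r / r') = 1 := by field_simp
    rw [this, one_smul]

lemma Kr_neg (s : ℝ) (v1 v2 v3 e : E2) (r : ℝ) (hs : 1 ≤ s) (hr : 0 < r) (x : E2)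
    (hx : x ∈ Kr s v1 v2 v3 e r) : -(s⁻¹ • x) ∈ Kr s v1 v2 v3 e r := by
  obtain ⟨h1, h2, h3, h4⟩ := hx
  have hs0 : 0 < s := by linarith
  have hi : 0 < s⁻¹ := inv_pos.2 hs0
  have hi1 : s⁻¹ ≤ 1 := inv_le_one_of_one_le₀ hs
  have hsi : s⁻¹ * s = 1 := inv_mul_cancel₀ hs0.ne'
  have key : ∀ a : ℝ, -s ≤ a ∧ a ≤ 1 → -s ≤ -(s⁻¹ * a) ∧ -(s⁻¹ * a) ≤ 1 := by
    rintro a ⟨ha, hb⟩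
    constructor
    · nlinarith
    · nlinarith
  refine ⟨?_, ?_, ?_, ?_⟩
  · rw [inner_neg_right, real_inner_smul_right]; exact key _ h1
  · rw [inner_neg_right, real_inner_smul_right]; exact key _ h2
  · rw [inner_neg_right, real_inner_smul_right]; exact key _ h3
  · rw [inner_neg_right, real_inner_smul_right]
    obtain ⟨ha, hb⟩ := h4
    constructor <;> nlinarith

lemma Kr_convex (s : ℝ) (v1 v2 v3 e : E2) (r : ℝ) : Convex ℝ (Kr s v1 v2 v3 e r) := by
  intro x hx y hy a b ha hb hab
  obtain ⟨⟨a1, a2⟩, ⟨a3, a4⟩, ⟨a5, a6⟩, a7, a8⟩ := hx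
  obtain ⟨⟨b1, b2⟩, ⟨b3, b4⟩, ⟨b5, b6⟩, b7, b8⟩ := hy
  have key : ∀ l u p q : ℝ, l ≤ p → p ≤ u → l ≤ q → q ≤ u →
      l ≤ a * p + b * q ∧ a * p + b * q ≤ u := by
    intro l u p q h1 h2 h3 h4
    obtain rfl : b = 1 - a := by linarith
    constructor <;> nlinarith
  refine ⟨?_, ?_, ?_, ?_⟩ <;>
    rw [inner_add_right, real_inner_smul_right, real_inner_smul_right] <;>
    apply key <;> assumption

lemma Kr_closed (s : ℝ) (v1 v2 v3 e : E2) (r : ℝ) : IsClosed (Kr s v1 v2 v3 e r) := by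
  have hc : ∀ v : E2, Continuous fun x : E2 => (inner ℝ v x : ℝ) := fun v => by fun_prop
  have hk : ∀ (v : E2) (l u : ℝ), IsClosed {x : E2 | l ≤ (inner ℝ v x : ℝ) ∧ (inner ℝ v x : ℝ) ≤ u} :=
    fun v l u => (isClosed_le continuous_const (hc v)).inter (isClosed_le (hc v) continuous_const)
  exact (hk v1 _ _).inter ((hk v2 _ _).inter ((hk v3 _ _).inter (hk e _ _)))

lemma Kr_int (s : ℝ) (v1 v2 v3 e : E2) (r : ℝ) (hs : 0 < s) (hr : 0 < r) :
    (interior (Kr s v1 v2 v3 e r)).Nonempty := by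
  have hc : ∀ v : E2, Continuous fun x : E2 => (inner ℝ v x : ℝ) := fun v => by fun_prop
  have hk : ∀ (v : E2) (l u : ℝ), l < 0 → 0 < u →
      {x : E2 | l ≤ (inner ℝ v x : ℝ) ∧ (inner ℝ v x : ℝ) ≤ u} ∈ nhds (0 : E2) := by
    intro v l u hl hu
    have h1 : {x : E2 | l < (inner ℝ v x : ℝ)} ∈ nhds (0 : E2) :=
      (isOpen_lt continuous_const (hc v)).mem_nhds (by simpa using hl)
    have h2 : {x : E2 | (inner ℝ v x : ℝ) < u} ∈ nhds (0 : E2) :=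
      (isOpen_lt (hc v) continuous_const).mem_nhds (by simpa using hu)
    filter_upwards [h1, h2] with x hx hy
    exact ⟨le_of_lt hx, le_of_lt hy⟩
  refine ⟨0, ?_⟩
  rw [mem_interior_iff_mem_nhds]
  filter_upwards [hk v1 (-s) 1 (by linarith) one_pos, hk v2 (-s) 1 (by linarith) one_pos,
    hk v3 (-s) 1 (by linarith) one_pos, hk e (-r) r (by linarith) hr] with x a b c d
  exact ⟨a, b, c, d⟩

lemma Kr_asym_set (s : ℝ) (v1 v2 v3 e : E2) (r : ℝ) (hs : 1 ≤ s) (hr : 0 < r) :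
    Kr s v1 v2 v3 e r ⊆ s • (-Kr s v1 v2 v3 e r) := by
  intro x hx
  have hs0 : s ≠ 0 := by linarith
  refine ⟨s⁻¹ • x, ?_, ?_⟩
  · exact Kr_neg s v1 v2 v3 e r hs hr x hx
  · simp only [smul_smul]
    rw [mul_inv_cancel₀ hs0, one_smul]

lemma Kr_minkAsym (s : ℝ) (v1 v2 v3 e : E2) (r : ℝ) (hs : 1 ≤ s) (hr : 0 < r)
    (l1 l2 l3 : ℝ) (hl1 : 0 ≤ l1) (hl2 : 0 ≤ l2) (hl3 : 0 ≤ l3) (hl : l1 + l2 + l3 = 1)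
    (hv : ∀ x : E2, l1 * (inner ℝ v1 x : ℝ) + l2 * (inner ℝ v2 x : ℝ) + l3 * (inner ℝ v3 x : ℝ) = 0)
    (p1 p2 p3 : E2) (hp1 : p1 ∈ Kr s v1 v2 v3 e r) (hp2 : p2 ∈ Kr s v1 v2 v3 e r)
    (hp3 : p3 ∈ Kr s v1 v2 v3 e r)
    (h1 : (inner ℝ v1 p1 : ℝ) = -s) (h2 : (inner ℝ v2 p2 : ℝ) = -s)
    (h3 : (inner ℝ v3 p3 : ℝ) = -s) : minkAsym (Kr s v1 v2 v3 e r) = s := by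
  have hmem : s ∈ {ρ : ℝ | 0 < ρ ∧ ∃ c : E2,
      Kr s v1 v2 v3 e r - {c} ⊆ ρ • ({c} - Kr s v1 v2 v3 e r)} := by
    refine ⟨by linarith, 0, ?_⟩
    have := Kr_asym_set s v1 v2 v3 e r hs hr
    simpa using this
  apply le_antisymm
  · exact csInf_le ⟨0, fun _ h => h.1.le⟩ hmem
  · apply le_csInf ⟨s, hmem⟩
    rintro ρ ⟨hρ, c, hc⟩
    have key : ∀ (v p : E2), p ∈ Kr s v1 v2 v3 e r →
        (∀ x ∈ Kr s v1 v2 v3 e r, (inner ℝ v x : ℝ) ≤ 1) → (inner ℝ v p : ℝ) = -s →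
        -s - (inner ℝ v c : ℝ) ≥ ρ * ((inner ℝ v c : ℝ) - 1) := by
      intro v p hp hx hvp
      obtain ⟨_, ⟨c', hc', k, hk, rfl⟩, hkk⟩ := hc (Set.sub_mem_sub hp (Set.mem_singleton c))
      obtain rfl : c' = c := hc'
      have := congrArg (fun x => (inner ℝ v x : ℝ)) hkk
      simp only [inner_sub_right, real_inner_smul_right] at this
      have := hx k hk
      nlinarith
    have k1 := key v1 p1 hp1 (fun x hx => hx.1.2) h1
    have k2 := key v2 p2 hp2 (fun x hx => hx.2.1.2) h2
    have k3 := key v3 p3 hp3 (fun x hx => hx.2.2.1.2) h3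
    have := hv c
    have k1' := mul_le_mul_of_nonneg_left k1 hl1
    have k2' := mul_le_mul_of_nonneg_left k2 hl2
    have k3' := mul_le_mul_of_nonneg_left k3 hl3
    obtain rfl : l3 = 1 - l1 - l2 := by linarith
    have e : (1 + ρ) * (l1 * (inner ℝ v1 c : ℝ) + l2 * (inner ℝ v2 c : ℝ)
      + (1 - l1 - l2) * (inner ℝ v3 c : ℝ)) = 0 := by rw [this]; ring
    nlinarith

/-- the main combination step -/
lemma combo (K : Set E2) (x u : E2) (t t' : ℝ) (ht : 0 < t) (ht' : 0 < t')
    (h1 : -(x + t • u) ∈ K) (h2 : x - t' • u ∈ K) : x ∈ MB K := by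
  have a : x + t • u ∈ MB K := subset_convexHull ℝ _ (Or.inr h1)
  have b : x - t' • u ∈ MB K := subset_convexHull ℝ _ (Or.inl h2)
  have hc : Convex ℝ (MB K) := convex_convexHull ℝ _
  have htt : t + t' ≠ 0 := by linarith
  have := hc a b (a := t' / (t + t')) (b := t / (t + t')) (by positivity) (by positivity)
    (by field_simp; ring)
  convert this using 1
  rw [smul_add, smul_sub, smul_smul, smul_smul]
  have e1 : t' / (t + t') * t = t / (t + t') * t' := by ring
  rw [e1]
  have e2 : (t' / (t + t')) • x + (t / (t + t')) • x = x := by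
    rw [← add_smul]
    have : t' / (t + t') + t / (t + t') = 1 := by field_simp; ring
    rw [this, one_smul]
  calc x = (t' / (t + t')) • x + (t / (t + t')) • x := e2.symm
    _ = _ := by abel

/-- arithmetic core; `a` maximal, `-b` minimal, `c` the third value -/
lemma arith (s l1 l2 l3 a b c w : ℝ) (hl1 : 0 < l1) (hl2 : 0 < l2) (hl3 : 0 < l3)
    (hl : l1 + l2 + l3 = 1) (k1 : l1 * (s + 1) ≤ 1) (k2 : l2 * (s + 1) ≤ 1)
    (hs : 1 ≤ s)
    (hrel : l1 * a - l2 * b + l3 * c = 0) (hw : l1 + l2 + l3 * w = 0)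
    (ha : 1 < a) (hb : 1 < b) (hab : a + b ≤ s + 1) (hca : c ≤ a) (hcb : -b ≤ c) :
    ((-1 ≤ a + (b - 1) * 1 ∧ a + (b - 1) * 1 ≤ s) ∧ (-1 ≤ -b + (b - 1) * 1 ∧ -b + (b - 1) * 1 ≤ s) ∧
      (-1 ≤ c + (b - 1) * w ∧ c + (b - 1) * w ≤ s)) ∧
    ((-s ≤ a - (a - 1) * 1 ∧ a - (a - 1) * 1 ≤ 1) ∧ (-s ≤ -b - (a - 1) * 1 ∧ -b - (a - 1) * 1 ≤ 1) ∧
      (-s ≤ c - (a - 1) * w ∧ c - (a - 1) * w ≤ 1)) := by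
  have hw0 : w < 0 := by
    by_contra h
    push Not at h
    nlinarith [mul_nonneg hl3.le h]
  have g1 : l1 * (a + b) ≤ 1 := le_trans (by gcongr) k1
  have g2 : l2 * (a + b) ≤ 1 := le_trans (by gcongr) k2
  refine ⟨⟨⟨by linarith, by linarith⟩, ⟨by linarith, by linarith⟩, ?_, ?_⟩,
    ⟨by linarith, by linarith⟩, ⟨by linarith, by linarith⟩, ?_, ?_⟩
  · have : 0 ≤ l3 * (c + (b - 1) * w + 1) := by nlinarith
    have := nonneg_of_mul_nonneg_right this hl3
    linarith
  · nlinarith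
  · nlinarith
  · have : 0 ≤ l3 * (1 - (c - (a - 1) * w)) := by nlinarith
    have := nonneg_of_mul_nonneg_right this hl3
    linarith

lemma core6 (K : Set E2) (s l1 l2 l3 : ℝ) (v1 v2 v3 u x : E2)
    (hl1 : 0 < l1) (hl2 : 0 < l2) (hl3 : 0 < l3)
    (hl : l1 + l2 + l3 = 1) (k1 : l1 * (s + 1) ≤ 1) (k2 : l2 * (s + 1) ≤ 1)
    (hs : 1 ≤ s)
    (hv : ∀ x : E2, l1 * (inner ℝ v1 x : ℝ) + l2 * (inner ℝ v2 x : ℝ) + l3 * (inner ℝ v3 x : ℝ) = 0)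
    (hu1 : (inner ℝ v1 u : ℝ) = 1) (hu2 : (inner ℝ v2 u : ℝ) = 1)
    (hK : ∀ y : E2, (-s ≤ (inner ℝ v1 y : ℝ) ∧ (inner ℝ v1 y : ℝ) ≤ 1) →
      (-s ≤ (inner ℝ v2 y : ℝ) ∧ (inner ℝ v2 y : ℝ) ≤ 1) →
      (-s ≤ (inner ℝ v3 y : ℝ) ∧ (inner ℝ v3 y : ℝ) ≤ 1) → y ∈ K)
    (ha : 1 < (inner ℝ v1 x : ℝ)) (hb : (inner ℝ v2 x : ℝ) < -1)
    (hab : (inner ℝ v1 x : ℝ) - (inner ℝ v2 x : ℝ) ≤ s + 1)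
    (hca : (inner ℝ v3 x : ℝ) ≤ inner ℝ v1 x) (hcb : (inner ℝ v2 x : ℝ) ≤ inner ℝ v3 x) :
    x ∈ MB K := by
  have hw := hv u
  rw [hu1, hu2] at hw
  have hx := hv x
  obtain ⟨⟨q1, q2, q3⟩, q4, q5, q6⟩ := arith s l1 l2 l3 (inner ℝ v1 x) (-(inner ℝ v2 x)) (inner ℝ v3 x)
    (inner ℝ v3 u) hl1 hl2 hl3 hl k1 k2 hs (by linarith) (by linarith) ha (by linarith)
    (by linarith) hca (by linarith)
  apply combo K x u (-(inner ℝ v2 x) - 1) ((inner ℝ v1 x) - 1) (by linarith) (by linarith)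
  · apply hK <;> rw [inner_neg_right, inner_add_right, real_inner_smul_right]
    · rw [hu1]; constructor <;> linarith
    · rw [hu2]; constructor <;> linarith
    · constructor <;> linarith
  · apply hK <;> rw [inner_sub_right, real_inner_smul_right]
    · rw [hu1]; constructor <;> linarith
    · rw [hu2]; constructor <;> linarith
    · constructor <;> linarith

lemma upper_core (s l1 l2 l3 R : ℝ) (v1 v2 v3 e W1 W2 W3 x : E2)
    (hl1 : 0 < l1) (hl2 : 0 < l2) (hl3 : 0 < l3)
    (hl : l1 + l2 + l3 = 1) (k1 : l1 * (s + 1) ≤ 1) (k2 : l2 * (s + 1) ≤ 1)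
    (k3 : l3 * (s + 1) ≤ 1) (hs : 1 ≤ s)
    (hv : ∀ x : E2, l1 * (inner ℝ v1 x : ℝ) + l2 * (inner ℝ v2 x : ℝ) + l3 * (inner ℝ v3 x : ℝ) = 0)
    (w12 : (inner ℝ v1 W2 : ℝ) = 1) (w13 : (inner ℝ v1 W3 : ℝ) = 1)
    (w21 : (inner ℝ v2 W1 : ℝ) = 1) (w23 : (inner ℝ v2 W3 : ℝ) = 1)
    (w31 : (inner ℝ v3 W1 : ℝ) = 1) (w32 : (inner ℝ v3 W2 : ℝ) = 1)
    (hR : ∀ y : E2, (-s ≤ (inner ℝ v1 y : ℝ) ∧ (inner ℝ v1 y : ℝ) ≤ 1) →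
      (-s ≤ (inner ℝ v2 y : ℝ) ∧ (inner ℝ v2 y : ℝ) ≤ 1) →
      (-s ≤ (inner ℝ v3 y : ℝ) ∧ (inner ℝ v3 y : ℝ) ≤ 1) →
      (-R ≤ (inner ℝ e y : ℝ) ∧ (inner ℝ e y : ℝ) ≤ R))
    (hx1 : -s ≤ (inner ℝ v1 x : ℝ) ∧ (inner ℝ v1 x : ℝ) ≤ s)
    (hx2 : -s ≤ (inner ℝ v2 x : ℝ) ∧ (inner ℝ v2 x : ℝ) ≤ s)
    (hx3 : -s ≤ (inner ℝ v3 x : ℝ) ∧ (inner ℝ v3 x : ℝ) ≤ s)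
    (h12 : (inner ℝ v1 x : ℝ) - inner ℝ v2 x ≤ s + 1)
    (h13 : (inner ℝ v1 x : ℝ) - inner ℝ v3 x ≤ s + 1)
    (h21 : (inner ℝ v2 x : ℝ) - inner ℝ v1 x ≤ s + 1)
    (h23 : (inner ℝ v2 x : ℝ) - inner ℝ v3 x ≤ s + 1)
    (h31 : (inner ℝ v3 x : ℝ) - inner ℝ v1 x ≤ s + 1)
    (h32 : (inner ℝ v3 x : ℝ) - inner ℝ v2 x ≤ s + 1) :
    x ∈ MB (Kr s v1 v2 v3 e R) := by
  have hK : ∀ y : E2, (-s ≤ (inner ℝ v1 y : ℝ) ∧ (inner ℝ v1 y : ℝ) ≤ 1) →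
      (-s ≤ (inner ℝ v2 y : ℝ) ∧ (inner ℝ v2 y : ℝ) ≤ 1) →
      (-s ≤ (inner ℝ v3 y : ℝ) ∧ (inner ℝ v3 y : ℝ) ≤ 1) → y ∈ Kr s v1 v2 v3 e R :=
    fun y a b c => ⟨a, b, c, hR y a b c⟩
  by_cases hA : (inner ℝ v1 x : ℝ) ≤ 1 ∧ (inner ℝ v2 x : ℝ) ≤ 1 ∧ (inner ℝ v3 x : ℝ) ≤ 1
  · exact subset_convexHull ℝ _ (Or.inl (hK x ⟨hx1.1, hA.1⟩ ⟨hx2.1, hA.2.1⟩ ⟨hx3.1, hA.2.2⟩))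
  by_cases hB : -1 ≤ (inner ℝ v1 x : ℝ) ∧ -1 ≤ (inner ℝ v2 x : ℝ) ∧ -1 ≤ (inner ℝ v3 x : ℝ)
  · refine subset_convexHull ℝ _ (Or.inr (hK (-x) ?_ ?_ ?_)) <;> rw [inner_neg_right] <;>
      constructor <;> linarith [hx1.2, hx2.2, hx3.2, hB.1, hB.2.1, hB.2.2]
  have c12 : 1 < (inner ℝ v1 x : ℝ) → (inner ℝ v2 x : ℝ) < -1 → (inner ℝ v3 x : ℝ) ≤ inner ℝ v1 x →
      (inner ℝ v2 x : ℝ) ≤ inner ℝ v3 x → x ∈ MB (Kr s v1 v2 v3 e R) := fun a b c d =>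
    core6 _ s l1 l2 l3 v1 v2 v3 W3 x hl1 hl2 hl3 (by linarith) k1 k2 hs
      (fun x => by linarith [hv x]) w13 w23 (fun y a b c => hK y a b c) a b h12 c d
  have c21 : 1 < (inner ℝ v2 x : ℝ) → (inner ℝ v1 x : ℝ) < -1 → (inner ℝ v3 x : ℝ) ≤ inner ℝ v2 x →
      (inner ℝ v1 x : ℝ) ≤ inner ℝ v3 x → x ∈ MB (Kr s v1 v2 v3 e R) := fun a b c d =>
    core6 _ s l2 l1 l3 v2 v1 v3 W3 x hl2 hl1 hl3 (by linarith) k2 k1 hs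
      (fun x => by linarith [hv x]) w23 w13 (fun y a b c => hK y b a c) a b h21 c d
  have c13 : 1 < (inner ℝ v1 x : ℝ) → (inner ℝ v3 x : ℝ) < -1 → (inner ℝ v2 x : ℝ) ≤ inner ℝ v1 x →
      (inner ℝ v3 x : ℝ) ≤ inner ℝ v2 x → x ∈ MB (Kr s v1 v2 v3 e R) := fun a b c d =>
    core6 _ s l1 l3 l2 v1 v3 v2 W2 x hl1 hl3 hl2 (by linarith) k1 k3 hs
      (fun x => by linarith [hv x]) w12 w32 (fun y a b c => hK y a c b) a b h13 c d
  have c31 : 1 < (inner ℝ v3 x : ℝ) → (inner ℝ v1 x : ℝ) < -1 → (inner ℝ v2 x : ℝ) ≤ inner ℝ v3 x →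
      (inner ℝ v1 x : ℝ) ≤ inner ℝ v2 x → x ∈ MB (Kr s v1 v2 v3 e R) := fun a b c d =>
    core6 _ s l3 l1 l2 v3 v1 v2 W2 x hl3 hl1 hl2 (by linarith) k3 k1 hs
      (fun x => by linarith [hv x]) w32 w12 (fun y a b c => hK y b c a) a b h31 c d
  have c23 : 1 < (inner ℝ v2 x : ℝ) → (inner ℝ v3 x : ℝ) < -1 → (inner ℝ v1 x : ℝ) ≤ inner ℝ v2 x →
      (inner ℝ v3 x : ℝ) ≤ inner ℝ v1 x → x ∈ MB (Kr s v1 v2 v3 e R) := fun a b c d =>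
    core6 _ s l2 l3 l1 v2 v3 v1 W1 x hl2 hl3 hl1 (by linarith) k2 k3 hs
      (fun x => by linarith [hv x]) w21 w31 (fun y a b c => hK y c a b) a b h23 c d
  have c32 : 1 < (inner ℝ v3 x : ℝ) → (inner ℝ v2 x : ℝ) < -1 → (inner ℝ v1 x : ℝ) ≤ inner ℝ v3 x →
      (inner ℝ v2 x : ℝ) ≤ inner ℝ v1 x → x ∈ MB (Kr s v1 v2 v3 e R) := fun a b c d =>
    core6 _ s l3 l2 l1 v3 v2 v1 W1 x hl3 hl2 hl1 (by linarith) k3 k2 hs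
      (fun x => by linarith [hv x]) w31 w21 (fun y a b c => hK y c b a) a b h32 c d
  clear hK hR hv
  generalize (inner ℝ v1 x : ℝ) = a at *
  generalize (inner ℝ v2 x : ℝ) = b at *
  generalize (inner ℝ v3 x : ℝ) = c at *
  have hA' : 1 < a ∨ 1 < b ∨ 1 < c := by
    by_contra h
    push Not at h
    exact hA h
  have hB' : a < -1 ∨ b < -1 ∨ c < -1 := by
    by_contra h
    push Not at h
    exact hB h
  rcases le_total a b with p | p <;> rcases le_total b c with q | q <;>
    rcases le_total a c with r | r
  · apply c31 _ _ q p <;> rcases hA' with h | h | h <;> rcases hB' with h' | h' | h' <;> linarith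
  · apply c31 _ _ q p <;> rcases hA' with h | h | h <;> rcases hB' with h' | h' | h' <;> linarith
  · apply c21 _ _ q r <;> rcases hA' with h | h | h <;> rcases hB' with h' | h' | h' <;> linarith
  · apply c23 _ _ p r <;> rcases hA' with h | h | h <;> rcases hB' with h' | h' | h' <;> linarith
  · apply c32 _ _ r p <;> rcases hA' with h | h | h <;> rcases hB' with h' | h' | h' <;> linarith
  · apply c12 _ _ r q <;> rcases hA' with h | h | h <;> rcases hB' with h' | h' | h' <;> linarith
  · apply c12 _ _ (by linarith) (by linarith) <;> rcases hA' with h | h | h <;> rcases hB' with h' | h' | h' <;> linarith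
  · apply c13 _ _ p q <;> rcases hA' with h | h | h <;> rcases hB' with h' | h' | h' <;> linarith

/-- consequences of membership in the harmonic body -/
lemma HB_conseq (s R : ℝ) (v1 v2 v3 e x : E2) (hs : 1 ≤ s)
    (hx : x ∈ HB (Kr s v1 v2 v3 e R)) (v : E2)
    (hv : v = v1 ∨ v = v2 ∨ v = v3) (v' : E2) (hv' : v' = v1 ∨ v' = v2 ∨ v' = v3) :
    (-s ≤ (inner ℝ v (((s + 1) / 2) • x) : ℝ) ∧ (inner ℝ v (((s + 1) / 2) • x) : ℝ) ≤ s) ∧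
    (inner ℝ v (((s + 1) / 2) • x) : ℝ) - inner ℝ v' (((s + 1) / 2) • x) ≤ s + 1 := by
  have hs0 : 0 < s := by linarith
  rw [mem_HB] at hx
  have key : ∀ v : E2, (v = v1 ∨ v = v2 ∨ v = v3) → ∀ y ∈ Kr s v1 v2 v3 e R,
      -s ≤ (inner ℝ v y : ℝ) ∧ (inner ℝ v y : ℝ) ≤ 1 := by
    rintro v (rfl | rfl | rfl) y hy
    · exact hy.1
    · exact hy.2.1
    · exact hy.2.2.1
  have hp : ∀ v : E2, (v = v1 ∨ v = v2 ∨ v = v3) → v ∈ polarBody (Kr s v1 v2 v3 e R) := by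
    intro v hv y hy
    rw [real_inner_comm]
    exact (key v hv y hy).2
  have hn : ∀ v : E2, (v = v1 ∨ v = v2 ∨ v = v3) → -(s⁻¹ • v) ∈ polarBody (Kr s v1 v2 v3 e R) := by
    intro v hv y hy
    rw [real_inner_comm, inner_neg_left, real_inner_smul_left]
    have h1 := (key v hv y hy).1
    have hi : 0 < s⁻¹ := inv_pos.2 hs0
    have hsi : s⁻¹ * s = 1 := inv_mul_cancel₀ hs0.ne'
    nlinarith
  have a1 := hx _ (hp v hv) _ (hp v' hv')
  have a2 := hx _ (hp v hv) _ (hn v hv)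
  have a3 := hx _ (hn v hv) _ (hp v hv)
  rw [inner_neg_left, real_inner_smul_left] at a2 a3
  rw [real_inner_smul_right, real_inner_smul_right]
  generalize (inner ℝ v x : ℝ) = a at *
  generalize (inner ℝ v' x : ℝ) = b at *
  have e1 : s * (a - -(s⁻¹ * a)) = (s + 1) * a := by field_simp; ring
  have e2 : s * (-(s⁻¹ * a) - a) = -((s + 1) * a) := by field_simp; ring
  have b2 := mul_le_mul_of_nonneg_left a2 hs0.le
  have b3 := mul_le_mul_of_nonneg_left a3 hs0.le
  refine ⟨⟨by linarith, by linarith⟩, ?_⟩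
  nlinarith

lemma to_GS (s : ℝ) (K : Set E2) (hs : 1 ≤ s)
    (h : ∀ x ∈ HB K, ((s + 1) / 2) • x ∈ MB K) : 2 / (s + 1) ∈ GS K := by
  refine ⟨by positivity, fun x hx => ⟨_, h x hx, ?_⟩⟩
  simp only [smul_smul]
  have : 2 / (s + 1) * ((s + 1) / 2) = 1 := by field_simp
  rw [this, one_smul]

lemma upper (s l1 l2 l3 R : ℝ) (v1 v2 v3 e W1 W2 W3 : E2)
    (hl1 : 0 < l1) (hl2 : 0 < l2) (hl3 : 0 < l3)
    (hl : l1 + l2 + l3 = 1) (k1 : l1 * (s + 1) ≤ 1) (k2 : l2 * (s + 1) ≤ 1)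
    (k3 : l3 * (s + 1) ≤ 1) (hs : 1 ≤ s)
    (hv : ∀ x : E2, l1 * (inner ℝ v1 x : ℝ) + l2 * (inner ℝ v2 x : ℝ) + l3 * (inner ℝ v3 x : ℝ) = 0)
    (w12 : (inner ℝ v1 W2 : ℝ) = 1) (w13 : (inner ℝ v1 W3 : ℝ) = 1)
    (w21 : (inner ℝ v2 W1 : ℝ) = 1) (w23 : (inner ℝ v2 W3 : ℝ) = 1)
    (w31 : (inner ℝ v3 W1 : ℝ) = 1) (w32 : (inner ℝ v3 W2 : ℝ) = 1)
    (hR : ∀ y : E2, (-s ≤ (inner ℝ v1 y : ℝ) ∧ (inner ℝ v1 y : ℝ) ≤ 1) →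
      (-s ≤ (inner ℝ v2 y : ℝ) ∧ (inner ℝ v2 y : ℝ) ≤ 1) →
      (-s ≤ (inner ℝ v3 y : ℝ) ∧ (inner ℝ v3 y : ℝ) ≤ 1) →
      (-R ≤ (inner ℝ e y : ℝ) ∧ (inner ℝ e y : ℝ) ≤ R)) :
    2 / (s + 1) ∈ GS (Kr s v1 v2 v3 e R) := by
  apply to_GS s _ hs
  intro x hx
  have H := HB_conseq s R v1 v2 v3 e x hs hx
  exact upper_core s l1 l2 l3 R v1 v2 v3 e W1 W2 W3 _ hl1 hl2 hl3 hl k1 k2 k3 hs hv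
    w12 w13 w21 w23 w31 w32 hR (H v1 (by simp) v1 (by simp)).1 (H v2 (by simp) v1 (by simp)).1
    (H v3 (by simp) v1 (by simp)).1
    (H v1 (by simp) v2 (by simp)).2 (H v1 (by simp) v3 (by simp)).2
    (H v2 (by simp) v1 (by simp)).2 (H v2 (by simp) v3 (by simp)).2
    (H v3 (by simp) v1 (by simp)).2 (H v3 (by simp) v2 (by simp)).2

lemma upper_one (R : ℝ) (v1 v2 v3 e : E2) (hR0 : 0 < R) :
    2 / ((1:ℝ) + 1) ∈ GS (Kr 1 v1 v2 v3 e R) := by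
  apply to_GS 1 _ le_rfl
  intro x hx
  have H := HB_conseq 1 R v1 v2 v3 e x le_rfl hx
  refine subset_convexHull ℝ _ (Or.inl ⟨(H v1 (by simp) v1 (by simp)).1,
    (H v2 (by simp) v1 (by simp)).1, (H v3 (by simp) v1 (by simp)).1, ?_⟩)
  rw [mem_HB] at hx
  have hi : 0 < R⁻¹ := inv_pos.2 hR0
  have hsi : R⁻¹ * R = 1 := inv_mul_cancel₀ hR0.ne'
  have q1 : R⁻¹ • e ∈ polarBody (Kr 1 v1 v2 v3 e R) := by
    intro y hy
    rw [real_inner_comm, real_inner_smul_left]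
    nlinarith [hy.2.2.2.1, hy.2.2.2.2]
  have q2 : -(R⁻¹ • e) ∈ polarBody (Kr 1 v1 v2 v3 e R) := by
    intro y hy
    rw [real_inner_comm, inner_neg_left, real_inner_smul_left]
    nlinarith [hy.2.2.2.1, hy.2.2.2.2]
  have a1 := hx _ q1 _ q2
  have a2 := hx _ q2 _ q1
  rw [inner_neg_left, real_inner_smul_left] at a1 a2
  rw [real_inner_smul_right]
  generalize (inner ℝ e x : ℝ) = a at *
  have e1 : R * (R⁻¹ * a - -(R⁻¹ * a)) = 2 * a := by field_simp; ring
  have e2 : R * (-(R⁻¹ * a) - R⁻¹ * a) = -(2 * a) := by field_simp; ring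
  have b2 := mul_le_mul_of_nonneg_left a1 hR0.le
  have b3 := mul_le_mul_of_nonneg_left a2 hR0.le
  constructor <;> linarith

lemma lower (s A : ℝ) (v1 v2 v3 e q : E2) (hA : 0 < A)
    (hne : (GS (Kr s v1 v2 v3 e 1)).Nonempty)
    (hq : q ∈ Kr s v1 v2 v3 e 1) (hq' : -(A⁻¹ • q) ∈ Kr s v1 v2 v3 e 1)
    (he : (inner ℝ e q : ℝ) = 1) : 2 / (1 + A) ≤ gammaB (Kr s v1 v2 v3 e 1) := by
  rw [gammaB_eq]
  apply le_csInf hne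
  rintro ρ ⟨hρ, h⟩
  have hmem : (2 / (1 + A)) • q ∈ HB (Kr s v1 v2 v3 e 1) := by
    rw [mem_HB]
    intro y hy z hz
    have a1 := hy _ hq
    have a2 := hz _ hq'
    rw [real_inner_comm] at a1 a2
    rw [inner_neg_right, real_inner_smul_right] at a2
    rw [real_inner_smul_right, real_inner_smul_right]
    have b2 := mul_le_mul_of_nonneg_left a2 hA.le
    have e1 : A * -(A⁻¹ * (inner ℝ z q : ℝ)) = -(inner ℝ z q : ℝ) := by field_simp
    rw [← mul_sub, div_mul_eq_mul_div, div_le_iff₀ (by positivity)]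
    linarith
  obtain ⟨y, hy, hyq⟩ := h hmem
  have hM : MB (Kr s v1 v2 v3 e 1) ⊆ {y : E2 | (inner ℝ e y : ℝ) ≤ 1} := by
    apply convexHull_min
    · rintro y (hy | hy)
      · exact hy.2.2.2.2
      · have := hy.2.2.2.1
        rw [inner_neg_right] at this
        simp only [Set.mem_setOf_eq]
        linarith
    · intro a ha b hb p q hp hq hpq
      simp only [Set.mem_setOf_eq] at *
      rw [inner_add_right, real_inner_smul_right, real_inner_smul_right]
      nlinarith
  have h1 : (inner ℝ e y : ℝ) ≤ 1 := hM hy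
  have := congrArg (fun x => (inner ℝ e x : ℝ)) hyq
  simp only [real_inner_smul_right, he] at this
  nlinarith

lemma ivt (f : ℝ → ℝ) (R g : ℝ) (hR : 1 ≤ R) (hpos : ∀ r, 0 ≤ f r)
    (h1 : ∀ r r', 1 ≤ r → r ≤ r' → r' ≤ R → f r' ≤ r' / r * f r)
    (h2 : ∀ r r', 1 ≤ r → r ≤ r' → r' ≤ R → f r ≤ r' / r * f r')
    (hg1 : f R ≤ g) (hg2 : g ≤ f 1) : ∃ r, 1 ≤ r ∧ r ≤ R ∧ f r = g := by
  have hC : ∀ r, 1 ≤ r → r ≤ R → f r ≤ R * f R := by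
    intro r hr hrR
    refine (h2 r R hr hrR le_rfl).trans ?_
    apply mul_le_mul_of_nonneg_right _ (hpos R)
    rw [div_le_iff₀ (by linarith)]
    nlinarith
  have key : ∀ r r', 1 ≤ r → r ≤ r' → r' ≤ R → |f r' - f r| ≤ R * f R * |r' - r| := by
    intro r r' hr hrr hR'
    have a1 := h1 r r' hr hrr hR'
    have a2 := h2 r r' hr hrr hR'
    have hr0 : 0 < r := by linarith
    have c1 := hC r hr (by linarith)
    have c2 := hC r' (by linarith) hR'
    have e1 : r' / r - 1 ≤ r' - r := by
      rw [sub_le_iff_le_add, div_le_iff₀ hr0]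
      nlinarith
    have e0 : 0 ≤ r' / r - 1 := by
      rw [sub_nonneg, le_div_iff₀ hr0]
      linarith
    have d1 : (r' / r - 1) * f r ≤ (r' - r) * (R * f R) :=
      mul_le_mul e1 c1 (hpos r) (by linarith)
    have d2 : (r' / r - 1) * f r' ≤ (r' - r) * (R * f R) :=
      mul_le_mul e1 c2 (hpos r') (by linarith)
    rw [abs_of_nonneg (sub_nonneg.2 hrr), abs_le]
    constructor <;> nlinarith
  have hcont : ContinuousOn f (Set.Icc 1 R) := by
    have hL : LipschitzOnWith (Real.toNNReal (R * f R)) f (Set.Icc 1 R) := by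
      apply LipschitzOnWith.of_dist_le_mul
      intro x hx y hy
      rw [Real.coe_toNNReal _ (mul_nonneg (by linarith) (hpos R)), Real.dist_eq, Real.dist_eq]
      rcases le_total x y with h | h
      · rw [abs_sub_comm, abs_sub_comm x y]
        exact key x y hx.1 h hy.2
      · exact key y x hy.1 h hx.2
    exact hL.continuousOn
  obtain ⟨r, hr, hfr⟩ := intermediate_value_Icc' hR hcont ⟨hg1, hg2⟩
  exact ⟨r, hr.1, hr.2, hfr⟩

lemma inner_pt (a b : ℝ) (x : E2) : (inner ℝ (pt a b) x : ℝ) = a * x 0 + b * x 1 := by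
  simp [pt, PiLp.inner_apply, Fin.sum_univ_two]
  ring

lemma inner_pt_pt (a b c d : ℝ) : (inner ℝ (pt a b) (pt c d) : ℝ) = a * c + b * d := by
  rw [inner_pt]; simp [pt]

lemma pt_mem (s r m n m' n' a b : ℝ)
    (h1 : -s ≤ m * a + n * b ∧ m * a + n * b ≤ 1)
    (h2 : -s ≤ m' * a + n' * b ∧ m' * a + n' * b ≤ 1)
    (h3 : -1 ≤ b ∧ b ≤ s) (h4 : -r ≤ a ∧ a ≤ r) :
    pt a b ∈ Kr s (pt m n) (pt m' n') (pt 0 (-1)) (pt 1 0) r := by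
  refine ⟨?_, ?_, ?_, ?_⟩ <;> rw [inner_pt_pt]
  · exact h1
  · exact h2
  · constructor <;> linarith
  · constructor <;> linarith

lemma neg_smul_pt (t a b : ℝ) : -(t • pt a b) = pt (-(t * a)) (-(t * b)) := by
  ext i
  fin_cases i <;> simp [pt]

lemma Kr_compact (s r : ℝ) (v1 v2 : E2) :
    IsCompact (Kr s v1 v2 (pt 0 (-1)) (pt 1 0) r) := by
  apply Metric.isCompact_of_isClosed_isBounded (Kr_closed _ _ _ _ _ _)
  rw [isBounded_iff_forall_norm_le]
  refine ⟨|r| + (|s| + 1), fun x hx => ?_⟩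
  obtain ⟨-, -, h3, h4⟩ := hx
  rw [inner_pt] at h3 h4
  have a0 : |x 0| ≤ |r| := by
    rw [abs_le]; have := le_abs_self r; constructor <;> linarith
  have a1 : |x 1| ≤ |s| + 1 := by
    rw [abs_le]; have := le_abs_self s; have := abs_nonneg s; constructor <;> linarith
  rw [EuclideanSpace.norm_eq, Fin.sum_univ_two, Real.norm_eq_abs, Real.norm_eq_abs]
  apply Real.sqrt_le_iff.2
  have := abs_nonneg (x 0)
  have := abs_nonneg (x 1)
  constructor
  · positivity
  · nlinarith [mul_nonneg (abs_nonneg (x 0)) (abs_nonneg (x 1)), mul_self_le_mul_self (abs_nonneg (x 0)) a0, mul_self_le_mul_self (abs_nonneg (x 1)) a1, mul_nonneg (abs_nonneg r) (by positivity : 0 ≤ |s| + 1)]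

set_option maxHeartbeats 1000000 in
lemma main_D (s D h A γ : ℝ) (hs1 : 1 ≤ s) (hs2 : s ≤ 2) (hD0 : 0 ≤ D) (hD : D ≤ 2 - s)
    (hsD : s = 1 → D = 0) (hA : 1 ≤ A)
    (m n m' n' : ℝ) (hm : m = (s ^ 2 - 1) / (s + D)) (hn : n = (s * D + 1) / (s + D))
    (hm' : m' = -(s ^ 2 - 1) / (s - D)) (hn' : n' = (1 - s * D) / (s - D))
    (q1 : -s ≤ m + n * h) (q2 : m + n * h ≤ 1) (q3 : -s ≤ m' + n' * h) (q4 : m' + n' * h ≤ 1)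
    (q5 : -1 ≤ h) (q6 : h ≤ s)
    (t1 : -A ≤ m + n * h) (t2 : m + n * h ≤ s * A) (t3 : -A ≤ m' + n' * h)
    (t4 : m' + n' * h ≤ s * A) (t5 : -s * A ≤ h) (t6 : h ≤ A)
    (hγ1 : 2 / (s + 1) ≤ γ) (hγ2 : γ ≤ 2 / (1 + A)) :
    ∃ K : Set E2, IsConvexBody K ∧ MinkCentered K ∧ minkAsym K = s ∧ gammaB K = γ := by
  have hs0 : 0 < s := by linarith
  have hsp : 0 < s + D := by linarith
  have hsm : 0 < s - D := by
    rcases eq_or_lt_of_le hs1 with h | h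
    · rw [hsD h.symm]; linarith
    · linarith
  have e1 : m * (s + D) = s ^ 2 - 1 := by rw [hm]; field_simp
  have e2 : n * (s + D) = s * D + 1 := by rw [hn]; field_simp
  have e3 : m' * (s - D) = -(s ^ 2 - 1) := by rw [hm']; field_simp
  have e4 : n' * (s - D) = 1 - s * D := by rw [hn']; field_simp
  have hA0 : 0 < A := by linarith
  have hs21 : 0 ≤ s ^ 2 - 1 := by nlinarith
  -- points
  have P1 : ∀ r, 1 ≤ r → pt (-1) (-1) ∈ Kr s (pt m n) (pt m' n') (pt 0 (-1)) (pt 1 0) r := by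
    intro r hr
    apply pt_mem
    · have : m + n = s := by
        have : (m + n) * (s + D) = s * (s + D) := by linarith
        exact mul_right_cancel₀ hsp.ne' this
      constructor <;> linarith
    · constructor
      · have : 0 ≤ (m' * -1 + n' * -1 + s) * (s - D) := by nlinarith
        have := nonneg_of_mul_nonneg_left this hsm
        linarith
      · have : 0 ≤ (1 - (m' * -1 + n' * -1)) * (s - D) := by nlinarith
        have := nonneg_of_mul_nonneg_left this hsm
        linarith
    · constructor <;> linarith
    · constructor <;> linarith
  have P2 : ∀ r, 1 ≤ r → pt 1 (-1) ∈ Kr s (pt m n) (pt m' n') (pt 0 (-1)) (pt 1 0) r := by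
    intro r hr
    apply pt_mem
    · constructor
      · have : 0 ≤ (m * 1 + n * -1 + s) * (s + D) := by nlinarith
        have := nonneg_of_mul_nonneg_left this hsp
        linarith
      · have : 0 ≤ (1 - (m * 1 + n * -1)) * (s + D) := by nlinarith
        have := nonneg_of_mul_nonneg_left this hsp
        linarith
    · have : m' - n' = -s := by
        have : (m' - n') * (s - D) = -s * (s - D) := by linarith
        exact mul_right_cancel₀ hsm.ne' this
      constructor <;> linarith
    · constructor <;> linarith
    · constructor <;> linarith
  have w13 : m * (-D) + n * s = 1 := by
    have : (m * (-D) + n * s) * (s + D) = 1 * (s + D) := by linear_combination (-D) * e1 + s * e2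
    exact mul_right_cancel₀ hsp.ne' this
  have w23 : m' * (-D) + n' * s = 1 := by
    have : (m' * (-D) + n' * s) * (s - D) = 1 * (s - D) := by linear_combination (-D) * e3 + s * e4
    exact mul_right_cancel₀ hsm.ne' this
  have P3 : ∀ r, 1 ≤ r → pt (-D) s ∈ Kr s (pt m n) (pt m' n') (pt 0 (-1)) (pt 1 0) r := by
    intro r hr
    apply pt_mem
    · constructor <;> linarith
    · constructor <;> linarith
    · constructor <;> linarith
    · constructor <;> linarith
  have hrel : ∀ x : E2, (s + D) / (2 * (s + 1)) * (inner ℝ (pt m n) x : ℝ)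
      + (s - D) / (2 * (s + 1)) * (inner ℝ (pt m' n') x : ℝ)
      + 1 / (s + 1) * (inner ℝ (pt 0 (-1)) x : ℝ) = 0 := by
    intro x
    rw [inner_pt, inner_pt, inner_pt]
    field_simp
    linear_combination (x 0) * e1 + (x 1) * e2 + (x 0) * e3 + (x 1) * e4
  have hl : (s + D) / (2 * (s + 1)) + (s - D) / (2 * (s + 1)) + 1 / (s + 1) = 1 := by
    field_simp; ring
  -- asymmetry
  have hasym : ∀ r, 1 ≤ r →
      minkAsym (Kr s (pt m n) (pt m' n') (pt 0 (-1)) (pt 1 0) r) = s := by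
    intro r hr
    refine Kr_minkAsym s _ _ _ _ r hs1 (by linarith) _ _ _ (by positivity) (by positivity)
      (by positivity) hl hrel _ _ _ (P1 r hr) (P2 r hr) (P3 r hr) ?_ ?_ ?_ <;> rw [inner_pt_pt]
    · have : (m + n) * (s + D) = s * (s + D) := by linarith
      have := mul_right_cancel₀ hsp.ne' this
      linarith
    · have : (m' - n') * (s - D) = -s * (s - D) := by linarith
      have := mul_right_cancel₀ hsm.ne' this
      linarith
    · ring
  -- the large body
  obtain ⟨R, hR1, hRG⟩ : ∃ R, 1 ≤ R ∧
      2 / (s + 1) ∈ GS (Kr s (pt m n) (pt m' n') (pt 0 (-1)) (pt 1 0) R) := by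
    rcases eq_or_lt_of_le hs1 with hs | hs
    · subst hs
      exact ⟨1, le_rfl, upper_one 1 _ _ _ _ one_pos⟩
    · have hs22 : 0 < s ^ 2 - 1 := by nlinarith
      have hm0 : 0 < m := by rw [hm]; positivity
      have hm0' : m' < 0 := by rw [hm', neg_div]; have : 0 < (s ^ 2 - 1) / (s - D) := by positivity
                               linarith
      have hs1' : s - 1 ≠ 0 := by linarith
      refine ⟨1 + (1 + |n| * s) / m + (1 + |n'| * s) / (-m'), ?_, ?_⟩
      · have : 0 < (1 + |n| * s) / m := by positivity
        have : 0 < (1 + |n'| * s) / (-m') := by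
          apply div_pos (by positivity); linarith
        linarith
      · refine upper s _ _ _ _ _ _ _ _ (pt (-(1 - D) / (s - 1)) (-1)) (pt ((1 + D) / (s - 1)) (-1))
          (pt (-D) s) (by positivity) (by positivity) (by positivity) hl ?_ ?_ ?_ hs1 hrel
          ?_ ?_ ?_ ?_ ?_ ?_ ?_
        · rw [div_mul_eq_mul_div, div_le_one (by positivity)]; nlinarith
        · rw [div_mul_eq_mul_div, div_le_one (by positivity)]; nlinarith
        · rw [div_mul_eq_mul_div, div_le_one (by positivity)]; linarith
        · rw [inner_pt_pt, hm, hn]; field_simp; ring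
        · rw [inner_pt_pt]; exact w13
        · rw [inner_pt_pt, hm', hn']; field_simp; ring
        · rw [inner_pt_pt]; exact w23
        · rw [inner_pt_pt]; ring
        · rw [inner_pt_pt]; ring
        · intro y a b c
          rw [inner_pt] at a b c ⊢
          have hy : |y 1| ≤ s := by rw [abs_le]; constructor <;> linarith
          have hny : ∀ k : ℝ, -(|k| * s) ≤ k * y 1 := by
            intro k
            have h1 := neg_abs_le (k * y 1)
            rw [abs_mul] at h1
            have := mul_le_mul_of_nonneg_left hy (abs_nonneg k)
            linarith
          have p1 : 0 < (1 + |n| * s) / m := by positivity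
          have p2 : 0 < (1 + |n'| * s) / (-m') := by
            apply div_pos (by positivity); linarith
          have u1 : y 0 ≤ (1 + |n| * s) / m := by
            rw [le_div_iff₀ hm0]; linarith [hny n]
          have u2 : -(y 0) ≤ (1 + |n'| * s) / (-m') := by
            rw [le_div_iff₀ (by linarith)]; linarith [hny n']
          constructor <;> linarith
  have hne : ∀ r, 1 ≤ r → r ≤ R →
      (GS (Kr s (pt m n) (pt m' n') (pt 0 (-1)) (pt 1 0) r)).Nonempty := by
    intro r hr hrR
    exact ⟨_, GS_down _ _ (R / r) _ (by positivity) (Kr_mono _ _ _ _ _ _ _ hrR)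
      (Kr_scale _ _ _ _ _ _ _ hs0.le (by linarith) hrR) hRG⟩
  obtain ⟨r, hr1, hrR, hfr⟩ := ivt
    (fun r => gammaB (Kr s (pt m n) (pt m' n') (pt 0 (-1)) (pt 1 0) r)) R γ hR1
    (fun r => Real.sInf_nonneg (fun x hx => hx.1.le))
    (fun r r' hr hrr hR' => gamma_le_mul _ _ _ (by apply div_pos <;> linarith) (hne r hr (by linarith))
      (fun ρ hρ => GS_up _ _ _ _ (by apply div_pos <;> linarith) (Kr_mono _ _ _ _ _ _ _ hrr)
        (Kr_scale _ _ _ _ _ _ _ hs0.le (by linarith) hrr) hρ))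
    (fun r r' hr hrr hR' => gamma_le_mul _ _ _ (by apply div_pos <;> linarith)
      (hne r' (by linarith) (by linarith))
      (fun ρ hρ => GS_down _ _ _ _ (by apply div_pos <;> linarith) (Kr_mono _ _ _ _ _ _ _ hrr)
        (Kr_scale _ _ _ _ _ _ _ hs0.le (by linarith) hrr) hρ))
    ((csInf_le (GS_bdd _) hRG).trans hγ1)
    (by
      refine hγ2.trans (lower s A _ _ _ _ (pt 1 h) hA0 (hne 1 le_rfl hR1) ?_ ?_ ?_)
      · apply pt_mem
        · constructor <;> linarith
        · constructor <;> linarith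
        · constructor <;> linarith
        · constructor <;> linarith
      · rw [neg_smul_pt]
        have hi : A⁻¹ * A = 1 := inv_mul_cancel₀ hA0.ne'
        have hi0 : 0 < A⁻¹ := inv_pos.2 hA0
        have lo : ∀ c X : ℝ, c * A ≤ X → c ≤ A⁻¹ * X := by
          intro c X hX
          have := mul_le_mul_of_nonneg_left hX hi0.le
          have e : A⁻¹ * (c * A) = c := by field_simp
          linarith
        have up : ∀ c X : ℝ, X ≤ c * A → A⁻¹ * X ≤ c := by
          intro c X hX
          have := mul_le_mul_of_nonneg_left hX hi0.le
          have e : A⁻¹ * (c * A) = c := by field_simp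
          linarith
        have g1 : m * -(A⁻¹ * 1) + n * -(A⁻¹ * h) = -(A⁻¹ * (m + n * h)) := by ring
        have g2 : m' * -(A⁻¹ * 1) + n' * -(A⁻¹ * h) = -(A⁻¹ * (m' + n' * h)) := by ring
        apply pt_mem
        · rw [g1]
          have := lo (-1) (m + n * h) (by linarith)
          have := up s (m + n * h) (by linarith)
          constructor <;> linarith
        · rw [g2]
          have := lo (-1) (m' + n' * h) (by linarith)
          have := up s (m' + n' * h) (by linarith)
          constructor <;> linarith
        · have := lo (-s) h (by linarith)
          have := up 1 h (by linarith)
          constructor <;> linarith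
        · have := up 1 1 (by linarith)
          constructor <;> linarith
      · rw [inner_pt_pt]; ring)
  have hr0 : 0 < r := by linarith
  refine ⟨_, ⟨Kr_convex _ _ _ _ _ r, Kr_compact _ _ _ _, Kr_int _ _ _ _ _ _ hs0 hr0⟩, ?_,
    hasym r hr1, hfr⟩
  unfold MinkCentered
  rw [hasym r hr1]
  exact Kr_asym_set _ _ _ _ _ _ hs1 hr0

lemma phi_facts : phiR ^ 2 = phiR + 1 ∧ 1 < phiR := by
  have h5 : Real.sqrt 5 ^ 2 = 5 := Real.sq_sqrt (by norm_num)
  have h : 2 < Real.sqrt 5 := by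
    rw [Real.lt_sqrt (by norm_num)]; norm_num
  unfold phiR
  constructor
  · nlinarith
  · linarith

/-- the case `s > φ`, arbitrary admissible `D` -/
lemma main_big (s D γ : ℝ) (hs : phiR < s) (hs2 : s ≤ 2) (hD0 : 0 ≤ D) (hD : D ≤ 2 - s)
    (hγ1 : 2 / (s + 1) ≤ γ) (hγ2 : γ ≤ (s - D) * (s * D + 1) / ((s ^ 2 - 1) * (D + 1))) :
    ∃ K : Set E2, IsConvexBody K ∧ MinkCentered K ∧ minkAsym K = s ∧ gammaB K = γ := by
  obtain ⟨f1, f2⟩ := phi_facts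
  have hs1 : 1 < s := by linarith
  have hss : s + 1 < s ^ 2 := by nlinarith
  have hsp : 0 < s + D := by linarith
  have hsm : 0 < s - D := by linarith
  have hsD : 0 < s * D + 1 := by positivity
  have hs21 : 0 < s ^ 2 - 1 := by nlinarith
  obtain ⟨A, hA⟩ : ∃ A, A = 2 * (s ^ 2 - 1) * (D + 1) / ((s - D) * (s * D + 1)) - 1 := ⟨_, rfl⟩
  obtain ⟨h, hh⟩ : ∃ h, h = -(s ^ 2 - 1 - s - D) / (s * D + 1) := ⟨_, rfl⟩
  have hA1 : 1 ≤ A := by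
    rw [hA, le_sub_iff_add_le, le_div_iff₀ (by positivity)]
    nlinarith [mul_nonneg hD0 hD0]
  have hAs : A ≤ s := by
    rw [hA, sub_le_iff_le_add, div_le_iff₀ (by positivity)]
    have a1 : 2 * (s - 1) * (D + 1) ≤ (s - D) * (s * D + 1) := by
      apply mul_le_mul <;> nlinarith
    nlinarith
  have hhe : h * (s * D + 1) = -(s ^ 2 - 1 - s - D) := by rw [hh]; field_simp
  have h1 : -1 ≤ h := by
    have : 0 ≤ (h + 1) * (s * D + 1) := by nlinarith
    have := nonneg_of_mul_nonneg_left this hsD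
    linarith
  have h2 : h ≤ 1 := by
    have : 0 ≤ (1 - h) * (s * D + 1) := by nlinarith
    have := nonneg_of_mul_nonneg_left this hsD
    linarith
  have v1 : (s ^ 2 - 1) / (s + D) + (s * D + 1) / (s + D) * h = 1 := by
    rw [hh]; field_simp; ring
  have v2 : -(s ^ 2 - 1) / (s - D) + (1 - s * D) / (s - D) * h = -A := by
    rw [hh, hA]; field_simp; ring
  refine main_D s D h A γ hs1.le hs2 hD0 hD (fun h => by linarith) hA1 _ _ _ _ rfl rfl rfl rfl
    ?_ ?_ ?_ ?_ ?_ ?_ ?_ ?_ ?_ ?_ ?_ ?_ hγ1 ?_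
  all_goals try rw [v1]
  all_goals try rw [v2]
  all_goals try linarith
  all_goals try nlinarith
  refine hγ2.trans (le_of_eq ?_)
  have : 1 + A = 2 * (s ^ 2 - 1) * (D + 1) / ((s - D) * (s * D + 1)) := by rw [hA]; ring
  rw [this]
  field_simp

lemma c2_eq (s w : ℝ) (hs : 1 < s) (hw : 0 ≤ w) (hw2 : w ^ 2 = s * (s ^ 2 - 1)) :
    (s^2+1)^2 / ((s^2-1) * (s^2+2*s-1+2*w)) = (s^2+2*s-1-2*w) / (s^2-1) := by
  have : 0 < s ^ 2 - 1 := by nlinarith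
  have : 0 < s^2+2*s-1+2*w := by nlinarith
  rw [div_eq_div_iff (by positivity) (by positivity)]
  linear_combination 4 * (s^2-1) * hw2

lemma sHat_le (s : ℝ) (hs : phiR < s) (hs2 : s ≤ 2) (h : s ^ 3 - 7 * s ^ 2 + 9 * s + 1 < 0) :
    sHat < s := by
  obtain ⟨f1, f2⟩ := phi_facts
  have hc : ContinuousOn (fun s : ℝ => s ^ 3 - 7 * s ^ 2 + 9 * s + 1) (Set.Icc phiR s) := by
    fun_prop
  have hphi : 0 < phiR ^ 3 - 7 * phiR ^ 2 + 9 * phiR + 1 := by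
    have : phiR ^ 3 = 2 * phiR + 1 := by
      calc phiR ^ 3 = phiR * phiR ^ 2 := by ring
        _ = phiR * (phiR + 1) := by rw [f1]
        _ = phiR ^ 2 + phiR := by ring
        _ = _ := by rw [f1]; ring
    rw [this, f1]
    have : 1.5 < phiR := by nlinarith
    linarith
  obtain ⟨t, ⟨ht1, ht2⟩, ht⟩ := intermediate_value_Ioo' hs.le hc ⟨h, hphi⟩
  simp only at ht
  have ht1' : 1 < t := by linarith
  refine lt_of_le_of_lt (csInf_le ⟨phiR, fun x hx => hx.1.le⟩ ⟨ht1, by linarith, ?_⟩) ht2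
  unfold cExpr2 cExpr3
  have hw : Real.sqrt (t * (t ^ 2 - 1)) = t * (3 - t) := by
    have e : t * (t ^ 2 - 1) = (t * (3 - t)) ^ 2 := by linear_combination (-t) * ht
    rw [e]
    exact Real.sqrt_sq (by nlinarith)
  rw [c2_eq t _ ht1' (Real.sqrt_nonneg _) (Real.sq_sqrt (by nlinarith)), hw]
  have : t ^ 2 - 1 ≠ 0 := by nlinarith
  have : t - 3 ≠ 0 := by linarith
  have : t + 1 ≠ 0 := by linarith
  rw [div_eq_div_iff (by assumption) (by positivity)]
  linear_combination (t+1) * ht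

theorem stmt13 (γ s : ℝ) (hs1 : 1 ≤ s) (hs2 : s ≤ 2)
    (hγ1 : 2 / (s + 1) ≤ γ) (hγ2 : γ ≤ cFun s) :
    ∃ K : Set E2, IsConvexBody K ∧ MinkCentered K ∧ minkAsym K = s ∧ gammaB K = γ := by
  obtain ⟨f1, f2⟩ := phi_facts
  unfold cFun at hγ2
  split_ifs at hγ2 with h1 h2
  · have hss : s ^ 2 ≤ s + 1 := by nlinarith
    have hs0 : 0 < s := by linarith
    have b1 : (s ^ 2 - 1) / (s + 0) ≤ 1 := by
      rw [div_le_one (by linarith)]; linarith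
    have b0 : 0 ≤ (s ^ 2 - 1) / (s + 0) := by
      apply div_nonneg <;> nlinarith
    have e : -(s ^ 2 - 1) / (s - 0) = -((s ^ 2 - 1) / (s + 0)) := by
      rw [sub_zero, add_zero, neg_div]
    refine main_D s 0 0 1 γ hs1 hs2 le_rfl (by linarith) (fun _ => rfl) le_rfl _ _ _ _ rfl rfl rfl rfl
      ?_ ?_ ?_ ?_ ?_ ?_ ?_ ?_ ?_ ?_ ?_ ?_ hγ1 (by linarith)
    all_goals try rw [e]
    all_goals linarith
  · push Not at h1
    have hs : 1 < s := by linarith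
    have hcub : 0 ≤ s ^ 3 - 7 * s ^ 2 + 9 * s + 1 := by
      by_contra h
      push Not at h
      linarith [sHat_le s h1 hs2 h]
    have hs21 : 0 < s ^ 2 - 1 := by nlinarith
    have hss : s + 1 < s ^ 2 := by nlinarith
    obtain ⟨w, hw⟩ : ∃ w, w = Real.sqrt (s * (s ^ 2 - 1)) := ⟨_, rfl⟩
    have hw0 : 0 < w := by rw [hw]; apply Real.sqrt_pos.2; positivity
    have hw2 : w ^ 2 = s * (s ^ 2 - 1) := by rw [hw]; exact Real.sq_sqrt (by positivity)
    unfold cExpr2 at hγ2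
    rw [← hw, c2_eq s w hs hw0.le hw2] at hγ2
    have hs0 : 0 < s := by linarith
    have d1 : s ≤ w := by
      refine le_of_sq_le_sq ?_ hw0.le
      nlinarith
    have d2 : w ≤ s * (3 - s) := by
      refine le_of_sq_le_sq ?_ (by nlinarith)
      nlinarith
    refine main_big s (w / s - 1) γ h1 hs2 ?_ ?_ hγ1 (hγ2.trans (le_of_eq ?_))
    · rw [sub_nonneg, le_div_iff₀ hs0]; linarith
    · rw [sub_le_iff_le_add, div_le_iff₀ hs0]; linarith
    · have e1 : w / s - 1 + 1 = w / s := by ring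
      have e2 : s * (w / s - 1) + 1 = w - s + 1 := by field_simp
      rw [e1, e2, div_eq_div_iff (by positivity) (by positivity)]
      field_simp
      linear_combination (-1 : ℝ) * hw2
  · push Not at h1
    refine main_big s (2 - s) γ h1 hs2 (by linarith) le_rfl hγ1 (hγ2.trans (le_of_eq ?_))
    unfold cExpr3
    have : s ^ 2 - 1 ≠ 0 := by nlinarith
    have : s - 3 ≠ 0 := by linarith
    have : s + 1 ≠ 0 := by linarith
    have h3 : 2 - s + 1 ≠ 0 := by intro; linarith
    rw [div_eq_div_iff (mul_ne_zero (by assumption) (by assumption))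
      (mul_ne_zero (by assumption) h3)]
    ring
end
end
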